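/- For every graph G, ξ(G) ≤ 2^{8·λ(G)}: if G is λ-flat, then G has an embedding in the sphere with at most 2^{8λ} crossings per edge. -/

import Mathlib

/-!
Definitions for wall-by-wall distance, λ-flat graphs and ξ-nearly planar graphs,
following Grigoriev, Koutsonas and Thilikos, "Nearly Planar Graphs and λ-flat Graphs".

A plane graph is modelled combinatorially as a simple graph equipped with a rotation
system (a cyclic order of the edges incident to each vertex) that is planar, i.e.
satisfies Euler's formula (with faces counted as orbits of the face-tracing successor
on darts, corrected for isolated vertices and the number of connected components).

A graph embedding in the sphere (where edges may cross, but only at points that are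
not vertices) is modelled topologically by a `Drawing`: an injective placement of the
vertices on the unit sphere of `ℝ³` together with, for each edge, a simple arc joining
the images of its endpoints whose interior avoids all vertices.
-/

namespace WBW

/-- The set of edges of `G` incident to the vertex `v`. -/
def incidentSet {V : Type*} (G : SimpleGraph V) (v : V) : Set (Sym2 V) :=
  {e | e ∈ G.edgeSet ∧ v ∈ e}

/-- A simple graph together with a rotation system: for every vertex `v`, a
permutation of `Sym2 V` which fixes every non-incident edge and is a single cycle on
the set of edges incident to `v` (the cyclic order `σ_v` of the drawing). -/
structure RotationSystem (V : Type*) where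
  G : SimpleGraph V
  rot : V → Equiv.Perm (Sym2 V)
  rot_cycleOn : ∀ v, (rot v).IsCycleOn (incidentSet G v)
  rot_fixed : ∀ v, ∀ e ∉ incidentSet G v, rot v e = e

variable {V : Type*}

/-- The face-tracing successor on darts: the dart `(u,v)` is followed by the dart
leaving `v` along the edge succeeding `s(u,v)` in the cyclic order around `v`. -/
noncomputable def RotationSystem.faceNext (R : RotationSystem V) (d : R.G.Dart) :
    R.G.Dart :=
  have hmem : d.edge ∈ incidentSet R.G d.toProd.2 :=
    ⟨d.edge_mem, by rcases d with ⟨⟨a, b⟩, h⟩; simp [SimpleGraph.Dart.edge]⟩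
  have hmem' : R.rot d.toProd.2 d.edge ∈ incidentSet R.G d.toProd.2 :=
    (R.rot_cycleOn d.toProd.2).1.mapsTo hmem
  ⟨(d.toProd.2, Sym2.Mem.other hmem'.2), by
    have h := Sym2.other_spec hmem'.2
    have h2 : R.rot d.toProd.2 d.edge ∈ R.G.edgeSet := hmem'.1
    rw [← h] at h2
    exact h2⟩

/-- The number of faces of a rotation system: the number of orbits of the
face-tracing successor on darts. -/
noncomputable def RotationSystem.numFaces (R : RotationSystem V) : ℕ :=
  Nat.card (Quot (fun a b : R.G.Dart => R.faceNext a = b))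

/-- A rotation system is plane (it is an embedding of the graph in the sphere without
crossings) iff it satisfies Euler's formula, componentwise; isolated vertices are
accounted for separately, since they carry no dart. -/
def RotationSystem.IsPlane (R : RotationSystem V) : Prop :=
  Nat.card V + R.numFaces + Nat.card {v : V | ∀ w, ¬ R.G.Adj v w} =
    Nat.card R.G.edgeSet + 2 * Nat.card R.G.ConnectedComponent

/-- Two edges are attached if they share a vertex `v` and appear consecutively in the
cyclic order `σ_v` or its inverse. -/
def Attached (R : RotationSystem V) (e e' : Sym2 V) : Prop :=
  ∃ v : V, e ∈ incidentSet R.G v ∧ e' ∈ incidentSet R.G v ∧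
    (R.rot v e = e' ∨ R.rot v e' = e)

/-- A wall-by-wall walk: a nonempty sequence of distinct edges of `R.G` in which
every two consecutive edges are attached. -/
def IsWbwWalk (R : RotationSystem V) (L : List (Sym2 V)) : Prop :=
  L ≠ [] ∧ L.Nodup ∧ (∀ e ∈ L, e ∈ R.G.edgeSet) ∧ L.Chain' (Attached R)

/-- An `(x,y)`-wall-by-wall walk: a wall-by-wall walk whose first edge is incident to
`x` and whose last edge is incident to `y`. -/
def IsWbwWalkFromTo (R : RotationSystem V) (x y : V) (L : List (Sym2 V)) : Prop :=
  IsWbwWalk R L ∧ (∃ e, L.head? = some e ∧ x ∈ e) ∧ (∃ e, L.getLast? = some e ∧ y ∈ e)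

/-- The wall-by-wall distance between `x` and `y`: the least number of edges of an
`(x,y)`-wall-by-wall walk (`⊤` if there is no such walk). -/
noncomputable def wbwDist (R : RotationSystem V) (x y : V) : ℕ∞ :=
  sInf {n : ℕ∞ | ∃ L, IsWbwWalkFromTo R x y L ∧ (L.length : ℕ∞) = n}

/-- The `λ`-power of a plane graph: keep all edges and make adjacent all pairs of
vertices at wall-by-wall distance at most `λ`. -/
def RotationSystem.power (R : RotationSystem V) (l : ℕ) : SimpleGraph V :=
  R.G ⊔ SimpleGraph.fromRel (fun x y => wbwDist R x y ≤ (l : ℕ∞))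

/-- `H` is a subgraph of `G` via the injection `τ`. -/
def SubgraphVia {U V : Type*} (H : SimpleGraph U) (G : SimpleGraph V) (τ : U → V) :
    Prop :=
  Function.Injective τ ∧ ∀ x y, H.Adj x y → G.Adj (τ x) (τ y)

/-- A graph is `λ`-flat if it is a subgraph of the `λ`-power of some plane graph. -/
def IsFlat (l : ℕ) {V : Type*} (G : SimpleGraph V) : Prop :=
  ∃ (W : Type) (_ : Finite W) (R : RotationSystem W) (τ : V → W),
    R.IsPlane ∧ SubgraphVia G (R.power l) τ

/-- The unit sphere in `ℝ³`. -/
def unitSphere : Set (EuclideanSpace ℝ (Fin 3)) := Metric.sphere 0 1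

/-- A drawing (embedding) of a graph in the sphere: vertices are placed injectively,
every edge is drawn as a simple arc joining the images of its two endpoints, and the
interior of every arc avoids all vertex images (so edges may meet, away from their
endpoints, only at points that are not vertices). -/
structure Drawing {V : Type*} (G : SimpleGraph V) where
  vmap : V → unitSphere
  vmap_inj : Function.Injective vmap
  arc : Sym2 V → C(Set.Icc (0 : ℝ) 1, unitSphere)
  arc_inj : ∀ e ∈ G.edgeSet, Function.Injective (arc e)
  arc_ends : ∀ e ∈ G.edgeSet,
    Sym2.map vmap e =
      s(arc e ⟨0, Set.mem_Icc.mpr (by norm_num)⟩, arc e ⟨1, Set.mem_Icc.mpr (by norm_num)⟩)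
  interior_avoids : ∀ e ∈ G.edgeSet, ∀ t : Set.Icc (0 : ℝ) 1,
    (t : ℝ) ≠ 0 → (t : ℝ) ≠ 1 → arc e t ∉ Set.range vmap

/-- The crossings of the edge `e` in a drawing: pairs consisting of another edge `e'`
and a point, not a vertex, lying on the arcs of both `e` and `e'`. -/
def crossingSet {V : Type*} {G : SimpleGraph V} (D : Drawing G) (e : Sym2 V) :
    Set (Sym2 V × unitSphere) :=
  {q | q.1 ∈ G.edgeSet ∧ q.1 ≠ e ∧ q.2 ∈ Set.range (D.arc e) ∧
    q.2 ∈ Set.range (D.arc q.1) ∧ q.2 ∉ Set.range D.vmap}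

/-- A graph is `ξ`-nearly planar if it has a drawing in the sphere in which every
edge is crossed at most `ξ` times. -/
def IsNearlyPlanar (x : ℕ) {V : Type*} (G : SimpleGraph V) : Prop :=
  ∃ D : Drawing G, ∀ e ∈ G.edgeSet,
    (crossingSet D e).Finite ∧ (crossingSet D e).ncard ≤ x

/-- `λ(G)`: the least `λ` for which `G` is `λ`-flat. -/
noncomputable def flatNum {V : Type*} (G : SimpleGraph V) : ℕ :=
  sInf {l | IsFlat l G}

/-- `ξ(G)`: the least `ξ` for which `G` is `ξ`-nearly planar. -/
noncomputable def nearNum {V : Type*} (G : SimpleGraph V) : ℕ :=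
  sInf {x | IsNearlyPlanar x G}

/-- A graph is 3-connected if it has more than 3 vertices and removing any at most 2
vertices leaves it connected. -/
def ThreeConnected {V : Type*} (G : SimpleGraph V) : Prop :=
  3 < Nat.card V ∧ ∀ s : Set V, s.ncard ≤ 2 → (G.induce sᶜ).Connected

/-- A plane graph is triangulated if every face is bounded by a triangle, i.e. every
orbit of the face-tracing successor has length exactly 3. -/
def RotationSystem.Triangulated (R : RotationSystem V) : Prop :=
  ∀ d : R.G.Dart, R.faceNext (R.faceNext (R.faceNext d)) = d ∧ R.faceNext d ≠ d

/-- `H` is a topological minor of `G`: some subdivision of `H` is a subgraph of `G`,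
equivalently the branch vertices embed injectively into `G` and the edges of `H` are
realized by internally disjoint paths of `G` avoiding the branch vertices. -/
def IsTopMinor {U V : Type*} (H : SimpleGraph U) (G : SimpleGraph V) : Prop :=
  ∃ τ : U → V, Function.Injective τ ∧
    ∃ P : ∀ ⦃x y : U⦄, H.Adj x y → G.Walk (τ x) (τ y),
      (∀ ⦃x y : U⦄ (h : H.Adj x y), (P h).IsPath) ∧
      (∀ ⦃x y : U⦄ (h : H.Adj x y), ∀ v ∈ (P h).support,
        v ∈ Set.range τ → v = τ x ∨ v = τ y) ∧
      (∀ ⦃x y x' y' : U⦄ (h : H.Adj x y) (h' : H.Adj x' y'), s(x, y) ≠ s(x', y') →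
        ∀ v, v ∈ (P h).support → v ∈ (P h').support → v ∈ Set.range τ)

/-- `H` is a contraction of `G`: `H` is obtained from `G` by contracting edges,
equivalently there is a surjection `V(G) → V(H)` with connected fibres such that the
edges of `H` are exactly the pairs of distinct fibres joined by an edge of `G`. -/
def IsContractionOf {U V : Type*} (H : SimpleGraph U) (G : SimpleGraph V) : Prop :=
  ∃ f : V → U, Function.Surjective f ∧
    (∀ u : U, (G.induce (f ⁻¹' {u})).Connected) ∧
    (∀ a b : U, H.Adj a b ↔ a ≠ b ∧ ∃ x y, G.Adj x y ∧ f x = a ∧ f y = b)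

/-- The medial graph of a plane graph `G`: its vertices are the edges of `G`, two of
them being adjacent iff they are attached (this is the dual of the radial graph). -/
def medial (R : RotationSystem V) : SimpleGraph {e : Sym2 V // e ∈ R.G.edgeSet} :=
  SimpleGraph.fromRel (fun e f => Attached R e.1 f.1)

/-- The `(n × n)`-grid graph. -/
def gridGraph (n : ℕ) : SimpleGraph (Fin n × Fin n) :=
  SimpleGraph.fromRel (fun a b =>
    (a.1 = b.1 ∧ (a.2 : ℕ) + 1 = (b.2 : ℕ)) ∨ (a.2 = b.2 ∧ (a.1 : ℕ) + 1 = (b.1 : ℕ)))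

/-- The faces of a rotation system: orbits of the face-tracing successor on darts. -/
def RotationSystem.Face (R : RotationSystem V) : Type _ :=
  Quot (fun a b : R.G.Dart => R.faceNext a = b)

/-- The edge `e` lies on the boundary of the face `F`. -/
def EdgeOnFace (R : RotationSystem V) (e : Sym2 V) (F : R.Face) : Prop :=
  ∃ d : R.G.Dart, Quot.mk _ d = F ∧ d.edge = e

/-- A wall-by-wall walk passes through the face `F` if two consecutive edges of the
walk both lie on the boundary of `F`. -/
def WalkThroughFace (R : RotationSystem V) (L : List (Sym2 V)) (F : R.Face) : Prop :=
  ∃ (l₁ : List (Sym2 V)) (e₁ e₂ : Sym2 V) (l₂ : List (Sym2 V)),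
    L = l₁ ++ e₁ :: e₂ :: l₂ ∧ EdgeOnFace R e₁ F ∧ EdgeOnFace R e₂ F

end WBW

namespace WBW

/-- A loopless triangulated closed surface, given by its darts, with one base dart for each
connected component, satisfying Euler's formula for the sphere (summed over components). -/
structure Triang (D X : Type) [Fintype D] [Fintype X] where
  α : D → D
  φ : D → D
  vt : D → X
  B : Finset D
  αα : ∀ d, α (α d) = d
  φ3 : ∀ d, φ (φ (φ d)) = d
  vφ : ∀ d, vt (φ d) = vt (α d)
  loopless : ∀ d, vt d ≠ vt (α d)
  surj : Function.Surjective vt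
  trans : ∀ (Q : D → Prop), (∀ d, Q d → Q (φ (α d))) → ∀ d d', vt d = vt d' → Q d → Q d'
  conn : ∀ A : Set D, (∀ d ∈ A, φ d ∈ A) → (∀ d ∈ A, α d ∈ A) → (∀ b ∈ B, b ∈ A) →
    ∀ d, d ∈ A
  Binj : ∀ b ∈ B, ∀ b' ∈ B, vt b = vt b' → b = b'
  Binj' : ∀ b ∈ B, ∀ b' ∈ B, vt (α b) = vt (α b') → b = b'
  Bne : ∀ b ∈ B, ∀ b' ∈ B, vt b ≠ vt (α b')
  euler : 6 * Fintype.card X = Fintype.card D + 12 * B.card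

namespace Triang

variable {D X : Type} [Fintype D] [Fintype X] (T : Triang D X)

/-- The end vertices of the base darts. -/
def pole (x : X) : Prop := ∃ b ∈ T.B, x = T.vt b ∨ x = T.vt (T.α b)

/-- A partial height function, defined on the vertices of `S`. -/
structure Good (S : Finset X) (y : X → ℝ) : Prop where
  poles : ∀ x, T.pole x → x ∈ S
  inj : Set.InjOn y S
  base : ∀ b ∈ T.B, y (T.vt b) < y (T.vt (T.α b))
  base' : ∀ b ∈ T.B, ∀ b' ∈ T.B, b ≠ b' →
    y (T.vt (T.α b)) < y (T.vt b') ∨ y (T.vt (T.α b')) < y (T.vt b)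
  nbr : ∀ x ∈ S, ∃ d, T.vt d = x ∧ T.vt (T.α d) ∈ S
  mid : ∀ x ∈ S, ¬ T.pole x → (∃ d, T.vt d = x ∧ T.vt (T.α d) ∈ S ∧ y x < y (T.vt (T.α d))) ∧
    (∃ d, T.vt d = x ∧ T.vt (T.α d) ∈ S ∧ y (T.vt (T.α d)) < y x)

theorem good_init : ∃ (S : Finset X) (y : X → ℝ), T.Good S y := by
  classical
  let f : D → ℕ := fun d => (Fintype.equivFin D d : ℕ)
  have hf : ∀ a b, f a = f b → a = b := by
    intro a b h
    exact (Fintype.equivFin D).injective (Fin.ext h)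
  let y : X → ℝ := fun x =>
    if h : ∃ b ∈ T.B, x = T.vt b then 2 * (f h.choose : ℝ)
    else if h : ∃ b ∈ T.B, x = T.vt (T.α b) then 2 * (f h.choose : ℝ) + 1 else 0
  have y1 : ∀ b ∈ T.B, y (T.vt b) = 2 * (f b : ℝ) := by
    intro b hb
    have h : ∃ b' ∈ T.B, T.vt b = T.vt b' := ⟨b, hb, rfl⟩
    have h1 := h.choose_spec
    have h2 := T.Binj _ hb _ h1.1 h1.2
    simp only [y]
    rw [dif_pos h, ← h2]
  have y2 : ∀ b ∈ T.B, y (T.vt (T.α b)) = 2 * (f b : ℝ) + 1 := by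
    intro b hb
    have h0 : ¬ ∃ b' ∈ T.B, T.vt (T.α b) = T.vt b' := by
      rintro ⟨b', hb', h⟩
      exact T.Bne b' hb' b hb h.symm
    have h : ∃ b' ∈ T.B, T.vt (T.α b) = T.vt (T.α b') := ⟨b, hb, rfl⟩
    have h1 := h.choose_spec
    have h2 := T.Binj' _ hb _ h1.1 h1.2
    simp only [y]
    rw [dif_neg h0, dif_pos h, ← h2]
  refine ⟨Finset.univ.filter T.pole, y, ?_, ?_, ?_, ?_, ?_, ?_⟩
  · intro x hx; simpa using hx
  · intro x hx x' hx' h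
    simp only [Finset.coe_filter, Finset.mem_univ, true_and, Set.mem_setOf_eq] at hx hx'
    obtain ⟨b, hb, hx⟩ := hx
    obtain ⟨b', hb', hx'⟩ := hx'
    rcases hx with rfl | rfl <;> rcases hx' with rfl | rfl
    · rw [y1 b hb, y1 b' hb'] at h
      have : f b = f b' := by exact_mod_cast (by linarith : (f b : ℝ) = f b')
      rw [hf _ _ this]
    · rw [y1 b hb, y2 b' hb'] at h
      have : 2 * f b = 2 * f b' + 1 := by exact_mod_cast h
      omega
    · rw [y2 b hb, y1 b' hb'] at h
      have : 2 * f b + 1 = 2 * f b' := by exact_mod_cast h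
      omega
    · rw [y2 b hb, y2 b' hb'] at h
      have : f b = f b' := by exact_mod_cast (by linarith : (f b : ℝ) = f b')
      rw [hf _ _ this]
  · intro b hb
    rw [y1 b hb, y2 b hb]; linarith
  · intro b hb b' hb' hne
    rw [y1 b hb, y2 b hb, y1 b' hb', y2 b' hb']
    have : f b ≠ f b' := fun h => hne (hf _ _ h)
    rcases lt_or_gt_of_ne this with h | h
    · left; exact_mod_cast (by omega : 2 * f b + 1 < 2 * f b')
    · right; exact_mod_cast (by omega : 2 * f b' + 1 < 2 * f b)
  · intro x hx
    simp only [Finset.mem_filter, Finset.mem_univ, true_and] at hx ⊢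
    obtain ⟨b, hb, rfl | rfl⟩ := hx
    · exact ⟨b, rfl, b, hb, Or.inr rfl⟩
    · exact ⟨T.α b, rfl, b, hb, Or.inl (by rw [T.αα])⟩
  · intro x hx hnp
    simp only [Finset.mem_filter, Finset.mem_univ, true_and] at hx
    exact absurd hx hnp

theorem good_step (S : Finset X) (y : X → ℝ) (h : T.Good S y) (hS : S ≠ Finset.univ) :
    ∃ (S' : Finset X) (y' : X → ℝ), T.Good S' y' ∧ S.card < S'.card := by
  classical
  -- find consecutive darts
  have key : ∃ d, T.vt d ∈ S ∧ T.vt (T.α d) ∈ S ∧ T.vt (T.α (T.φ (T.α d))) ∉ S := by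
    by_contra hcon
    push Not at hcon
    apply hS
    have hall : ∀ d, T.vt d ∈ S → T.vt (T.α d) ∈ S := by
      intro d hd
      obtain ⟨d', hd', hd''⟩ := h.nbr _ hd
      refine (T.trans (fun e => T.vt e ∈ S ∧ T.vt (T.α e) ∈ S) ?_ d' d hd' ⟨hd' ▸ hd, hd''⟩).2
      rintro e ⟨he1, he2⟩
      refine ⟨?_, hcon e he1 he2⟩
      rw [T.vφ, T.αα]; exact he1
    have := T.conn {d | T.vt d ∈ S} (fun d hd => by
      simp only [Set.mem_setOf_eq] at hd ⊢
      rw [T.vφ]; exact hall d hd) (fun d hd => hall d hd) (fun b hb => by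
      exact h.poles _ ⟨b, hb, Or.inl rfl⟩)
    ext x
    obtain ⟨d, rfl⟩ := T.surj x
    simpa using this d
  obtain ⟨d, hx, ha, hw⟩ := key
  set g := T.φ (T.α d) with hg
  set x := T.vt d with hxd
  set a := T.vt (T.α d) with had
  set w := T.vt (T.α g) with hwd
  have hgx : T.vt g = x := by rw [hg, T.vφ, T.αα]
  -- dart from w to a : φ g
  have hφg : T.vt (T.φ g) = w := T.vφ g
  have hφga : T.vt (T.α (T.φ g)) = a := by
    rw [← T.vφ, hg, T.φ3]
  have hxa : x ≠ a := T.loopless d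
  have hyxa : y x ≠ y a := fun e => hxa (h.inj hx ha e)
  obtain ⟨c, hc1, hc2⟩ : ∃ c, c ∈ Set.Ioo (min (y x) (y a)) (max (y x) (y a)) ∧ c ∉ y '' S := by
    have h1 : (Set.Ioo (min (y x) (y a)) (max (y x) (y a))).Infinite :=
      Set.Ioo_infinite (by rcases lt_or_gt_of_ne hyxa with h | h <;> simp [h])
    have h2 : (y '' (S : Set X)).Finite := (Finset.finite_toSet S).image y
    exact (h1.diff h2).nonempty
  have hne : ∀ z ∈ S, z ≠ w := fun z hz e => hw (e ▸ hz)
  let y' := Function.update y w c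
  have y'w : y' w = c := by simp [y']
  have y'S : ∀ z ∈ S, y' z = y z := fun z hz => by simp [y', hne z hz]
  have hpS1 : ∀ b ∈ T.B, T.vt b ∈ S := fun b hb => h.poles _ ⟨b, hb, Or.inl rfl⟩
  have hpS2 : ∀ b ∈ T.B, T.vt (T.α b) ∈ S := fun b hb => h.poles _ ⟨b, hb, Or.inr rfl⟩
  refine ⟨insert w S, y', ⟨?_, ?_, ?_, ?_, ?_, ?_⟩, ?_⟩
  · intro z hz; exact Finset.mem_insert_of_mem (h.poles z hz)
  · intro z hz z' hz' e
    simp only [Finset.coe_insert, Set.mem_insert_iff, Finset.mem_coe] at hz hz'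
    rcases hz with rfl | hz <;> rcases hz' with rfl | hz'
    · rfl
    · rw [y'w, y'S z' hz'] at e
      exact absurd ⟨z', hz', e.symm⟩ hc2
    · rw [y'w, y'S z hz] at e
      exact absurd ⟨z, hz, e⟩ hc2
    · rw [y'S z hz, y'S z' hz'] at e
      exact h.inj hz hz' e
  · intro b hb
    rw [y'S _ (hpS1 b hb), y'S _ (hpS2 b hb)]; exact h.base b hb
  · intro b hb b' hb' hne
    rw [y'S _ (hpS1 b hb), y'S _ (hpS2 b hb), y'S _ (hpS1 b' hb'), y'S _ (hpS2 b' hb')]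
    exact h.base' b hb b' hb' hne
  · intro z hz
    rcases Finset.mem_insert.1 hz with rfl | hz
    · exact ⟨T.α g, rfl, by rw [T.αα, hgx]; exact Finset.mem_insert_of_mem hx⟩
    · obtain ⟨e, he1, he2⟩ := h.nbr z hz
      exact ⟨e, he1, Finset.mem_insert_of_mem he2⟩
  · intro z hz hnp
    rcases Finset.mem_insert.1 hz with rfl | hz
    · have e1 : T.vt (T.α (T.α g)) = x := by rw [T.αα, hgx]
      rw [y'w]
      rcases lt_or_gt_of_ne hyxa with hlt | hlt
      · rw [min_eq_left hlt.le, max_eq_right hlt.le] at hc1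
        refine ⟨⟨T.φ g, hφg, ?_, ?_⟩, ⟨T.α g, rfl, ?_, ?_⟩⟩
        · rw [hφga]; exact Finset.mem_insert_of_mem ha
        · rw [hφga, y'S _ ha]; exact hc1.2
        · rw [e1]; exact Finset.mem_insert_of_mem hx
        · rw [e1, y'S _ hx]; exact hc1.1
      · rw [min_eq_right hlt.le, max_eq_left hlt.le] at hc1
        refine ⟨⟨T.α g, rfl, ?_, ?_⟩, ⟨T.φ g, hφg, ?_, ?_⟩⟩
        · rw [e1]; exact Finset.mem_insert_of_mem hx
        · rw [e1, y'S _ hx]; exact hc1.2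
        · rw [hφga]; exact Finset.mem_insert_of_mem ha
        · rw [hφga, y'S _ ha]; exact hc1.1
    · obtain ⟨⟨e, he1, he2, he3⟩, ⟨f, hf1, hf2, hf3⟩⟩ := h.mid z hz hnp
      refine ⟨⟨e, he1, Finset.mem_insert_of_mem he2, ?_⟩, ⟨f, hf1, Finset.mem_insert_of_mem hf2, ?_⟩⟩
      · rw [y'S _ hz, y'S _ he2]; exact he3
      · rw [y'S _ hz, y'S _ hf2]; exact hf3
  · rw [Finset.card_insert_of_notMem hw]; omega

theorem heights : ∃ y : X → ℝ, T.Good Finset.univ y := by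
  classical
  by_contra hcon
  have : ∀ n : ℕ, ∃ (S : Finset X) (y : X → ℝ), T.Good S y ∧ n ≤ S.card := by
    intro n
    induction n with
    | zero =>
      obtain ⟨S, y, h⟩ := T.good_init
      exact ⟨S, y, h, Nat.zero_le _⟩
    | succ n ih =>
      obtain ⟨S, y, h, hn⟩ := ih
      obtain ⟨S', y', h', hn'⟩ := T.good_step S y h (fun e => hcon ⟨y, e ▸ h⟩)
      exact ⟨S', y', h', by omega⟩
  obtain ⟨S, y, h, hn⟩ := this (Fintype.card X + 1)
  have := Finset.card_le_univ S
  omega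

end Triang
end WBW

namespace WBW
namespace Triang

variable {D X : Type} [Fintype D] [Fintype X] (T : Triang D X)

/-- The dart `d` goes upwards. -/
def up (y : X → ℝ) (d : D) : Prop := y (T.vt d) < y (T.vt (T.α d))

/-- The head of `d` is the middle vertex of its triangle, on the left. -/
def M (y : X → ℝ) (d : D) : Prop := T.up y d ∧ T.up y (T.φ d)

/-- The head of `d` is the middle vertex of its triangle, on the right. -/
def N (y : X → ℝ) (d : D) : Prop := ¬ T.up y d ∧ ¬ T.up y (T.φ d)

variable {T} {y : X → ℝ}

theorem up_iff (d : D) : T.up y d ↔ y (T.vt d) < y (T.vt (T.φ d)) := by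
  rw [up, T.vφ]

theorem up_α (h : T.Good Finset.univ y) (d : D) : T.up y (T.α d) ↔ ¬ T.up y d := by
  have h1 : y (T.vt d) ≠ y (T.vt (T.α d)) := fun e =>
    T.loopless d (h.inj (by simp) (by simp) e)
  unfold up
  rw [T.αα, not_lt]
  exact ⟨le_of_lt, fun h => lt_of_le_of_ne h h1.symm⟩

theorem not_up (h : T.Good Finset.univ y) (d : D) :
    ¬ T.up y d ↔ y (T.vt (T.φ d)) < y (T.vt d) := by
  rw [← up_α h, up, T.αα, T.vφ]

theorem tri_cases (h : T.Good Finset.univ y) (d : D) :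
    (T.up y d ∧ T.up y (T.φ d) ∧ ¬ T.up y (T.φ (T.φ d))) ∨
    (T.up y d ∧ ¬ T.up y (T.φ d) ∧ T.up y (T.φ (T.φ d))) ∨
    (¬ T.up y d ∧ T.up y (T.φ d) ∧ T.up y (T.φ (T.φ d))) ∨
    (¬ T.up y d ∧ ¬ T.up y (T.φ d) ∧ T.up y (T.φ (T.φ d))) ∨
    (¬ T.up y d ∧ T.up y (T.φ d) ∧ ¬ T.up y (T.φ (T.φ d))) ∨
    (T.up y d ∧ ¬ T.up y (T.φ d) ∧ ¬ T.up y (T.φ (T.φ d))) := by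
  have h1 : ¬ (T.up y d ∧ T.up y (T.φ d) ∧ T.up y (T.φ (T.φ d))) := by
    simp only [up_iff, T.φ3]; rintro ⟨a, b, c⟩; linarith
  have h2 : ¬ (¬ T.up y d ∧ ¬ T.up y (T.φ d) ∧ ¬ T.up y (T.φ (T.φ d))) := by
    simp only [not_up h, T.φ3]; rintro ⟨a, b, c⟩; linarith
  tauto

theorem φ_bij (T : Triang D X) : Function.Bijective T.φ := by
  constructor
  · intro a b e
    rw [← T.φ3 a, ← T.φ3 b, e]
  · intro a; exact ⟨T.φ (T.φ a), T.φ3 a⟩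

theorem card_mid (h : T.Good Finset.univ y) [DecidablePred (fun d => T.M y d ∨ T.N y d)] :
    3 * (Finset.univ.filter (fun d => T.M y d ∨ T.N y d)).card = Fintype.card D := by
  classical
  let c : D → ℕ := fun d => if T.M y d ∨ T.N y d then 1 else 0
  have hc : (Finset.univ.filter (fun d => T.M y d ∨ T.N y d)).card = ∑ d, c d := by
    rw [Finset.card_filter]
  have h1 : ∑ d, c (T.φ d) = ∑ d, c d := (φ_bij T).sum_comp c
  have h2 : ∑ d, c (T.φ (T.φ d)) = ∑ d, c d := by
    rw [← h1]; exact (φ_bij T).sum_comp (fun d => c (T.φ d))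
  have h3 : ∀ d, c d + c (T.φ d) + c (T.φ (T.φ d)) = 1 := by
    intro d
    simp only [c, M, N, T.φ3]
    rcases tri_cases h d with h | h | h | h | h | h <;> simp [h]
  have h4 : ∑ d, (c d + c (T.φ d) + c (T.φ (T.φ d))) = Fintype.card D := by
    simp [h3]
  rw [Finset.sum_add_distrib, Finset.sum_add_distrib, h1, h2] at h4
  rw [hc]; omega

theorem exists_MN (h : T.Good Finset.univ y) (x : X) (hx : ¬ T.pole x) :
    (∃ d, T.M y d ∧ T.vt (T.φ d) = x) ∧ (∃ d, T.N y d ∧ T.vt (T.φ d) = x) := by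
  obtain ⟨⟨e, he1, -, he3⟩, ⟨f, hf1, -, hf3⟩⟩ := h.mid x (by simp) hx
  have heu : T.up y e := by rw [up, he1]; exact he3
  have hfd : ¬ T.up y f := by rw [up, hf1]; exact not_lt.2 hf3.le
  constructor
  · by_contra hcon
    push Not at hcon
    have := T.trans (fun d => T.vt d = x ∧ ¬ T.up y d) (by
      rintro d ⟨hd1, hd2⟩
      have h0 : T.vt (T.φ (T.α d)) = x := by rw [T.vφ, T.αα, hd1]
      refine ⟨h0, fun hu => hcon (T.α d) ⟨(up_α h d).2 hd2, hu⟩ h0⟩) f e (by rw [hf1, he1])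
      ⟨hf1, hfd⟩
    exact this.2 heu
  · by_contra hcon
    push Not at hcon
    have := T.trans (fun d => T.vt d = x ∧ T.up y d) (by
      rintro d ⟨hd1, hd2⟩
      have h0 : T.vt (T.φ (T.α d)) = x := by rw [T.vφ, T.αα, hd1]
      refine ⟨h0, ?_⟩
      by_contra hu
      exact hcon (T.α d) ⟨fun hh => (up_α h d).1 hh hd2, hu⟩ h0) e f (by rw [hf1, he1])
      ⟨he1, heu⟩
    exact hfd this.2

theorem unique_MN (h : T.Good Finset.univ y) :
    (∀ d d', T.M y d → T.M y d' → T.vt (T.φ d) = T.vt (T.φ d') → d = d') ∧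
    (∀ d d', T.N y d → T.N y d' → T.vt (T.φ d) = T.vt (T.φ d') → d = d') ∧
    (∀ d, T.M y d ∨ T.N y d → ¬ T.pole (T.vt (T.φ d))) := by
  classical
  let m : X → ℕ := fun x => (Finset.univ.filter (fun d => T.M y d ∧ T.vt (T.φ d) = x)).card
  let n : X → ℕ := fun x => (Finset.univ.filter (fun d => T.N y d ∧ T.vt (T.φ d) = x)).card
  let g : X → ℕ := fun x => if T.pole x then 0 else 2
  have hm : ∀ x, ¬ T.pole x → 1 ≤ m x := by
    intro x hx
    obtain ⟨d, hd⟩ := (exists_MN h x hx).1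
    exact Finset.card_pos.2 ⟨d, by simp [hd]⟩
  have hn : ∀ x, ¬ T.pole x → 1 ≤ n x := by
    intro x hx
    obtain ⟨d, hd⟩ := (exists_MN h x hx).2
    exact Finset.card_pos.2 ⟨d, by simp [hd]⟩
  have hle : ∀ x ∈ Finset.univ, g x ≤ m x + n x := by
    intro x _
    by_cases hx : T.pole x
    · simp [g, hx]
    · have := hm x hx; have := hn x hx; simp only [g, hx, if_false]; omega
  have hsum : ∑ x, (m x + n x) = (Finset.univ.filter (fun d => T.M y d ∨ T.N y d)).card := by
    rw [Finset.card_eq_sum_card_fiberwise (f := fun d => T.vt (T.φ d)) (t := Finset.univ)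
      (fun _ _ => by simp)]
    refine Finset.sum_congr rfl fun x _ => ?_
    simp only [m, n]
    rw [← Finset.card_union_of_disjoint]
    · congr 1
      ext d; simp only [Finset.mem_union, Finset.mem_filter, Finset.mem_univ, true_and]; tauto
    · rw [Finset.disjoint_left]
      intro d h1 h2
      exact (Finset.mem_filter.1 h2).2.1.1 (Finset.mem_filter.1 h1).2.1.1
  have hpole : (Finset.univ.filter T.pole).card ≤ 2 * T.B.card := by
    have : Finset.univ.filter T.pole ⊆ T.B.image T.vt ∪ T.B.image (fun b => T.vt (T.α b)) := by
      intro x hx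
      obtain ⟨b, hb, rfl | rfl⟩ := (Finset.mem_filter.1 hx).2
      · exact Finset.mem_union_left _ (Finset.mem_image_of_mem _ hb)
      · exact Finset.mem_union_right _ (Finset.mem_image.2 ⟨b, hb, rfl⟩)
    have h1 := Finset.card_le_card this
    have h2 := Finset.card_union_le (T.B.image T.vt) (T.B.image (fun b => T.vt (T.α b)))
    have h3 : (T.B.image T.vt).card ≤ _ := Finset.card_image_le
    have h4 : (T.B.image (fun b => T.vt (T.α b))).card ≤ _ := Finset.card_image_le
    omega
  have hg : ∑ x, g x + 2 * (Finset.univ.filter T.pole).card = 2 * Fintype.card X := by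
    have : ∀ x, g x + 2 * (if T.pole x then 1 else 0) = 2 := by
      intro x; by_cases hx : T.pole x <;> simp [g, hx]
    have h2 : ∑ x, (g x + 2 * (if T.pole x then 1 else 0)) = 2 * Fintype.card X := by
      rw [Finset.sum_congr rfl (fun x _ => this x)]; simp [mul_comm]
    rw [Finset.sum_add_distrib, ← Finset.mul_sum, ← Finset.card_filter] at h2
    exact h2
  have hcm := card_mid h
  have heu := T.euler
  have heq : ∑ x, g x = ∑ x, (m x + n x) := by
    have := Finset.sum_le_sum hle
    omega
  have hall := (Finset.sum_eq_sum_iff_of_le hle).1 heq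
  have hm1 : ∀ x, m x ≤ 1 := by
    intro x
    have := hall x (by simp)
    by_cases hx : T.pole x
    · simp only [g, hx, if_true] at this; omega
    · have := hn x hx; simp only [g, hx, if_false] at *; omega
  have hn1 : ∀ x, n x ≤ 1 := by
    intro x
    have := hall x (by simp)
    by_cases hx : T.pole x
    · simp only [g, hx, if_true] at this; omega
    · have := hm x hx; simp only [g, hx, if_false] at *; omega
  refine ⟨?_, ?_, ?_⟩
  · intro d d' hd hd' e
    exact Finset.card_le_one.1 (hm1 (T.vt (T.φ d))) d (by simp [hd]) d' (by simp [hd', e])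
  · intro d d' hd hd' e
    exact Finset.card_le_one.1 (hn1 (T.vt (T.φ d))) d (by simp [hd]) d' (by simp [hd', e])
  · intro d hd hp
    have h0 := hall (T.vt (T.φ d)) (by simp)
    simp only [g, hp, if_true] at h0
    rcases hd with hd | hd
    · have : 0 < m (T.vt (T.φ d)) := Finset.card_pos.2 ⟨d, by simp [hd]⟩
      omega
    · have : 0 < n (T.vt (T.φ d)) := Finset.card_pos.2 ⟨d, by simp [hd]⟩
      omega

end Triang
end WBW

namespace WBW
namespace Triang

variable {D X : Type} [Fintype D] [Fintype X] (T : Triang D X)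

/-- The darts of the sweep line, when the triangles of `A` have been swept. -/
def P (y : X → ℝ) (A : Set D) (g : D) : Prop :=
  T.up y g ∧ (g ∈ A ∨ g ∈ T.B) ∧ T.α g ∉ A

/-- The vertices of the sweep line, when the triangles of `A` have been swept. -/
def W (y : X → ℝ) (A : Set D) (w : X) : Prop :=
  (∃ m m', T.M y m ∧ T.N y m' ∧ T.vt (T.φ m) = w ∧ T.vt (T.φ m') = w ∧ m ∈ A ∧ m' ∉ A) ∨
  (∃ b ∈ T.B, b ∉ A ∧ (T.vt b = w ∨ T.vt (T.α b) = w))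

/-- The invariant of the sweep. -/
structure Inv (y : X → ℝ) (A : Set D) : Prop where
  closed : ∀ d ∈ A, T.φ d ∈ A
  left : ∀ g, T.up y g → T.α g ∈ A → g ∈ A ∨ g ∈ T.B
  vert : ∀ g, T.P y A g → T.W y A (T.vt g) ∧ T.W y A (T.vt (T.α g))
  above : ∀ w, T.W y A w → (∃ g, T.P y A g ∧ T.vt g = w) ∨ (∃ b ∈ T.B, T.vt (T.α b) = w)
  below : ∀ w, T.W y A w → (∃ g, T.P y A g ∧ T.vt (T.α g) = w) ∨ (∃ b ∈ T.B, T.vt b = w)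
  disj : ∀ g g', T.P y A g → T.P y A g' → g ≠ g' →
    y (T.vt (T.α g)) ≤ y (T.vt g') ∨ y (T.vt (T.α g')) ≤ y (T.vt g)
  order : ∀ m m', T.M y m → T.N y m' → T.vt (T.φ m) = T.vt (T.φ m') → m' ∈ A → m ∈ A

variable {T} {y : X → ℝ}

theorem inv_empty (h : T.Good Finset.univ y) : T.Inv y ∅ := by
  refine ⟨by simp, by simp, ?_, ?_, ?_, ?_, by simp⟩
  · rintro g ⟨h1, h2, h3⟩
    have : g ∈ T.B := by simpa using h2
    exact ⟨Or.inr ⟨g, this, by simp, Or.inl rfl⟩, Or.inr ⟨g, this, by simp, Or.inr rfl⟩⟩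
  · rintro w (⟨m, m', -, -, -, -, h, -⟩ | ⟨b, hb, -, h⟩)
    · simp at h
    · rcases h with h | h
      · exact Or.inl ⟨b, ⟨(show T.up y b from by
          unfold up; exact ‹T.Good Finset.univ y›.base b hb), Or.inr hb, by simp⟩, h⟩
      · exact Or.inr ⟨b, hb, h⟩
  · rintro w (⟨m, m', -, -, -, -, h, -⟩ | ⟨b, hb, -, h⟩)
    · simp at h
    · rcases h with h | h
      · exact Or.inr ⟨b, hb, h⟩
      · exact Or.inl ⟨b, ⟨(show T.up y b from by
          unfold up; exact ‹T.Good Finset.univ y›.base b hb), Or.inr hb, by simp⟩, h⟩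
  · rintro g g' ⟨h1, h2, h3⟩ ⟨h1', h2', h3'⟩ hne
    have hb : g ∈ T.B := by simpa using h2
    have hb' : g' ∈ T.B := by simpa using h2'
    rcases h.base' g hb g' hb' hne with h | h
    · exact Or.inl h.le
    · exact Or.inr h.le

/-- The three darts of the triangle of `g`. -/
def face (T : Triang D X) (g : D) : Set D := {d | d = g ∨ d = T.φ g ∨ d = T.φ (T.φ g)}

theorem α_inj {a b : D} (h : T.α a = T.α b) : a = b := by rw [← T.αα a, h, T.αα]

theorem φ_inj {a b : D} (h : T.φ a = T.φ b) : a = b := (φ_bij T).1 h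

theorem not_mem_closed {A : Set D} (hA : ∀ d ∈ A, T.φ d ∈ A) {g : D} (hg : g ∉ A) :
    T.φ g ∉ A ∧ T.φ (T.φ g) ∉ A :=
  ⟨fun h => hg (by have := hA _ (hA _ h); rwa [T.φ3] at this),
   fun h => hg (by have := hA _ h; rwa [T.φ3] at this)⟩

theorem tgt_φ (d : D) : T.vt (T.α d) = T.vt (T.φ d) := (T.vφ d).symm

/-- A face never contains both darts of an edge. -/
theorem face_α (g d : D) (hd : d ∈ face T g) : T.α d ∉ face T g := by
  have l0 := T.loopless g
  have l1 := T.loopless (T.φ g)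
  have l2 := T.loopless (T.φ (T.φ g))
  rw [tgt_φ] at l0 l1 l2
  rw [T.φ3] at l2
  intro hα
  have e : T.vt (T.α (T.α d)) = T.vt d := by rw [T.αα]
  rw [tgt_φ] at e
  have e2 : T.vt (T.α d) = T.vt (T.φ d) := tgt_φ d
  rcases hd with rfl | rfl | rfl <;> rcases hα with h | h | h <;> rw [h] at e e2 <;>
    try simp only [T.φ3] at e e2
  all_goals grind

theorem face_closed {A : Set D} (hA : ∀ d ∈ A, T.φ d ∈ A) (g : D) :
    ∀ d ∈ A ∪ face T g, T.φ d ∈ A ∪ face T g := by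
  rintro d (h | h | h | h)
  · exact Or.inl (hA d h)
  · subst h; exact Or.inr (Or.inr (Or.inl rfl))
  · subst h; exact Or.inr (Or.inr (Or.inr rfl))
  · subst h; rw [T.φ3]; exact Or.inr (Or.inl rfl)

theorem step_left {A : Set D} (hI : T.Inv y A) (g : D) (hg : T.α g ∈ A ∨ T.α g ∈ T.B ∨ T.up y g)
    (h1 : T.α (T.φ g) ∈ A ∨ T.α (T.φ g) ∈ T.B ∨ T.up y (T.φ g))
    (h2 : T.α (T.φ (T.φ g)) ∈ A ∨ T.α (T.φ (T.φ g)) ∈ T.B ∨ T.up y (T.φ (T.φ g)))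
    (hG : T.Good Finset.univ y) :
    ∀ d, T.up y d → T.α d ∈ A ∪ face T g → d ∈ A ∪ face T g ∨ d ∈ T.B := by
  intro d hd hα
  rcases hα with hα | hα
  · rcases hI.left d hd hα with h | h
    · exact Or.inl (Or.inl h)
    · exact Or.inr h
  · have hnu : ¬ T.up y (T.α d) := fun h => (up_α hG d).1 h hd
    have key : ∀ e, T.α d = e → (T.α e ∈ A ∨ T.α e ∈ T.B ∨ T.up y e) →
        d ∈ A ∪ face T g ∨ d ∈ T.B := by
      rintro e rfl h
      rw [T.αα] at h
      rcases h with h | h | h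
      · exact Or.inl (Or.inl h)
      · exact Or.inr h
      · exact absurd h hnu
    rcases hα with h | h | h
    · exact key _ h hg
    · exact key _ h h1
    · exact key _ h h2

theorem pole_up (h : T.Good Finset.univ y) {b : D} (hb : b ∈ T.B) :
    (∀ d, T.vt d = T.vt b → T.up y d) ∧ (∀ d, T.vt d = T.vt (T.α b) → ¬ T.up y d) := by
  obtain ⟨-, -, hu⟩ := unique_MN h
  have hbu : T.up y b := h.base b hb
  constructor
  · intro d hd
    refine (T.trans (fun e => T.vt e = T.vt b ∧ T.up y e) ?_ b d hd.symm ⟨rfl, hbu⟩).2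
    rintro e ⟨he, heu⟩
    have h0 : T.vt (T.φ (T.α e)) = T.vt b := by rw [T.vφ, T.αα, he]
    refine ⟨h0, ?_⟩
    by_contra hn
    exact hu (T.α e) (Or.inr ⟨fun hh => (up_α h e).1 hh heu, hn⟩) ⟨b, hb, Or.inl h0⟩
  · intro d hd
    refine (T.trans (fun e => T.vt e = T.vt (T.α b) ∧ ¬ T.up y e) ?_ (T.α b) d hd.symm
      ⟨rfl, fun hh => (up_α h b).1 hh hbu⟩).2
    rintro e ⟨he, heu⟩
    have h0 : T.vt (T.φ (T.α e)) = T.vt (T.α b) := by rw [T.vφ, T.αα, he]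
    refine ⟨h0, ?_⟩
    intro hn
    exact hu (T.α e) (Or.inl ⟨(up_α h e).2 heu, hn⟩) ⟨b, hb, Or.inr h0⟩

theorem step_one (h : T.Good Finset.univ y) {A : Set D} (hI : T.Inv y A) (g : D)
    (u0 : ¬ T.up y g) (u1 : T.up y (T.φ g)) (u2 : T.up y (T.φ (T.φ g)))
    (hP : T.P y A (T.α g)) : T.Inv y (A ∪ face T g) := by
  obtain ⟨uM, uN, uP⟩ := unique_MN h
  have hgA : g ∉ A := by have := hP.2.2; rwa [T.αα] at this
  obtain ⟨hg1, hg2⟩ := not_mem_closed hI.closed hgA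
  have hM : T.M y (T.φ g) := ⟨u1, u2⟩
  have hbn := uP _ (Or.inl hM)
  have hB1 : T.φ g ∉ T.B := fun hb => hbn ⟨_, hb, Or.inr (tgt_φ _).symm⟩
  have hB2 : T.φ (T.φ g) ∉ T.B := fun hb => hbn ⟨_, hb, Or.inl rfl⟩
  have hfN : ∀ m, m ∈ face T g → ¬ T.N y m := by
    rintro m (rfl | rfl | rfl) ⟨hn1, hn2⟩
    · exact hn2 u1
    · exact hn1 u1
    · exact hn1 u2
  have hfM : ∀ m, m ∈ face T g → T.M y m → m = T.φ g := by
    rintro m (rfl | rfl | rfl) ⟨hn1, hn2⟩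
    · exact absurd hn1 u0
    · rfl
    · rw [T.φ3] at hn2; exact absurd hn2 u0
  have hP' : ∀ d, T.P y (A ∪ face T g) d ↔
      (T.P y A d ∧ d ≠ T.α g) ∨ d = T.φ g ∨ d = T.φ (T.φ g) := by
    intro d
    constructor
    · rintro ⟨hd1, hd2, hd3⟩
      have hd4 : T.α d ∉ A := fun hh => hd3 (Or.inl hh)
      have hd5 : d ≠ T.α g := by
        rintro rfl; apply hd3; rw [T.αα]; exact Or.inr (Or.inl rfl)
      rcases hd2 with (hd2 | hd2) | hd2
      · exact Or.inl ⟨⟨hd1, Or.inl hd2, hd4⟩, hd5⟩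
      · rcases hd2 with rfl | hd2
        · exact absurd hd1 u0
        · exact Or.inr hd2
      · exact Or.inl ⟨⟨hd1, Or.inr hd2, hd4⟩, hd5⟩
    · have gen : ∀ e, e ∈ face T g → e ∉ A → e ∉ T.B → T.up y e → T.P y (A ∪ face T g) e := by
        intro e he1 he2 he3 he4
        refine ⟨he4, Or.inl (Or.inr he1), ?_⟩
        rintro (hh | hh)
        · rcases hI.left e he4 hh with h' | h'
          · exact he2 h'
          · exact he3 h'
        · exact face_α g e he1 hh
      rintro (⟨⟨hd1, hd2, hd3⟩, hne⟩ | rfl | rfl)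
      · refine ⟨hd1, hd2.imp Or.inl id, ?_⟩
        have hαu : ¬ T.up y (T.α d) := fun hh => (up_α h d).1 hh hd1
        rintro (hh | hh | hh | hh)
        · exact hd3 hh
        · exact hne (by rw [← hh, T.αα])
        · rw [hh] at hαu; exact hαu u1
        · rw [hh] at hαu; exact hαu u2
      · exact gen _ (Or.inr (Or.inl rfl)) hg1 hB1 u1
      · exact gen _ (Or.inr (Or.inr rfl)) hg2 hB2 u2
  have hW' : ∀ w, T.W y (A ∪ face T g) w ↔ T.W y A w ∨ w = T.vt (T.φ (T.φ g)) := by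
    intro w
    constructor
    · rintro (⟨m, m', h1, h2, h3, h4, h5, h6⟩ | ⟨b, hb, h1, h2⟩)
      · rcases h5 with h5 | h5
        · exact Or.inl (Or.inl ⟨m, m', h1, h2, h3, h4, h5, fun hh => h6 (Or.inl hh)⟩)
        · rw [hfM m h5 h1] at h3; exact Or.inr h3.symm
      · exact Or.inl (Or.inr ⟨b, hb, fun hh => h1 (Or.inl hh), h2⟩)
    · rintro ((⟨m, m', h1, h2, h3, h4, h5, h6⟩ | ⟨b, hb, h1, h2⟩) | rfl)
      · refine Or.inl ⟨m, m', h1, h2, h3, h4, Or.inl h5, ?_⟩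
        rintro (hh | hh)
        · exact h6 hh
        · exact hfN _ hh h2
      · refine Or.inr ⟨b, hb, ?_, h2⟩
        rintro (hh | rfl | rfl | rfl)
        · exact h1 hh
        · exact u0 (h.base _ hb)
        · exact hB1 hb
        · exact hB2 hb
      · obtain ⟨m', hm1, hm2⟩ := (exists_MN h _ hbn).2
        refine Or.inl ⟨T.φ g, m', hM, hm1, rfl, hm2, Or.inr (Or.inr (Or.inl rfl)), ?_⟩
        rintro (hh | hh)
        · exact hg1 (hI.order _ _ hM hm1 hm2.symm hh)
        · exact hfN _ hh hm1
  have e1 : T.vt (T.α g) = T.vt (T.φ g) := tgt_φ g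
  have e2 : T.vt (T.α (T.α g)) = T.vt g := by rw [T.αα]
  have e3 : T.vt (T.α (T.φ g)) = T.vt (T.φ (T.φ g)) := tgt_φ _
  have e4 : T.vt (T.α (T.φ (T.φ g))) = T.vt g := by rw [tgt_φ, T.φ3]
  have o1 := (up_iff _).1 u1
  have o2 := (up_iff _).1 u2
  rw [T.φ3] at o2
  have hV := hI.vert _ hP
  rw [e1, e2] at hV
  refine ⟨face_closed hI.closed g, step_left hI g ?_ (Or.inr (Or.inr u1)) (Or.inr (Or.inr u2)) h,
    ?_, ?_, ?_, ?_, ?_⟩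
  · rcases hP.2.1 with hh | hh
    · exact Or.inl hh
    · exact Or.inr (Or.inl hh)
  · intro d hd
    rw [hW', hW']
    rcases (hP' d).1 hd with ⟨hd, -⟩ | rfl | rfl
    · exact ⟨Or.inl (hI.vert d hd).1, Or.inl (hI.vert d hd).2⟩
    · exact ⟨Or.inl hV.1, Or.inr e3⟩
    · rw [e4]; exact ⟨Or.inr rfl, Or.inl hV.2⟩
  · intro w hw
    rcases (hW' w).1 hw with hw | rfl
    · rcases hI.above w hw with ⟨d, hd1, hd2⟩ | hh
      · by_cases hd : d = T.α g
        · subst hd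
          exact Or.inl ⟨T.φ g, (hP' _).2 (Or.inr (Or.inl rfl)), by rw [← hd2, e1]⟩
        · exact Or.inl ⟨d, (hP' _).2 (Or.inl ⟨hd1, hd⟩), hd2⟩
      · exact Or.inr hh
    · exact Or.inl ⟨_, (hP' _).2 (Or.inr (Or.inr rfl)), rfl⟩
  · intro w hw
    rcases (hW' w).1 hw with hw | rfl
    · rcases hI.below w hw with ⟨d, hd1, hd2⟩ | hh
      · by_cases hd : d = T.α g
        · subst hd
          exact Or.inl ⟨_, (hP' _).2 (Or.inr (Or.inr rfl)), by rw [← hd2, e2, e4]⟩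
        · exact Or.inl ⟨d, (hP' _).2 (Or.inl ⟨hd1, hd⟩), hd2⟩
      · exact Or.inr hh
    · exact Or.inl ⟨_, (hP' _).2 (Or.inr (Or.inl rfl)), e3⟩
  · intro d d' hd hd' hne
    have dj : ∀ d, T.P y A d → d ≠ T.α g →
        y (T.vt (T.α d)) ≤ y (T.vt (T.φ g)) ∨ y (T.vt g) ≤ y (T.vt d) := by
      intro d hd hne
      have := hI.disj d (T.α g) hd hP hne
      rwa [e1, e2] at this
    rcases (hP' d).1 hd with ⟨hd, hd0⟩ | rfl | rfl <;>
      rcases (hP' d').1 hd' with ⟨hd', hd0'⟩ | rfl | rfl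
    · exact hI.disj d d' hd hd' hne
    · rw [e3]; rcases dj d hd hd0 with hh | hh
      · left; linarith
      · right; linarith
    · rw [e4]; rcases dj d hd hd0 with hh | hh
      · left; linarith
      · right; linarith
    · rw [e3]; rcases dj d' hd' hd0' with hh | hh
      · right; linarith
      · left; linarith
    · exact absurd rfl hne
    · rw [e3]; left; exact le_rfl
    · rw [e4]; rcases dj d' hd' hd0' with hh | hh
      · right; linarith
      · left; linarith
    · rw [e3]; right; exact le_rfl
    · exact absurd rfl hne
  · intro m m' h1 h2 h3 h4
    rcases h4 with h4 | h4
    · exact Or.inl (hI.order m m' h1 h2 h3 h4)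
    · exact absurd h2 (hfN _ h4)

theorem step_two (h : T.Good Finset.univ y) {A : Set D} (hI : T.Inv y A) (g : D)
    (u0 : T.up y g) (u1 : ¬ T.up y (T.φ g)) (u2 : ¬ T.up y (T.φ (T.φ g)))
    (hP1 : T.P y A (T.α (T.φ g))) (hP2 : T.P y A (T.α (T.φ (T.φ g)))) :
    T.Inv y (A ∪ face T g) := by
  obtain ⟨uM, uN, uP⟩ := unique_MN h
  have hg1 : T.φ g ∉ A := by have := hP1.2.2; rwa [T.αα] at this
  have hg2 : T.φ (T.φ g) ∉ A := by have := hP2.2.2; rwa [T.αα] at this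
  have hgA : g ∉ A := fun hh => hg1 (hI.closed _ hh)
  have hN : T.N y (T.φ g) := ⟨u1, u2⟩
  have hbn := uP _ (Or.inr hN)
  have hfM : ∀ m, m ∈ face T g → ¬ T.M y m := by
    rintro m (rfl | rfl | rfl) ⟨hn1, hn2⟩
    · exact u1 hn2
    · exact u1 hn1
    · exact u2 hn1
  have hfN : ∀ m, m ∈ face T g → T.N y m → m = T.φ g := by
    rintro m (rfl | rfl | rfl) ⟨hn1, hn2⟩
    · exact absurd u0 hn1
    · rfl
    · rw [T.φ3] at hn2; exact absurd u0 hn2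
  have a1 : T.vt (T.α (T.φ g)) = T.vt (T.φ (T.φ g)) := tgt_φ _
  have a2 : T.vt (T.α (T.α (T.φ g))) = T.vt (T.φ g) := by rw [T.αα]
  have a3 : T.vt (T.α (T.φ (T.φ g))) = T.vt g := by rw [tgt_φ, T.φ3]
  have a4 : T.vt (T.α (T.α (T.φ (T.φ g)))) = T.vt (T.φ (T.φ g)) := by rw [T.αα]
  have a5 : T.vt (T.α g) = T.vt (T.φ g) := tgt_φ g
  have o1 := (not_up h _).1 u1
  have o2 := (not_up h _).1 u2
  rw [T.φ3] at o2
  have dj1 : ∀ d, T.P y A d → d ≠ T.α (T.φ g) →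
      y (T.vt (T.α d)) ≤ y (T.vt (T.φ (T.φ g))) ∨ y (T.vt (T.φ g)) ≤ y (T.vt d) := by
    intro d hd hne
    have := hI.disj d _ hd hP1 hne
    rwa [a1, a2] at this
  have dj2 : ∀ d, T.P y A d → d ≠ T.α (T.φ (T.φ g)) →
      y (T.vt (T.α d)) ≤ y (T.vt g) ∨ y (T.vt (T.φ (T.φ g))) ≤ y (T.vt d) := by
    intro d hd hne
    have := hI.disj d _ hd hP2 hne
    rwa [a3, a4] at this
  have hP' : ∀ d, T.P y (A ∪ face T g) d ↔
      (T.P y A d ∧ d ≠ T.α (T.φ g) ∧ d ≠ T.α (T.φ (T.φ g))) ∨ (d = g ∧ g ∉ T.B) := by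
    intro d
    constructor
    · rintro ⟨hd1, hd2, hd3⟩
      have hd4 : T.α d ∉ A := fun hh => hd3 (Or.inl hh)
      have hd5 : d ≠ T.α (T.φ g) := by
        rintro rfl; apply hd3; rw [T.αα]; exact Or.inr (Or.inr (Or.inl rfl))
      have hd6 : d ≠ T.α (T.φ (T.φ g)) := by
        rintro rfl; apply hd3; rw [T.αα]; exact Or.inr (Or.inr (Or.inr rfl))
      rcases hd2 with (hd2 | hd2) | hd2
      · exact Or.inl ⟨⟨hd1, Or.inl hd2, hd4⟩, hd5, hd6⟩
      · rcases hd2 with rfl | rfl | rfl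
        · by_cases hB : d ∈ T.B
          · exact Or.inl ⟨⟨hd1, Or.inr hB, hd4⟩, hd5, hd6⟩
          · exact Or.inr ⟨rfl, hB⟩
        · exact absurd hd1 u1
        · exact absurd hd1 u2
      · exact Or.inl ⟨⟨hd1, Or.inr hd2, hd4⟩, hd5, hd6⟩
    · rintro (⟨⟨hd1, hd2, hd3⟩, hne1, hne2⟩ | ⟨rfl, hB⟩)
      · refine ⟨hd1, hd2.imp Or.inl id, ?_⟩
        have hαu : ¬ T.up y (T.α d) := fun hh => (up_α h d).1 hh hd1
        rintro (hh | hh | hh | hh)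
        · exact hd3 hh
        · rw [hh] at hαu; exact hαu u0
        · exact hne1 (by rw [← hh, T.αα])
        · exact hne2 (by rw [← hh, T.αα])
      · refine ⟨u0, Or.inl (Or.inr (Or.inl rfl)), ?_⟩
        rintro (hh | hh)
        · rcases hI.left _ u0 hh with h' | h'
          · exact hgA h'
          · exact hB h'
        · exact face_α _ _ (Or.inl rfl) hh
  have hW' : ∀ w, T.W y (A ∪ face T g) w ↔ T.W y A w ∧ w ≠ T.vt (T.φ (T.φ g)) ∧
      ¬ (g ∈ T.B ∧ (w = T.vt g ∨ w = T.vt (T.α g))) := by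
    intro w
    constructor
    · rintro (⟨m, m', h1, h2, h3, h4, h5, h6⟩ | ⟨b, hb, h1, h2⟩)
      · have h5' : m ∈ A := by
          rcases h5 with h5 | h5
          · exact h5
          · exact absurd h1 (hfM m h5)
        refine ⟨Or.inl ⟨m, m', h1, h2, h3, h4, h5', fun hh => h6 (Or.inl hh)⟩, ?_, ?_⟩
        · intro hw
          apply h6
          rw [uN m' (T.φ g) h2 hN (by rw [h4, hw])]
          exact Or.inr (Or.inr (Or.inl rfl))
        · rintro ⟨hB, hw⟩
          exact uP m (Or.inl h1) ⟨g, hB, by rw [h3]; exact hw⟩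
      · refine ⟨Or.inr ⟨b, hb, fun hh => h1 (Or.inl hh), h2⟩, ?_, ?_⟩
        · rintro rfl
          exact hbn ⟨b, hb, h2.imp Eq.symm Eq.symm⟩
        · rintro ⟨hB, hw⟩
          have hbg : b ≠ g := by rintro rfl; exact h1 (Or.inr (Or.inl rfl))
          rcases h2 with rfl | rfl <;> rcases hw with hw | hw
          · exact hbg (T.Binj b hb g hB hw)
          · exact T.Bne b hb g hB hw
          · exact T.Bne g hB b hb hw.symm
          · exact hbg (T.Binj' b hb g hB hw)
    · rintro ⟨⟨m, m', h1, h2, h3, h4, h5, h6⟩ | ⟨b, hb, h1, h2⟩, hw1, hw2⟩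
      · refine Or.inl ⟨m, m', h1, h2, h3, h4, Or.inl h5, ?_⟩
        rintro (hh | hh)
        · exact h6 hh
        · rw [hfN _ hh h2] at h4; exact hw1 h4.symm
      · refine Or.inr ⟨b, hb, ?_, h2⟩
        rintro (hh | rfl | rfl | rfl)
        · exact h1 hh
        · exact hw2 ⟨hb, h2.imp Eq.symm Eq.symm⟩
        · exact u1 (h.base _ hb)
        · exact u2 (h.base _ hb)
  have hV1 := hI.vert _ hP1
  have hV2 := hI.vert _ hP2
  rw [a1, a2] at hV1
  rw [a3, a4] at hV2
  refine ⟨face_closed hI.closed g, step_left hI g (Or.inr (Or.inr u0)) ?_ ?_ h,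
    ?_, ?_, ?_, ?_, ?_⟩
  · rcases hP1.2.1 with hh | hh
    · exact Or.inl hh
    · exact Or.inr (Or.inl hh)
  · rcases hP2.2.1 with hh | hh
    · exact Or.inl hh
    · exact Or.inr (Or.inl hh)
  · intro d hd
    rw [hW', hW']
    rcases (hP' d).1 hd with ⟨hd, hn1, hn2⟩ | ⟨rfl, hB⟩
    · have hdu : y (T.vt d) < y (T.vt (T.α d)) := hd.1
      have d1 := dj1 d hd hn1
      have d2 := dj2 d hd hn2
      refine ⟨⟨(hI.vert d hd).1, ?_, ?_⟩, (hI.vert d hd).2, ?_, ?_⟩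
      · intro e; rw [← e] at d1 o1; rcases d1 with d1 | d1 <;> linarith
      · rintro ⟨hB, e | e⟩
        · rw [e] at d2 hdu; rcases d2 with d2 | d2 <;> linarith
        · exact (pole_up h hB).2 d e hd.1
      · intro e; rw [e] at d2 hdu; rcases d2 with d2 | d2 <;> linarith
      · rintro ⟨hB, e | e⟩
        · exact (up_α h d).1 ((pole_up h hB).1 (T.α d) e) hd.1
        · rw [e, a5] at d1; rw [e, a5] at hdu; rcases d1 with d1 | d1 <;> linarith
    · rw [a5]
      refine ⟨⟨hV2.1, ?_, fun hh => hB hh.1⟩, hV1.2, ?_, fun hh => hB hh.1⟩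
      · intro e; rw [← e] at o2; exact lt_irrefl _ o2
      · intro e; rw [← e] at o1; exact lt_irrefl _ o1
  · intro w hw
    obtain ⟨hw, hw1, hw2⟩ := (hW' w).1 hw
    rcases hI.above w hw with ⟨d, hd1, hd2⟩ | hh
    · by_cases hd : d = T.α (T.φ g)
      · subst hd; exact absurd (hd2.symm.trans a1) hw1
      · by_cases hd' : d = T.α (T.φ (T.φ g))
        · subst hd'
          have e : w = T.vt g := by rw [← hd2, a3]
          exact Or.inl ⟨g, (hP' _).2 (Or.inr ⟨rfl, fun hB => hw2 ⟨hB, Or.inl e⟩⟩), e.symm⟩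
        · exact Or.inl ⟨d, (hP' _).2 (Or.inl ⟨hd1, hd, hd'⟩), hd2⟩
    · exact Or.inr hh
  · intro w hw
    obtain ⟨hw, hw1, hw2⟩ := (hW' w).1 hw
    rcases hI.below w hw with ⟨d, hd1, hd2⟩ | hh
    · by_cases hd : d = T.α (T.φ (T.φ g))
      · subst hd; exact absurd (hd2.symm.trans a4) hw1
      · by_cases hd' : d = T.α (T.φ g)
        · subst hd'
          have e : w = T.vt (T.α g) := by rw [← hd2, a2, a5]
          exact Or.inl ⟨g, (hP' _).2 (Or.inr ⟨rfl, fun hB => hw2 ⟨hB, Or.inr e⟩⟩), e.symm⟩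
        · exact Or.inl ⟨d, (hP' _).2 (Or.inl ⟨hd1, hd', hd⟩), hd2⟩
    · exact Or.inr hh
  · intro d d' hd hd' hne
    have dj : ∀ d, T.P y A d → d ≠ T.α (T.φ g) → d ≠ T.α (T.φ (T.φ g)) →
        y (T.vt (T.α d)) ≤ y (T.vt g) ∨ y (T.vt (T.φ g)) ≤ y (T.vt d) := by
      intro d hd h1 h2
      have hdu : y (T.vt d) < y (T.vt (T.α d)) := hd.1
      rcases dj1 d hd h1 with d1 | d1
      · rcases dj2 d hd h2 with d2 | d2
        · exact Or.inl d2
        · linarith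
      · exact Or.inr d1
    rcases (hP' d).1 hd with ⟨hq, hn1, hn2⟩ | ⟨he, hB⟩ <;>
      rcases (hP' d').1 hd' with ⟨hq', hn1', hn2'⟩ | ⟨he', hB'⟩
    · exact hI.disj d d' hq hq' hne
    · have := dj d hq hn1 hn2
      subst he'
      rw [a5]; exact this
    · have := dj d' hq' hn1' hn2'
      subst he
      rw [a5]; exact this.symm
    · exact absurd (he.trans he'.symm) hne
  · intro m m' h1 h2 h3 h4
    rcases h4 with h4 | h4
    · exact Or.inl (hI.order m m' h1 h2 h3 h4)
    · have := hfN _ h4 h2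
      subst this
      rcases hV1.1 with ⟨m0, m1, q1, q2, q3, q4, q5, q6⟩ | ⟨b, hb, -, hh⟩
      · rw [uM m m0 h1 q1 (by rw [h3, q3])]
        exact Or.inl q5
      · exact absurd ⟨b, hb, hh.imp Eq.symm Eq.symm⟩ hbn

theorem progress (h : T.Good Finset.univ y) {A : Set D} (hI : T.Inv y A) (hA : ∃ d, d ∉ A) :
    ∃ g, g ∉ A ∧ T.Inv y (A ∪ face T g) := by
  classical
  obtain ⟨uM, uN, uP⟩ := unique_MN h
  by_cases h1 : ∃ g, ¬ T.up y g ∧ T.up y (T.φ g) ∧ T.up y (T.φ (T.φ g)) ∧ T.P y A (T.α g)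
  · obtain ⟨g, u0, u1, u2, hP⟩ := h1
    refine ⟨g, ?_, step_one h hI g u0 u1 u2 hP⟩
    have := hP.2.2; rwa [T.αα] at this
  have hne : ∃ d, T.P y A d := by
    by_contra hcon
    push Not at hcon
    have hB : ∀ b ∈ T.B, b ∈ A := by
      intro b hb
      by_contra hbA
      rcases hI.above (T.vt b) (Or.inr ⟨b, hb, hbA, Or.inl rfl⟩) with ⟨g, hg, -⟩ | ⟨b', hb', e⟩
      · exact hcon g hg
      · exact T.Bne b hb b' hb' e.symm
    obtain ⟨d, hd⟩ := hA
    apply hd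
    refine T.conn A hI.closed ?_ hB d
    intro e he
    by_cases hu : T.up y e
    · by_contra hα
      exact hcon e ⟨hu, Or.inl he, hα⟩
    · rcases hI.left (T.α e) ((up_α h e).2 hu) (by rwa [T.αα]) with h' | h'
      · exact h'
      · exact hB _ h'
  have lab : ∀ d, T.P y A d → T.N y (T.α d) ∨ T.N y (T.φ (T.φ (T.α d))) := by
    intro d hd
    have hnu : ¬ T.up y (T.α d) := fun hh => (up_α h d).1 hh hd.1
    rcases tri_cases h (T.α d) with q | q | q | q | q | q
    · exact absurd q.1 hnu
    · exact absurd q.1 hnu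
    · exact absurd ⟨T.α d, q.1, q.2.1, q.2.2, by rwa [T.αα]⟩ h1
    · exact Or.inl ⟨q.1, q.2.1⟩
    · refine Or.inr ⟨q.2.2, ?_⟩
      rw [T.φ3]; exact q.1
    · exact absurd q.1 hnu
  have hD : ∃ d, T.P y A d ∧ T.N y (T.α d) := by
    obtain ⟨d, hd, hmax⟩ := Finset.exists_max_image (Finset.univ.filter (T.P y A))
      (fun d => y (T.vt (T.α d))) (by obtain ⟨d, hd⟩ := hne; exact ⟨d, by simp [hd]⟩)
    have hd := (Finset.mem_filter.1 hd).2
    refine ⟨d, hd, ?_⟩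
    rcases lab d hd with hl | hl
    · exact hl
    · exfalso
      have e : T.vt (T.φ (T.φ (T.φ (T.α d)))) = T.vt (T.α d) := by rw [T.φ3]
      have hnp := uP _ (Or.inr hl)
      rw [e] at hnp
      rcases hI.above _ (hI.vert d hd).2 with ⟨g, hg, hg'⟩ | ⟨b, hb, hh⟩
      · have := hmax g (by simp [hg])
        have h3 : y (T.vt g) < y (T.vt (T.α g)) := hg.1
        rw [hg'] at h3
        linarith
      · exact hnp ⟨b, hb, Or.inr hh.symm⟩
  obtain ⟨d, hd, hmin⟩ := Finset.exists_min_image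
    (Finset.univ.filter (fun d => T.P y A d ∧ T.N y (T.α d)))
    (fun d => y (T.vt d)) (by obtain ⟨d, hd⟩ := hD; exact ⟨d, by simp [hd]⟩)
  obtain ⟨hd, hdN⟩ := (Finset.mem_filter.1 hd).2
  have e : T.vt (T.φ (T.α d)) = T.vt d := by rw [T.vφ, T.αα]
  have hnp := uP _ (Or.inr hdN)
  rw [e] at hnp
  rcases hI.below _ (hI.vert d hd).1 with ⟨d', hd', e'⟩ | ⟨b, hb, hh⟩
  · rcases lab d' hd' with hl | hl
    · have := hmin d' (by simp [hd', hl])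
      have h3 : y (T.vt d') < y (T.vt (T.α d')) := hd'.1
      rw [e'] at h3
      linarith
    · have heq := uN _ _ hl hdN (by rw [T.φ3, e, e'])
      have heq2 : T.φ (T.α d) = T.α d' := by rw [← heq, T.φ3]
      refine ⟨T.φ (T.φ (T.α d)), ?_, step_two h hI _ ?_ ?_ ?_ ?_ ?_⟩
      · exact (not_mem_closed hI.closed hd.2.2).2
      · rcases tri_cases h (T.α d) with q | q | q | q | q | q
        · exact absurd q.1 hdN.1
        · exact absurd q.1 hdN.1
        · exact q.2.2
        · exact q.2.2
        · exact absurd q.2.1 hdN.2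
        · exact absurd q.1 hdN.1
      · rw [T.φ3]; exact hdN.1
      · rw [T.φ3]; exact hdN.2
      · rw [T.φ3, T.αα]; exact hd
      · rw [T.φ3, heq2, T.αα]; exact hd'
  · exact absurd ⟨b, hb, Or.inl hh.symm⟩ hnp

end Triang
end WBW

namespace WBW
namespace Triang

variable {D X : Type} [Fintype D] [Fintype X] {T : Triang D X} {y : X → ℝ}

theorem exists_sweep (h : T.Good Finset.univ y) :
    ∃ A : ℕ → Set D, A 0 = ∅ ∧ (∀ k, T.Inv y (A k)) ∧
      (∀ k, A (k + 1) = A k ∨ ∃ g, A (k + 1) = A k ∪ face T g) ∧ ∀ d, ∃ k, d ∈ A k := by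
  classical
  have step : ∀ A : {A : Set D // T.Inv y A}, ∃ A' : {A : Set D // T.Inv y A},
      (A'.1 = A.1 ∨ ∃ g, A'.1 = A.1 ∪ face T g) ∧
      ((∃ d, d ∉ A.1) → ∃ g, g ∉ A.1 ∧ g ∈ A'.1) := by
    intro A
    by_cases hA : ∃ d, d ∉ A.1
    · obtain ⟨g, h1, h2⟩ := progress h A.2 hA
      exact ⟨⟨_, h2⟩, Or.inr ⟨g, rfl⟩, fun _ => ⟨g, h1, Or.inr (Or.inl rfl)⟩⟩
    · exact ⟨A, Or.inl rfl, fun h => absurd h hA⟩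
  choose nxt h1 h2 using step
  let A : ℕ → {A : Set D // T.Inv y A} := fun k => nxt^[k] ⟨∅, inv_empty h⟩
  have hs : ∀ k, A (k + 1) = nxt (A k) := fun k => Function.iterate_succ_apply' _ _ _
  have hsub : ∀ k, (A k).1 ⊆ (A (k + 1)).1 := by
    intro k
    rw [hs]
    rcases h1 (A k) with e | ⟨g, e⟩ <;> rw [e]
    exact Set.subset_union_left
  refine ⟨fun k => (A k).1, rfl, fun k => (A k).2, ?_, ?_⟩
  · intro k
    simp only [hs]
    exact h1 (A k)
  · by_contra hcon
    push Not at hcon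
    obtain ⟨d, hd⟩ := hcon
    have : ∀ k, k ≤ (A k).1.ncard := by
      intro k
      induction k with
      | zero => simp
      | succ k ih =>
        obtain ⟨g, g1, g2⟩ := h2 (A k) ⟨d, hd k⟩
        rw [← hs] at g2
        have : (A k).1.ncard < (A (k + 1)).1.ncard := by
          apply Set.ncard_lt_ncard _ (Set.toFinite _)
          exact ⟨hsub k, fun hh => g1 (hh g2)⟩
        omega
    have h3 := this (Fintype.card D + 1)
    have h4 : (A (Fintype.card D + 1)).1.ncard ≤ (Set.univ : Set D).ncard :=
      Set.ncard_le_ncard (Set.subset_univ _) (Set.toFinite _)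
    rw [Set.ncard_univ, Nat.card_eq_fintype_card] at h4
    omega

theorem sweep_out (T : Triang D X) : ∃ (y : X → ℝ) (col : D → ℕ) (S : X → Set ℕ),
    Function.Injective y ∧ (∀ w, (S w).OrdConnected) ∧
    (∀ g, y (T.vt g) < y (T.vt (T.α g)) →
      col g ∈ S (T.vt g) ∧ col g ∈ S (T.vt (T.α g)) ∧
      ∀ w, col g ∈ S w → ¬ (y (T.vt g) < y w ∧ y w < y (T.vt (T.α g)))) ∧
    ∀ g g', y (T.vt g) < y (T.vt (T.α g)) → y (T.vt g') < y (T.vt (T.α g')) → g ≠ g' →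
      col g = col g' →
      y (T.vt (T.α g)) ≤ y (T.vt g') ∨ y (T.vt (T.α g')) ≤ y (T.vt g) := by
  classical
  obtain ⟨y, h⟩ := T.heights
  obtain ⟨A, A0, AI, As, Au⟩ := exists_sweep h
  obtain ⟨uM, uN, uP⟩ := unique_MN h
  have hmono : Monotone A := by
    apply monotone_nat_of_le_succ
    intro k
    rcases As k with e | ⟨g, e⟩ <;> rw [e]
    exact Set.subset_union_left
  have hcol : ∀ g, ∃ k, y (T.vt g) < y (T.vt (T.α g)) → T.P y (A k) g := by
    intro g
    by_cases hB : g ∈ T.B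
    · exact ⟨0, fun hu => ⟨hu, Or.inr hB, by simp [A0]⟩⟩
    · have hex := Au g
      obtain ⟨k, hk⟩ : ∃ k, k = Nat.find hex := ⟨_, rfl⟩
      have hk1 : g ∈ A k := hk ▸ Nat.find_spec hex
      cases k with
      | zero => simp [A0] at hk1
      | succ j =>
        refine ⟨j + 1, fun hu => ?_⟩
        have hj : g ∉ A j := Nat.find_min hex (by omega)
        have hα : T.α g ∉ A j := fun hh => by
          rcases (AI j).left g hu hh with h | h
          · exact hj h
          · exact hB h
        refine ⟨hu, Or.inl hk1, ?_⟩
        rcases As j with e | ⟨t, e⟩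
        · rw [e] at hk1; exact absurd hk1 hj
        · rw [e] at hk1 ⊢
          rcases hk1 with hk1 | hk1
          · exact absurd hk1 hj
          · rintro (hh | hh)
            · exact hα hh
            · exact face_α t g hk1 hh
  choose col hcol using hcol
  refine ⟨y, col, fun w => {k | T.W y (A k) w}, ?_, ?_, ?_, ?_⟩
  · exact fun a b hab => h.inj (by simp) (by simp) hab
  · intro w
    refine ⟨fun i hi k hk j hj => ?_⟩
    obtain ⟨hij, hjk⟩ := hj
    rcases hk with ⟨n, n', q1, q2, q3, q4, q5, q6⟩ | ⟨b, hb, h1, h2⟩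
    · rcases hi with ⟨m, m', p1, p2, p3, p4, p5, p6⟩ | ⟨b, hb, h1, h2⟩
      · exact Or.inl ⟨m, n', p1, q2, p3, q4, hmono hij p5, fun hh => q6 (hmono hjk hh)⟩
      · refine absurd ?_ (uP n (Or.inl q1))
        rw [q3]
        exact ⟨b, hb, h2.imp Eq.symm Eq.symm⟩
    · exact Or.inr ⟨b, hb, fun hh => h1 (hmono hjk hh), h2⟩
  · intro g hu
    have hP := hcol g hu
    obtain ⟨v1, v2⟩ := (AI _).vert g hP
    refine ⟨v1, v2, ?_⟩
    rintro w hw ⟨w1, w2⟩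
    rcases (AI _).above w hw with ⟨g', hg', e⟩ | ⟨b, hb, e⟩
    · have hne : g ≠ g' := by rintro rfl; rw [e] at w1; exact lt_irrefl _ w1
      have hu' : y (T.vt g') < y (T.vt (T.α g')) := hg'.1
      rcases (AI _).disj g g' hP hg' hne with hh | hh
      · rw [e] at hh; linarith
      · rw [e] at hu'; linarith
    · rcases (AI _).below w hw with ⟨g', hg', e⟩ | ⟨b', hb', e'⟩
      · have hne : g ≠ g' := by rintro rfl; rw [e] at w2; exact lt_irrefl _ w2
        have hu' : y (T.vt g') < y (T.vt (T.α g')) := hg'.1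
        rcases (AI _).disj g g' hP hg' hne with hh | hh
        · rw [e] at hu'; linarith
        · rw [e] at hh; linarith
      · exact T.Bne b' hb' b hb (e'.trans e.symm)
  · intro g g' hu hu' hne hc
    have h1 := hcol g hu
    have h2 := hcol g' hu'
    rw [← hc] at h2
    exact (AI _).disj g g' h1 h2 hne

end Triang
end WBW

namespace WBW
namespace Triang

variable {D X Y : Type} [Fintype D] [Fintype X]

/-- The straight-line pieces of the drawing of a triangulation: two stubs and a middle piece
for every edge. -/
def pieces (T : Triang D X) (f : X → Y) : SimpleGraph (Y ⊕ D) :=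
  SimpleGraph.fromRel (fun a b => (∃ d, a = Sum.inl (f (T.vt d)) ∧ b = Sum.inr d) ∨
    (∃ d, a = Sum.inr d ∧ b = Sum.inr (T.α d)))

theorem seg_coord {p q z : ℝ × ℝ} (h : z ∈ segment ℝ p q) :
    z.1 ∈ Set.uIcc p.1 q.1 ∧ z.2 ∈ Set.uIcc p.2 q.2 := by
  rw [← segment_eq_uIcc, ← segment_eq_uIcc]
  obtain ⟨a, b, ha, hb, hab, rfl⟩ := h
  exact ⟨⟨a, b, ha, hb, hab, rfl⟩, ⟨a, b, ha, hb, hab, rfl⟩⟩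

theorem exists_gap {y : X → ℝ} (hy : Function.Injective y) :
    ∃ ε : ℝ, 0 < ε ∧ ∀ v w, y v < y w → y v + 2 * ε < y w := by
  classical
  by_cases hX : ((Finset.univ : Finset (X × X)).filter (fun p => y p.1 < y p.2)).Nonempty
  · obtain ⟨p, hp, hmin⟩ := Finset.exists_min_image _ (fun p => y p.2 - y p.1) hX
    simp only [Finset.mem_filter, Finset.mem_univ, true_and] at hp hmin
    refine ⟨(y p.2 - y p.1) / 3, by linarith, fun v w hvw => ?_⟩
    have := hmin (v, w) hvw
    simp only at this
    linarith
  · refine ⟨1, one_pos, fun v w hvw => absurd ?_ hX⟩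
    exact ⟨(v, w), by simp [hvw]⟩

set_option maxHeartbeats 1000000 in
theorem geom (T : Triang D X) (f : X → Y) (hf : Function.Injective f) :
    ∃ pos : Y ⊕ D → ℝ × ℝ, ∀ a b a' b', (T.pieces f).Adj a b → (T.pieces f).Adj a' b' →
      a ≠ a' → a ≠ b' → b ≠ a' → b ≠ b' →
      Disjoint (segment ℝ (pos a) (pos b)) (segment ℝ (pos a') (pos b')) := by
  classical
  obtain ⟨y, col, S, hy, hS, hg, hd⟩ := T.sweep_out
  obtain ⟨ε, hε, hgap⟩ := exists_gap hy
  have hgap2 : ∀ v w, v ≠ w → y v + 2 * ε < y w ∨ y w + 2 * ε < y v := by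
    intro v w hvw
    rcases lt_or_gt_of_ne (fun e => hvw (hy e)) with h | h
    · exact Or.inl (hgap _ _ h)
    · exact Or.inr (hgap _ _ h)
  let up : D → Prop := fun d => y (T.vt d) < y (T.vt (T.α d))
  have upα : ∀ d, ¬ up d → up (T.α d) := by
    intro d h
    have h2 : y (T.vt d) ≠ y (T.vt (T.α d)) := fun e => T.loopless d (hy e)
    simp only [up, T.αα, not_lt] at h ⊢
    exact lt_of_le_of_ne h (Ne.symm h2)
  have upα' : ∀ d, up d → ¬ up (T.α d) := by
    intro d h
    simp only [up, T.αα, not_lt] at h ⊢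
    exact h.le
  let xc : D → ℕ := fun d => if up d then col d else col (T.α d)
  have xcα : ∀ d, xc (T.α d) = xc d := by
    intro d
    by_cases h : up d
    · simp [xc, h, upα' d h, T.αα]
    · simp [xc, h, upα d h]
  have xcS : ∀ d, xc d ∈ S (T.vt d) := by
    intro d
    by_cases h : up d
    · simp only [xc, h, if_true]; exact (hg d h).1
    · simp only [xc, h, if_false]
      have := (hg _ (upα d h)).2.1
      rwa [T.αα] at this
  have hpx : ∀ w, ∃ k, k ∈ S w := by
    intro w
    obtain ⟨d, rfl⟩ := T.surj w
    exact ⟨_, xcS d⟩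
  choose px hpx using hpx
  let vpos : X → ℝ × ℝ := fun w => ((px w : ℝ), y w)
  let bend : D → ℝ × ℝ := fun d =>
    ((xc d : ℝ), if up d then y (T.vt d) + ε else y (T.vt d) - ε)
  have bend2 : ∀ d, (up d → (bend d).2 = y (T.vt d) + ε) ∧ (¬ up d → (bend d).2 = y (T.vt d) - ε) := by
    intro d
    exact ⟨fun h => by simp [bend, h], fun h => by simp [bend, h]⟩
  let stub : D → Set (ℝ × ℝ) := fun d => segment ℝ (vpos (T.vt d)) (bend d)
  let mid : D → Set (ℝ × ℝ) := fun d => segment ℝ (bend d) (bend (T.α d))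
  have midα : ∀ d, mid (T.α d) = mid d := by
    intro d
    simp only [mid, T.αα]
    exact segment_symm ℝ _ _
  have stub2 : ∀ d z, z ∈ stub d → y (T.vt d) - ε ≤ z.2 ∧ z.2 ≤ y (T.vt d) + ε := by
    intro d z hz
    have h := (seg_coord hz).2
    by_cases hu : up d
    · rw [(bend2 d).1 hu, Set.uIcc_of_le (by simp only [vpos]; linarith)] at h
      simp only [vpos, Set.mem_Icc] at h
      constructor <;> linarith [h.1, h.2]
    · rw [(bend2 d).2 hu, Set.uIcc_of_ge (by simp only [vpos]; linarith)] at h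
      simp only [vpos, Set.mem_Icc] at h
      constructor <;> linarith [h.1, h.2]
  have stub1 : ∀ d z (k : ℕ), z ∈ stub d → z.1 = k → k ∈ S (T.vt d) := by
    intro d z k hz hk
    have h := (seg_coord hz).1
    rw [hk] at h
    have h' : k ∈ Set.uIcc (px (T.vt d)) (xc d) := by
      simp only [vpos, bend, Set.mem_uIcc, Nat.cast_le] at h ⊢
      exact h
    exact (hS _).uIcc_subset (hpx _) (xcS d) h'
  have stubU : ∀ d z, z ∈ stub d → z.2 = y (T.vt d) + ε → up d ∧ z.1 = xc d := by
    rintro d z ⟨a, b, ha, hb, hab, rfl⟩ h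
    by_cases hu : up d
    · refine ⟨hu, ?_⟩
      have h3 := (bend2 d).1 hu
      simp only [Prod.snd_add, Prod.smul_snd, smul_eq_mul, h3] at h
      have h4 : a * y (T.vt d) + b * (y (T.vt d) + ε) = y (T.vt d) + ε := h
      have : b = 1 := by
        have h5 : (b - 1) * ε = 0 := by
          have : a = 1 - b := by linarith
          subst this; linarith
        rcases mul_eq_zero.1 h5 with h | h <;> linarith
      have ha0 : a = 0 := by linarith
      subst this ha0
      simp [bend]
    · have h3 := (bend2 d).2 hu
      simp only [Prod.snd_add, Prod.smul_snd, smul_eq_mul, h3] at h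
      have h4 : a * y (T.vt d) + b * (y (T.vt d) - ε) = y (T.vt d) + ε := h
      have : a = 1 - b := by linarith
      subst this
      nlinarith
  have stubD : ∀ d z, z ∈ stub d → z.2 = y (T.vt d) - ε → ¬ up d ∧ z.1 = xc d := by
    rintro d z ⟨a, b, ha, hb, hab, rfl⟩ h
    by_cases hu : up d
    · have h3 := (bend2 d).1 hu
      simp only [Prod.snd_add, Prod.smul_snd, smul_eq_mul, h3] at h
      have h4 : a * y (T.vt d) + b * (y (T.vt d) + ε) = y (T.vt d) - ε := h
      have : a = 1 - b := by linarith
      subst this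
      nlinarith
    · refine ⟨hu, ?_⟩
      have h3 := (bend2 d).2 hu
      simp only [Prod.snd_add, Prod.smul_snd, smul_eq_mul, h3] at h
      have h4 : a * y (T.vt d) + b * (y (T.vt d) - ε) = y (T.vt d) - ε := h
      have : b = 1 := by
        have h5 : (b - 1) * ε = 0 := by
          have : a = 1 - b := by linarith
          subst this; linarith
        rcases mul_eq_zero.1 h5 with h | h <;> linarith
      have ha0 : a = 0 := by linarith
      subst this ha0
      simp [bend]
  -- facts on middle pieces
  have midc : ∀ d z, up d → z ∈ mid d → z.1 = col d ∧ y (T.vt d) + ε ≤ z.2 ∧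
      z.2 ≤ y (T.vt (T.α d)) - ε := by
    intro d z hu hz
    obtain ⟨h1, h2⟩ := seg_coord hz
    have e1 : (bend d).1 = col d := by simp [bend, xc, hu]
    have e2 : (bend (T.α d)).1 = col d := by
      simp only [bend, xcα]; simp [xc, hu]
    rw [e1, e2, Set.uIcc_self] at h1
    rw [(bend2 d).1 hu, (bend2 _).2 (upα' d hu),
      Set.uIcc_of_le (by linarith [hgap _ _ hu])] at h2
    exact ⟨h1, h2.1, h2.2⟩
  -- the three disjointness facts
  have ss : ∀ d d', T.vt d ≠ T.vt d' → Disjoint (stub d) (stub d') := by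
    intro d d' hne
    rw [Set.disjoint_left]
    intro z h1 h2
    have h1 := stub2 d z h1
    have h2 := stub2 d' z h2
    rcases hgap2 _ _ hne with h | h <;> linarith [h1.1, h1.2, h2.1, h2.2]
  have mm0 : ∀ d d', up d → up d' → d ≠ d' → Disjoint (mid d) (mid d') := by
    intro d d' hu hu' hne
    rw [Set.disjoint_left]
    intro z h1 h2
    obtain ⟨a1, a2, a3⟩ := midc d z hu h1
    obtain ⟨b1, b2, b3⟩ := midc d' z hu' h2
    rw [a1] at b1
    rcases hd d d' hu hu' hne (by exact_mod_cast b1) with h | h <;> linarith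
  have mm : ∀ d d', d ≠ d' → d ≠ T.α d' → Disjoint (mid d) (mid d') := by
    intro d d' h1 h2
    by_cases hu : up d <;> by_cases hu' : up d'
    · exact mm0 d d' hu hu' h1
    · rw [← midα d']; exact mm0 d _ hu (upα _ hu') h2
    · rw [← midα d]; exact mm0 _ d' (upα _ hu) hu' (fun e => h2 (by rw [← e, T.αα]))
    · rw [← midα d, ← midα d']
      exact mm0 _ _ (upα _ hu) (upα _ hu') (fun e => h1 (by rw [← T.αα d, e, T.αα]))
  have sm0 : ∀ d g, up g → d ≠ g → d ≠ T.α g → Disjoint (stub d) (mid g) := by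
    intro d g hu h1 h2
    rw [Set.disjoint_left]
    intro z hz hz'
    obtain ⟨a1, a2, a3⟩ := midc g z hu hz'
    have hw := stub1 d z _ hz a1
    have hr := stub2 d z hz
    have hnb := (hg g hu).2.2 _ hw
    have hgu : y (T.vt g) < y (T.vt (T.α g)) := hu
    rcases le_or_gt (y (T.vt d)) (y (T.vt g)) with hle | hlt
    · have e1 : y (T.vt d) = y (T.vt g) := by linarith [hr.2]
      obtain ⟨u1, u2⟩ := stubU d z hz (by linarith [hr.2])
      have hcc : col d = col g := by
        rw [a1] at u2
        have : col g = xc d := by exact_mod_cast u2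
        simpa [xc, u1] using this.symm
      have u1' : y (T.vt d) < y (T.vt (T.α d)) := u1
      rcases hd d g u1 hu h1 hcc with h | h <;> linarith
    · have hge : y (T.vt (T.α g)) ≤ y (T.vt d) := by
        by_contra hh
        exact hnb ⟨hlt, lt_of_not_ge hh⟩
      have e1 : y (T.vt d) = y (T.vt (T.α g)) := by linarith [hr.1]
      obtain ⟨u1, u2⟩ := stubD d z hz (by linarith [hr.1])
      have hcc : col (T.α d) = col g := by
        rw [a1] at u2
        have : col g = xc d := by exact_mod_cast u2
        simpa [xc, u1] using this.symm
      have u1' := upα d u1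
      have u1'' : y (T.vt (T.α d)) < y (T.vt (T.α (T.α d))) := u1'
      have hne : T.α d ≠ g := fun e => h2 (by rw [← e, T.αα])
      have := hd _ _ u1' hu hne hcc
      rw [T.αα] at this u1''
      rcases this with h | h <;> linarith
  have sm : ∀ d g, d ≠ g → d ≠ T.α g → Disjoint (stub d) (mid g) := by
    intro d g h1 h2
    by_cases hu : up g
    · exact sm0 d g hu h1 h2
    · rw [← midα g]
      exact sm0 d _ (upα g hu) h2 (by rw [T.αα]; exact h1)
  let pos : Y ⊕ D → ℝ × ℝ := fun n => match n with
    | Sum.inl v => Function.extend f vpos 0 v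
    | Sum.inr d => bend d
  have posv : ∀ x, pos (Sum.inl (f x)) = vpos x := fun x => hf.extend_apply _ _ _
  refine ⟨pos, ?_⟩
  have key : ∀ a b, (T.pieces f).Adj a b →
      (∃ d, segment ℝ (pos a) (pos b) = stub d ∧
        ((a = Sum.inl (f (T.vt d)) ∧ b = Sum.inr d) ∨ (b = Sum.inl (f (T.vt d)) ∧ a = Sum.inr d))) ∨
      (∃ d, segment ℝ (pos a) (pos b) = mid d ∧ a = Sum.inr d ∧ b = Sum.inr (T.α d)) := by
    intro a b hab
    rw [pieces, SimpleGraph.fromRel_adj] at hab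
    rcases hab.2 with (⟨d, rfl, rfl⟩ | ⟨d, rfl, rfl⟩) | (⟨d, rfl, rfl⟩ | ⟨d, rfl, rfl⟩)
    · exact Or.inl ⟨d, by rw [posv], Or.inl ⟨rfl, rfl⟩⟩
    · exact Or.inr ⟨d, rfl, rfl, rfl⟩
    · exact Or.inl ⟨d, by rw [posv, segment_symm], Or.inr ⟨rfl, rfl⟩⟩
    · refine Or.inr ⟨T.α d, ?_, rfl, by rw [T.αα]⟩
      simp only [mid, T.αα, pos]
  intro a b a' b' hab hab' h1 h2 h3 h4
  rcases key a b hab with ⟨d, e, hd⟩ | ⟨d, e, rfl, rfl⟩ <;>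
    rcases key a' b' hab' with ⟨d', e', hd'⟩ | ⟨d', e', rfl, rfl⟩ <;> rw [e, e']
  · apply ss
    intro hv
    rcases hd with ⟨rfl, rfl⟩ | ⟨rfl, rfl⟩ <;> rcases hd' with ⟨rfl, rfl⟩ | ⟨rfl, rfl⟩
    · exact h1 (by rw [hv])
    · exact h2 (by rw [hv])
    · exact h3 (by rw [hv])
    · exact h4 (by rw [hv])
  · rcases hd with ⟨rfl, rfl⟩ | ⟨rfl, rfl⟩ <;> apply sm <;> rintro rfl
    · exact h3 rfl
    · exact h4 rfl
    · exact h1 rfl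
    · exact h2 rfl
  · rcases hd' with ⟨rfl, rfl⟩ | ⟨rfl, rfl⟩ <;> apply Disjoint.symm <;> apply sm <;> rintro rfl
    · exact h2 rfl
    · exact h4 rfl
    · exact h1 rfl
    · exact h3 rfl
  · apply mm
    · rintro rfl; exact h1 rfl
    · rintro rfl; exact h2 rfl

end Triang
end WBW

namespace WBW

/-- Twice the signed area of a triangle. -/
def det3 (p q r : ℝ × ℝ) : ℝ := (q.1 - p.1) * (r.2 - p.2) - (q.2 - p.2) * (r.1 - p.1)

theorem det3_seg {a b z : ℝ × ℝ} (h : z ∈ segment ℝ a b) : det3 a b z = 0 := by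
  obtain ⟨s, t, hs, ht, hst, rfl⟩ := h
  have : s = 1 - t := by linarith
  subst this
  simp only [det3, Prod.fst_add, Prod.smul_fst, Prod.snd_add, Prod.smul_snd, smul_eq_mul]
  ring

theorem seg_unique {a b c d z w : ℝ × ℝ} (h : det3 a b c ≠ 0) (hz : z ∈ segment ℝ a b)
    (hw : w ∈ segment ℝ a b) (hz' : z ∈ segment ℝ c d) (hw' : w ∈ segment ℝ c d) : z = w := by
  obtain ⟨s0, s, -, -, hs, e1⟩ := hz
  obtain ⟨t0, t, -, -, ht, e2⟩ := hw
  obtain ⟨r0, r, -, -, hr, e3⟩ := hz'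
  obtain ⟨u0, u, -, -, hu, e4⟩ := hw'
  obtain rfl : s0 = 1 - s := by linarith
  obtain rfl : t0 = 1 - t := by linarith
  obtain rfl : r0 = 1 - r := by linarith
  obtain rfl : u0 = 1 - u := by linarith
  by_cases hst : s = t
  · subst hst; rw [← e1, ← e2]
  exfalso
  apply h
  obtain ⟨a1, a2⟩ := a
  obtain ⟨b1, b2⟩ := b
  obtain ⟨c1, c2⟩ := c
  obtain ⟨d1, d2⟩ := d
  obtain ⟨z1, z2⟩ := z
  obtain ⟨w1, w2⟩ := w
  simp only [Prod.smul_mk, Prod.mk_add_mk, smul_eq_mul, Prod.mk.injEq] at e1 e2 e3 e4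
  obtain ⟨e11, e12⟩ := e1
  obtain ⟨e21, e22⟩ := e2
  obtain ⟨e31, e32⟩ := e3
  obtain ⟨e41, e42⟩ := e4
  simp only [det3]
  -- `(t - s) (b - a) = (u - r) (d - c)` and `c - a = s (b - a) - r (d - c)`
  have f1 : (t - s) * (b1 - a1) = (u - r) * (d1 - c1) := by linarith
  have f2 : (t - s) * (b2 - a2) = (u - r) * (d2 - c2) := by linarith
  have g1 : c1 - a1 = s * (b1 - a1) - r * (d1 - c1) := by linarith
  have g2 : c2 - a2 = s * (b2 - a2) - r * (d2 - c2) := by linarith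
  rw [g1, g2]
  have hts : t - s ≠ 0 := fun h => hst (by linarith)
  apply mul_left_cancel₀ hts
  linear_combination (-r * (d2 - c2)) * f1 + r * (d1 - c1) * f2

theorem eventually_not_mem_finite {S : Set ℝ} (hS : S.Finite) :
    ∀ᶠ t in nhdsWithin (0 : ℝ) (Set.Ioi 0), t ∉ S := by
  have h : (S \ {0})ᶜ ∈ nhds (0 : ℝ) :=
    (hS.subset Set.sdiff_subset).isClosed.isOpen_compl.mem_nhds (by simp)
  filter_upwards [mem_nhdsWithin_of_mem_nhds h, self_mem_nhdsWithin] with t ht ht0 hh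
  exact ht ⟨hh, by simpa using (ne_of_gt ht0)⟩

theorem finite_quadratic {A B C : ℝ} (hC : C ≠ 0) : {t : ℝ | A + B * t + C * t ^ 2 = 0}.Finite := by
  classical
  let p : Polynomial ℝ := Polynomial.C A + Polynomial.C B * Polynomial.X +
    Polynomial.C C * Polynomial.X ^ 2
  have hp : p ≠ 0 := by
    intro h
    have : p.coeff 2 = C := by
      simp [p, Polynomial.coeff_C, Polynomial.coeff_X]
    rw [h] at this
    exact hC (by simpa using this.symm)
  apply (p.roots.toFinset.finite_toSet).subset
  intro t ht
  simp only [Finset.mem_coe, Multiset.mem_toFinset, Polynomial.mem_roots hp, Polynomial.IsRoot.def]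
  have ht : A + B * t + C * t ^ 2 = 0 := ht
  simpa [p] using ht

theorem perturb {I : Type} [Finite I] (c : I → ℝ × ℝ) : ∃ p : I → ℝ × ℝ,
    Function.Injective p ∧
    (∀ i j k, i ≠ j → i ≠ k → j ≠ k → det3 (p i) (p j) (p k) ≠ 0) ∧
    ∀ i j k l, Disjoint (segment ℝ (c i) (c j)) (segment ℝ (c k) (c l)) →
      Disjoint (segment ℝ (p i) (p j)) (segment ℝ (p k) (p l)) := by
  classical
  obtain ⟨n, ⟨eq⟩⟩ := Finite.exists_equiv_fin I
  let s : I → ℝ := fun i => ((eq i : ℕ) : ℝ)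
  have hs : ∀ i j, i ≠ j → s i - s j ≠ 0 := by
    intro i j hij h
    apply hij
    apply eq.injective
    apply Fin.ext
    have : s i = s j := by linarith
    simp only [s] at this; exact_mod_cast this
  let P : ℝ → I → ℝ × ℝ := fun t i => c i + t • (s i, s i ^ 2)
  have hcont : ∀ i, Filter.Tendsto (fun t => P t i) (nhdsWithin 0 (Set.Ioi 0)) (nhds (c i)) := by
    intro i
    have : Continuous (fun t => P t i) := by fun_prop
    have h := this.tendsto 0
    have e : P 0 i = c i := by simp [P]
    rw [e] at h
    exact h.mono_left nhdsWithin_le_nhds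
  have h1 : ∀ i j, i ≠ j → ∀ᶠ t in nhdsWithin (0 : ℝ) (Set.Ioi 0), P t i ≠ P t j := by
    intro i j hij
    have hfin : ({((c j).1 - (c i).1) / (s i - s j)} : Set ℝ).Finite := Set.finite_singleton _
    filter_upwards [eventually_not_mem_finite hfin] with t ht h
    apply ht
    have h' := congrArg Prod.fst h
    simp only [P, Prod.fst_add, Prod.smul_fst, smul_eq_mul] at h'
    rw [Set.mem_singleton_iff, eq_div_iff (hs i j hij)]
    linarith
  have h2 : ∀ i j k, i ≠ j → i ≠ k → j ≠ k →
      ∀ᶠ t in nhdsWithin (0 : ℝ) (Set.Ioi 0), det3 (P t i) (P t j) (P t k) ≠ 0 := by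
    intro i j k hij hik hjk
    have hC : (s i - s j) * (s i - s k) * (s j - s k) ≠ 0 :=
      mul_ne_zero (mul_ne_zero (hs _ _ hij) (hs _ _ hik)) (hs _ _ hjk)
    have hfin := finite_quadratic (A := det3 (c i) (c j) (c k))
      (B := ((c j).1 - (c i).1) * (s k ^ 2 - s i ^ 2) + (s j - s i) * ((c k).2 - (c i).2)
        - ((c j).2 - (c i).2) * (s k - s i) - (s j ^ 2 - s i ^ 2) * ((c k).1 - (c i).1))
      (C := -((s i - s j) * (s i - s k) * (s j - s k))) (neg_ne_zero.2 hC)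
    filter_upwards [eventually_not_mem_finite hfin] with t ht h
    apply ht
    rw [← h]
    simp only [det3, P, Prod.fst_add, Prod.smul_fst, Prod.snd_add, Prod.smul_snd, smul_eq_mul]
    ring
  have h3 : ∀ i j k l, Disjoint (segment ℝ (c i) (c j)) (segment ℝ (c k) (c l)) →
      ∀ᶠ t in nhdsWithin (0 : ℝ) (Set.Ioi 0),
        Disjoint (segment ℝ (P t i) (P t j)) (segment ℝ (P t k) (P t l)) := by
    intro i j k l hd
    have cp : ∀ a b : ℝ × ℝ, IsCompact (segment ℝ a b) := by
      intro a b
      rw [segment_eq_image_lineMap]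
      exact isCompact_Icc.image (by fun_prop)
    obtain ⟨δ, hδ, hd2⟩ := hd.exists_thickenings (cp _ _) (cp _ _).isClosed
    have near : ∀ i (A : Set (ℝ × ℝ)), c i ∈ A → ∀ᶠ t in nhdsWithin (0 : ℝ) (Set.Ioi 0),
        P t i ∈ Metric.thickening δ A := by
      intro i A hA
      exact (hcont i) (Metric.isOpen_thickening.mem_nhds (Metric.self_subset_thickening hδ A hA))
    filter_upwards [near i _ (left_mem_segment ℝ (c i) (c j)),
      near j _ (right_mem_segment ℝ (c i) (c j)), near k _ (left_mem_segment ℝ (c k) (c l)),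
      near l _ (right_mem_segment ℝ (c k) (c l))] with t t1 t2 t3 t4
    exact hd2.mono (((convex_segment _ _).thickening δ).segment_subset t1 t2)
      (((convex_segment _ _).thickening δ).segment_subset t3 t4)
  have hall : ∀ᶠ t in nhdsWithin (0 : ℝ) (Set.Ioi 0),
      (∀ i j, i ≠ j → P t i ≠ P t j) ∧
      (∀ i j k, i ≠ j → i ≠ k → j ≠ k → det3 (P t i) (P t j) (P t k) ≠ 0) ∧
      ∀ i j k l, Disjoint (segment ℝ (c i) (c j)) (segment ℝ (c k) (c l)) →
        Disjoint (segment ℝ (P t i) (P t j)) (segment ℝ (P t k) (P t l)) := by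
    simp only [Filter.eventually_and, Filter.eventually_all]
    exact ⟨h1, h2, h3⟩
  obtain ⟨t, ht1, ht2, ht3⟩ := hall.exists
  refine ⟨P t, ?_, ht2, ht3⟩
  intro i j h
  by_contra hij
  exact ht1 i j hij h

end WBW

namespace WBW

theorem infix_pair {N : Type} {a b i j : N} {r : List N} :
    [i, j] <:+: a :: b :: r ↔ (i = a ∧ j = b) ∨ [i, j] <:+: b :: r := by
  rw [List.infix_cons_iff, List.cons_prefix_cons, List.cons_prefix_cons]
  simp

/-- The polygonal line with corners `q n`, `n ∈ L`. -/
def poly {N : Type} (q : N → ℝ × ℝ) (L : List N) : Set (ℝ × ℝ) :=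
  {z | ∃ i j, [i, j] <:+: L ∧ z ∈ segment ℝ (q i) (q j)}

theorem poly_cons {N : Type} (q : N → ℝ × ℝ) (a b : N) (r : List N) :
    poly q (a :: b :: r) = segment ℝ (q a) (q b) ∪ poly q (b :: r) := by
  ext z
  constructor
  · rintro ⟨i, j, h, hz⟩
    rcases infix_pair.1 h with ⟨rfl, rfl⟩ | h
    · exact Or.inl hz
    · exact Or.inr ⟨i, j, h, hz⟩
  · rintro (hz | ⟨i, j, h, hz⟩)
    · exact ⟨a, b, infix_pair.2 (Or.inl ⟨rfl, rfl⟩), hz⟩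
    · exact ⟨i, j, infix_pair.2 (Or.inr h), hz⟩

theorem poly_singleton {N : Type} (q : N → ℝ × ℝ) (a : N) : poly q [a] = ∅ := by
  ext z
  simp only [Set.mem_empty_iff_false, iff_false]
  rintro ⟨i, j, h, -⟩
  have := h.length_le
  simp at this

theorem trans_injective {E : Type} [TopologicalSpace E] {a b c : E} (γ : Path a b) (γ' : Path b c)
    (h : Function.Injective γ) (h' : Function.Injective γ')
    (hh : ∀ z, z ∈ Set.range γ → z ∈ Set.range γ' → z = b) :
    Function.Injective (γ.trans γ') := by
  have key : ∀ s t : unitInterval, (s : ℝ) ≤ 1 / 2 → ¬ (t : ℝ) ≤ 1 / 2 →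
      (γ.trans γ') s ≠ (γ.trans γ') t := by
    intro s t hs ht e
    rw [Path.trans_apply, Path.trans_apply, dif_pos hs, dif_neg ht] at e
    have e1 := hh _ ⟨_, rfl⟩ ⟨_, e.symm⟩
    rw [e1] at e
    have e2 := h' ((γ'.source).trans e)
    have e3 : (0 : ℝ) = 2 * (t : ℝ) - 1 := congrArg Subtype.val e2
    exact ht (by linarith)
  intro s t e
  by_cases hs : (s : ℝ) ≤ 1 / 2 <;> by_cases ht : (t : ℝ) ≤ 1 / 2
  · rw [Path.trans_apply, Path.trans_apply, dif_pos hs, dif_pos ht] at e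
    have := congrArg Subtype.val (h e)
    apply Subtype.ext
    simp only at this
    linarith
  · exact absurd e (key s t hs ht)
  · exact absurd e.symm (key t s ht hs)
  · rw [Path.trans_apply, Path.trans_apply, dif_neg hs, dif_neg ht] at e
    have := congrArg Subtype.val (h' e)
    apply Subtype.ext
    simp only at this
    linarith

theorem exists_segment_path {a b : ℝ × ℝ} (hab : a ≠ b) :
    ∃ γ : Path a b, Function.Injective γ ∧ Set.range γ = segment ℝ a b := by
  refine ⟨⟨⟨fun t => AffineMap.lineMap a b (t : ℝ), by fun_prop⟩, by simp, by simp⟩, ?_, ?_⟩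
  · intro s t e
    apply Subtype.ext
    exact AffineMap.lineMap_injective ℝ hab e
  · rw [segment_eq_image_lineMap]
    ext z
    constructor
    · rintro ⟨t, rfl⟩; exact ⟨t, t.2, rfl⟩
    · rintro ⟨t, ht, rfl⟩; exact ⟨⟨t, ht⟩, rfl⟩

theorem exists_arc {N : Type} (q : N → ℝ × ℝ) : ∀ (r : List N) (a b : N),
    (a :: b :: r).Nodup →
    (∀ i ∈ a :: b :: r, ∀ j ∈ a :: b :: r, i ≠ j → q i ≠ q j) →
    (∀ i ∈ a :: b :: r, ∀ j ∈ a :: b :: r, ∀ k ∈ a :: b :: r, i ≠ j → i ≠ k → j ≠ k →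
      det3 (q i) (q j) (q k) ≠ 0) →
    (∀ i j k l, [i, j] <:+: a :: b :: r → [k, l] <:+: a :: b :: r → i ≠ k → i ≠ l → j ≠ k →
      j ≠ l → Disjoint (segment ℝ (q i) (q j)) (segment ℝ (q k) (q l))) →
    ∀ z, (a :: b :: r).getLast? = some z → ∃ γ : Path (q a) (q z), Function.Injective γ ∧
      Set.range γ = poly q (a :: b :: r) := by
  intro r
  induction r with
  | nil =>
    intro a b hnd hinj _ _ z hz
    obtain rfl : b = z := by simpa using hz
    have hab : a ≠ b := by simpa using hnd
    obtain ⟨γ, h1, h2⟩ := exists_segment_path (hinj a (by simp) b (by simp) hab)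
    refine ⟨γ, h1, ?_⟩
    rw [h2, poly_cons, poly_singleton, Set.union_empty]
  | cons c r ih =>
    intro a b hnd hinj hgp hd z0 hz0
    have hnd' : (b :: c :: r).Nodup := (List.nodup_cons.1 hnd).2
    have ha : a ∉ b :: c :: r := (List.nodup_cons.1 hnd).1
    have hb : b ∉ c :: r := (List.nodup_cons.1 hnd').1
    have hsub : ∀ i, i ∈ b :: c :: r → i ∈ a :: b :: c :: r := fun i hi => List.mem_cons_of_mem _ hi
    obtain ⟨γ', h1, h2⟩ := ih b c hnd'
      (fun i hi j hj => hinj i (hsub i hi) j (hsub j hj))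
      (fun i hi j hj k hk => hgp i (hsub i hi) j (hsub j hj) k (hsub k hk))
      (fun i j k l hij hkl => hd i j k l (infix_pair.2 (Or.inr hij)) (infix_pair.2 (Or.inr hkl)))
      z0 (by simpa using hz0)
    have hab : a ≠ b := fun e => ha (by simp [e])
    have hac : a ≠ c := fun e => ha (by simp [e])
    have hbc : b ≠ c := fun e => hb (by simp [e])
    obtain ⟨γ, g1, g2⟩ := exists_segment_path (hinj a (by simp) b (by simp) hab)
    refine ⟨γ.trans γ', trans_injective γ γ' g1 h1 ?_, ?_⟩
    · intro z hz hz'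
      rw [g2] at hz
      rw [h2, poly_cons] at hz'
      rcases hz' with hz' | ⟨k, l, hkl, hz'⟩
      · apply seg_unique (hgp a (by simp) b (by simp) c (by simp) hab hac hbc) (d := q b) hz
          (right_mem_segment ℝ _ _)
        · rw [segment_symm]; exact hz'
        · exact right_mem_segment ℝ _ _
      · exfalso
        have hk : k ∈ c :: r := hkl.subset (by simp)
        have hl : l ∈ c :: r := hkl.subset (by simp)
        have hdd := hd a b k l (infix_pair.2 (Or.inl ⟨rfl, rfl⟩))
          (infix_pair.2 (Or.inr (infix_pair.2 (Or.inr hkl))))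
          (fun e => ha (e ▸ List.mem_cons_of_mem _ hk)) (fun e => ha (e ▸ List.mem_cons_of_mem _ hl))
          (fun e => hb (e ▸ hk)) (fun e => hb (e ▸ hl))
        exact Set.disjoint_left.1 hdd hz hz'
    · rw [Path.trans_range, g2, h2, poly_cons q a b]

/-- The plane embeds in the sphere. -/
theorem exists_plane_to_sphere : ∃ ι : ℝ × ℝ → (Metric.sphere (0 : EuclideanSpace ℝ (Fin 3)) 1),
    Continuous ι ∧ Function.Injective ι := by
  let f : ℝ × ℝ → EuclideanSpace ℝ (Fin 3) := fun z => !₂[z.1, z.2, 1]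
  have hf : Continuous f := by fun_prop
  have hne : ∀ z, f z ≠ 0 := by
    intro z h
    have := congrArg (fun v : EuclideanSpace ℝ (Fin 3) => v 2) h
    simp [f] at this
  have hn : ∀ z, ‖f z‖ ≠ 0 := fun z => norm_ne_zero_iff.2 (hne z)
  refine ⟨fun z => ⟨‖f z‖⁻¹ • f z, ?_⟩, ?_, ?_⟩
  · rw [mem_sphere_zero_iff_norm, norm_smul, norm_inv, norm_norm]
    exact inv_mul_cancel₀ (hn z)
  · apply Continuous.subtype_mk
    exact (hf.norm.inv₀ hn).smul hf
  · intro z w h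
    have h := congrArg Subtype.val h
    simp only at h
    have h2 := congrArg (fun v : EuclideanSpace ℝ (Fin 3) => v 2) h
    have h3 : ‖f z‖⁻¹ = ‖f w‖⁻¹ := by simpa [f] using h2
    rw [h3] at h
    have h4 : f z = f w := smul_right_injective _ (inv_ne_zero (hn w)) h
    apply Prod.ext
    · simpa [f] using congrArg (fun v : EuclideanSpace ℝ (Fin 3) => v 0) h4
    · simpa [f] using congrArg (fun v : EuclideanSpace ℝ (Fin 3) => v 1) h4

end WBW

namespace WBW

theorem pair_next_unique {N : Type} {L : List N} (hL : L.Nodup) {k m m' : N}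
    (h : [k, m] <:+: L) (h' : [k, m'] <:+: L) : m = m' := by
  induction L with
  | nil => simp at h
  | cons a L ih =>
    cases L with
    | nil => have := h.length_le; simp at this
    | cons b r =>
      have ha := (List.nodup_cons.1 hL).1
      rcases infix_pair.1 h with ⟨rfl, rfl⟩ | h1 <;> rcases infix_pair.1 h' with ⟨h2, rfl⟩ | h2
      · rfl
      · exact absurd (h2.subset (by simp)) ha
      · subst h2; exact absurd (h1.subset (by simp)) ha
      · exact ih (List.nodup_cons.1 hL).2 h1 h2

theorem pair_prev_unique {N : Type} {L : List N} (hL : L.Nodup) {k m m' : N}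
    (h : [m, k] <:+: L) (h' : [m', k] <:+: L) : m = m' := by
  have h1 := List.reverse_infix.2 h
  have h2 := List.reverse_infix.2 h'
  simp only [List.reverse_cons, List.reverse_nil, List.nil_append, List.singleton_append] at h1 h2
  exact pair_next_unique (List.nodup_reverse.2 hL) h1 h2

/-- `m` follows (or precedes) `k` in the list `L`. -/
def nextTo {N : Type} (L : List N) (b : Bool) (k m : N) : Prop :=
  if b then [k, m] <:+: L else [m, k] <:+: L

theorem nextTo_unique {N : Type} {L : List N} (hL : L.Nodup) {b : Bool} {k m m' : N}
    (h : nextTo L b k m) (h' : nextTo L b k m') : m = m' := by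
  cases b
  · exact pair_prev_unique hL (by simpa [nextTo] using h) (by simpa [nextTo] using h')
  · exact pair_next_unique hL (by simpa [nextTo] using h) (by simpa [nextTo] using h')

theorem chain_pair {N : Type} {K : SimpleGraph N} {L : List N} (hL : L.IsChain K.Adj) {i j : N}
    (h : [i, j] <:+: L) : K.Adj i j := by
  obtain ⟨l₂, l₃, rfl⟩ := h
  have := hL.left_of_append.right_of_append
  simpa using this

theorem nextTo_adj {N : Type} {K : SimpleGraph N} {L : List N} (hL : L.IsChain K.Adj) {b : Bool}
    {k m : N} (h : nextTo L b k m) : K.Adj k m ∧ k ∈ L ∧ m ∈ L := by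
  cases b
  · have h : [m, k] <:+: L := by simpa [nextTo] using h
    exact ⟨(chain_pair hL h).symm, h.subset (by simp), h.subset (by simp)⟩
  · have h : [k, m] <:+: L := by simpa [nextTo] using h
    exact ⟨chain_pair hL h, h.subset (by simp), h.subset (by simp)⟩

set_option maxHeartbeats 1000000 in
theorem exists_drawing {V N : Type} [Finite V] [Finite N] (K : SimpleGraph N) (pos : N → ℝ × ℝ)
    (hK : ∀ a b a' b', K.Adj a b → K.Adj a' b' → a ≠ a' → a ≠ b' → b ≠ a' → b ≠ b' →
      Disjoint (segment ℝ (pos a) (pos b)) (segment ℝ (pos a') (pos b')))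
    (G : SimpleGraph V) (real : V → N) (hreal : Function.Injective real)
    (hrr : ∀ v w, ¬ K.Adj (real v) (real w)) (path : Sym2 V → List N)
    (hp : ∀ e ∈ G.edgeSet, (path e).Nodup ∧ (path e).IsChain K.Adj ∧ ∃ x y, e = s(x, y) ∧
      (path e).head? = some (real x) ∧ (path e).getLast? = some (real y) ∧
      ∀ v, real v ∈ path e → v = x ∨ v = y) :
    ∃ Dr : Drawing G, ∀ e ∈ G.edgeSet, (crossingSet Dr e).Finite ∧ (crossingSet Dr e).ncard ≤
      4 * {q : N × Sym2 V | q.2 ∈ G.edgeSet ∧ q.2 ≠ e ∧ q.1 ∉ Set.range real ∧ q.1 ∈ path e ∧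
        q.1 ∈ path q.2}.ncard := by
  classical
  obtain ⟨ι, hι, ιinj⟩ : ∃ ι : ℝ × ℝ → unitSphere, Continuous ι ∧ Function.Injective ι :=
    exists_plane_to_sphere
  let c : V ⊕ (Sym2 V × N) → ℝ × ℝ := fun i => match i with
    | Sum.inl v => pos (real v)
    | Sum.inr a => pos a.2
  obtain ⟨p, pinj, pgp, pdis⟩ := perturb c
  let lbl : Sym2 V → N → V ⊕ (Sym2 V × N) := fun e n =>
    if h : ∃ v, real v = n then Sum.inl h.choose else Sum.inr (e, n)
  have lblr : ∀ e v, lbl e (real v) = Sum.inl v := by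
    intro e v
    have h : ∃ w, real w = real v := ⟨v, rfl⟩
    simp only [lbl]
    rw [dif_pos h]
    exact congrArg Sum.inl (hreal h.choose_spec)
  have lbln : ∀ e n, n ∉ Set.range real → lbl e n = Sum.inr (e, n) := by
    intro e n h
    simp only [lbl]
    rw [dif_neg (by simpa using h)]
  have lblc : ∀ e n, c (lbl e n) = pos n := by
    intro e n
    by_cases h : n ∈ Set.range real
    · obtain ⟨v, rfl⟩ := h; rw [lblr]
    · rw [lbln e n h]
  have lblinj : ∀ e e' n n', lbl e n = lbl e' n' → n = n' := by
    intro e e' n n' h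
    by_cases h1 : n ∈ Set.range real <;> by_cases h2 : n' ∈ Set.range real
    · obtain ⟨v, rfl⟩ := h1; obtain ⟨w, rfl⟩ := h2
      rw [lblr, lblr] at h; rw [Sum.inl.inj h]
    · obtain ⟨v, rfl⟩ := h1
      rw [lblr, lbln _ _ h2] at h; cases h
    · obtain ⟨v, rfl⟩ := h2
      rw [lblr, lbln _ _ h1] at h; cases h
    · rw [lbln _ _ h1, lbln _ _ h2] at h
      exact congrArg Prod.snd (Sum.inr.inj h)
  let q : Sym2 V → N → ℝ × ℝ := fun e n => p (lbl e n)
  have qdis : ∀ e e' a b a' b', K.Adj a b → K.Adj a' b' → a ≠ a' → a ≠ b' → b ≠ a' → b ≠ b' →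
      Disjoint (segment ℝ (q e a) (q e b)) (segment ℝ (q e' a') (q e' b')) := by
    intro e e' a b a' b' h1 h2 h3 h4 h5 h6
    apply pdis
    rw [lblc, lblc, lblc, lblc]
    exact hK a b a' b' h1 h2 h3 h4 h5 h6
  have harc : ∀ e, ∃ γ : C(Set.Icc (0 : ℝ) 1, ℝ × ℝ), e ∈ G.edgeSet → Function.Injective γ ∧
      Set.range γ = poly (q e) (path e) ∧ ∃ x y, e = s(x, y) ∧
        (γ ⟨0, Set.mem_Icc.mpr (by norm_num)⟩ = p (Sum.inl x) ∧
        γ ⟨1, Set.mem_Icc.mpr (by norm_num)⟩ = p (Sum.inl y)) ∧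
        ∀ v, real v ∈ path e → v = x ∨ v = y := by
    intro e
    by_cases he : e ∈ G.edgeSet
    · obtain ⟨hnd, hch, x, y, hxy, hx, hy, hv⟩ := hp e he
      have hne : x ≠ y := by
        rintro rfl
        rw [hxy] at he
        exact G.loopless.irrefl x he
      obtain ⟨a, b, r, hL⟩ : ∃ a b r, path e = a :: b :: r := by
        rcases hL : path e with _ | ⟨a, _ | ⟨b, r⟩⟩
        · rw [hL] at hx; simp at hx
        · rw [hL] at hx hy
          simp only [List.head?_cons, Option.some.injEq, List.getLast?_singleton] at hx hy
          exact absurd (hreal (hx.symm.trans hy)) hne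
        · exact ⟨a, b, r, rfl⟩
      have ha : a = real x := by rw [hL] at hx; simpa using hx
      rw [hL] at hnd hch hy
      obtain ⟨γ, h1, h2⟩ := exists_arc (q e) r a b hnd
        (fun i _ j _ hij h => hij (lblinj _ _ _ _ (pinj h)))
        (fun i _ j _ k _ hij hik hjk => pgp _ _ _ (fun h => hij (lblinj _ _ _ _ h))
          (fun h => hik (lblinj _ _ _ _ h)) (fun h => hjk (lblinj _ _ _ _ h)))
        (fun i j k l hij hkl => qdis e e i j k l (chain_pair hch hij) (chain_pair hch hkl))
        (real y) hy
      refine ⟨γ.toContinuousMap, fun _ => ⟨h1, by rw [hL]; exact h2, x, y, hxy, ⟨?_, ?_⟩, hv⟩⟩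
      · have h3 : q e a = p (Sum.inl x) := by simp only [q]; rw [ha, lblr]
        exact γ.source.trans h3
      · have h3 : q e (real y) = p (Sum.inl y) := by simp only [q]; rw [lblr]
        exact γ.target.trans h3
    · exact ⟨⟨fun _ => 0, continuous_const⟩, fun h => absurd h he⟩
  choose γ hγ using harc
  let Dr : Drawing G :=
    { vmap := fun v => ι (p (Sum.inl v))
      vmap_inj := fun v w h => Sum.inl.inj (pinj (ιinj h))
      arc := fun e => ⟨fun t => ι (γ e t), hι.comp (γ e).continuous⟩
      arc_inj := fun e he s t h => (hγ e he).1 (ιinj h)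
      arc_ends := by
        intro e he
        obtain ⟨h1, h2, x, y, hxy, ⟨hx, hy⟩, hv⟩ := hγ e he
        simp only [ContinuousMap.coe_mk]
        rw [hx, hy, hxy]
        rfl
      interior_avoids := by
        rintro e he t ht0 ht1 ⟨v, hv⟩
        have hv : p (Sum.inl v) = γ e t := ιinj hv
        obtain ⟨h1, h2, x, y, hxy, ⟨hx, hy⟩, hv'⟩ := hγ e he
        have hmem : γ e t ∈ poly (q e) (path e) := h2 ▸ ⟨t, rfl⟩
        have hvx : v ≠ x := by
          rintro rfl
          rw [← hx] at hv
          exact ht0 (congrArg Subtype.val (h1 hv)).symm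
        have hvy : v ≠ y := by
          rintro rfl
          rw [← hy] at hv
          exact ht1 (congrArg Subtype.val (h1 hv)).symm
        obtain ⟨i, j, hij, hz⟩ := hmem
        obtain ⟨hnd, hch, -⟩ := hp e he
        have hadj := chain_pair hch hij
        have hlab : ∀ n ∈ path e, lbl e n ≠ Sum.inl v := by
          intro n hn hh
          rw [← lblr e v] at hh
          have := lblinj _ _ _ _ hh
          rw [this] at hn
          rcases hv' v hn with h | h
          · exact hvx h
          · exact hvy h
        rw [← hv] at hz
        exact pgp _ _ _ (fun h => hadj.ne (lblinj _ _ _ _ h)) (hlab i (hij.subset (by simp)))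
          (hlab j (hij.subset (by simp))) (det3_seg hz) }
  refine ⟨Dr, fun e he => ?_⟩
  set Pr := {q : N × Sym2 V | q.2 ∈ G.edgeSet ∧ q.2 ≠ e ∧ q.1 ∉ Set.range real ∧ q.1 ∈ path e ∧
        q.1 ∈ path q.2} with hPr
  obtain ⟨hnd, hch, -⟩ := hp e he
  -- every crossing comes from a common interior corner of the two paths
  have key : ∀ z ∈ crossingSet Dr e, ∃ (k : N) (b b' : Bool) (m m' : N) (w : ℝ × ℝ),
      (k, z.1) ∈ Pr ∧ nextTo (path e) b k m ∧ nextTo (path z.1) b' k m' ∧ z.2 = ι w ∧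
      w ∈ segment ℝ (q e k) (q e m) ∧ w ∈ segment ℝ (q z.1 k) (q z.1 m') := by
    rintro ⟨e', u⟩ ⟨he', hne, ⟨t, ht⟩, ⟨t', ht'⟩, hv⟩
    simp only at he' hne ht ht' hv ⊢
    have ht : ι (γ e t) = u := ht
    have ht' : ι (γ e' t') = u := ht'
    have htt : γ e t = γ e' t' := ιinj (ht.trans ht'.symm)
    obtain ⟨hnd', hch', -⟩ := hp e' he'
    have m1 : γ e t ∈ poly (q e) (path e) := (hγ e he).2.1 ▸ ⟨t, rfl⟩
    have m2 : γ e t ∈ poly (q e') (path e') := htt ▸ (hγ e' he').2.1 ▸ ⟨t', rfl⟩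
    obtain ⟨i, j, hij, hz⟩ := m1
    obtain ⟨k, l, hkl, hz'⟩ := m2
    have A1 := chain_pair hch hij
    have A2 := chain_pair hch' hkl
    have common : ∃ (k : N) (b b' : Bool) (m m' : N),
        nextTo (path e) b k m ∧ nextTo (path e') b' k m' ∧
        γ e t ∈ segment ℝ (q e k) (q e m) ∧ γ e t ∈ segment ℝ (q e' k) (q e' m') := by
      by_cases h1 : i = k
      · subst h1
        exact ⟨i, true, true, j, l, by simpa [nextTo] using hij, by simpa [nextTo] using hkl, hz, hz'⟩
      by_cases h2 : i = l
      · subst h2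
        exact ⟨i, true, false, j, k, by simpa [nextTo] using hij, by simpa [nextTo] using hkl, hz,
          by rw [segment_symm]; exact hz'⟩
      by_cases h3 : j = k
      · subst h3
        exact ⟨j, false, true, i, l, by simpa [nextTo] using hij, by simpa [nextTo] using hkl,
          by rw [segment_symm]; exact hz, hz'⟩
      by_cases h4 : j = l
      · subst h4
        exact ⟨j, false, false, i, k, by simpa [nextTo] using hij, by simpa [nextTo] using hkl,
          by rw [segment_symm]; exact hz, by rw [segment_symm]; exact hz'⟩
      exact absurd hz' (Set.disjoint_left.1 (qdis e e' i j k l A1 A2 h1 h2 h3 h4) hz)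
    obtain ⟨k, b, b', m, m', n1, n2, s1, s2⟩ := common
    obtain ⟨a1, a2, a3⟩ := nextTo_adj hch n1
    obtain ⟨a1', a2', a3'⟩ := nextTo_adj hch' n2
    refine ⟨k, b, b', m, m', γ e t, ⟨he', hne, ?_, a2, a2'⟩, n1, n2, ht.symm, s1, s2⟩
    rintro ⟨v, rfl⟩
    have r1 : m ∉ Set.range real := by rintro ⟨w, rfl⟩; exact hrr _ _ a1
    have r2 : m' ∉ Set.range real := by rintro ⟨w, rfl⟩; exact hrr _ _ a1'
    simp only [q, lblr, lbln _ _ r1, lbln _ _ r2] at s1 s2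
    have hd : det3 (p (Sum.inl v)) (p (Sum.inr (e, m))) (p (Sum.inr (e', m'))) ≠ 0 := by
      apply pgp
      · simp
      · simp
      · intro h
        exact hne (congrArg Prod.fst (Sum.inr.inj h)).symm
    have := seg_unique hd (d := p (Sum.inl v)) s1 (left_mem_segment ℝ _ _)
      (by rw [segment_symm]; exact s2) (right_mem_segment ℝ _ _)
    apply hv
    exact ⟨v, by rw [← ht, this]⟩
  have hfun : ∀ z : crossingSet Dr e, ∃ r : Pr × Bool × Bool,
      r.1.1.2 = z.1.1 ∧ ∃ (m m' : N) (w : ℝ × ℝ), nextTo (path e) r.2.1 r.1.1.1 m ∧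
        nextTo (path z.1.1) r.2.2 r.1.1.1 m' ∧ z.1.2 = ι w ∧
        w ∈ segment ℝ (q e r.1.1.1) (q e m) ∧ w ∈ segment ℝ (q z.1.1 r.1.1.1) (q z.1.1 m') := by
    intro z
    obtain ⟨k, b, b', m, m', w, h1, h2⟩ := key z.1 z.2
    exact ⟨⟨⟨_, h1⟩, b, b'⟩, rfl, m, m', w, h2⟩
  choose F hF using hfun
  have Finj : Function.Injective F := by
    rintro ⟨⟨e1, u1⟩, hz1⟩ ⟨⟨e2, u2⟩, hz2⟩ h
    obtain ⟨g1, m1, m1', w1, g2, g3, g4, g5, g6⟩ := hF ⟨⟨e1, u1⟩, hz1⟩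
    obtain ⟨f1, m2, m2', w2, f2, f3, f4, f5, f6⟩ := hF ⟨⟨e2, u2⟩, hz2⟩
    rw [← h] at f1 f2 f3 f5 f6
    simp only at g1 g3 g4 g6 f1 f3 f4 f6
    generalize F ⟨⟨e1, u1⟩, hz1⟩ = r at *
    obtain ⟨⟨⟨k, e0⟩, hk⟩, b, b'⟩ := r
    simp only at *
    subst g1
    subst f1
    obtain ⟨hE, hne, hkr, hk1, hk2⟩ := hk
    simp only at hE hne hkr hk1 hk2
    have e1 := nextTo_unique hnd g2 f2
    have e2 := nextTo_unique (hp e0 hE).1 g3 f3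
    subst e1 e2
    have hadj := (nextTo_adj hch g2).1
    have hd : det3 (q e k) (q e m1) (q e0 k) ≠ 0 := by
      apply pgp
      · exact fun h => hadj.ne (lblinj _ _ _ _ h)
      · rw [lbln _ _ hkr, lbln _ _ hkr]
        intro h
        exact hne (congrArg Prod.fst (Sum.inr.inj h)).symm
      · exact fun h => hadj.ne (lblinj _ _ _ _ h).symm
    have := seg_unique hd g5 f5 g6 f6
    subst this
    simp [g4, f4]
  have hfin : Finite (Pr × Bool × Bool) := inferInstance
  have hfin2 : Finite (crossingSet Dr e) := Finite.of_injective F Finj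
  refine ⟨Set.toFinite _, ?_⟩
  have hcard := Nat.card_le_card_of_injective F Finj
  rw [Nat.card_prod, Nat.card_prod, Nat.card_coe_set_eq, Nat.card_coe_set_eq] at hcard
  simp only [Nat.card_eq_fintype_card, Fintype.card_bool] at hcard
  omega

end WBW

namespace WBW

variable {W : Type}

theorem faceNext_fst (R : RotationSystem W) (d : R.G.Dart) : (R.faceNext d).fst = d.snd := rfl

theorem faceNext_edge (R : RotationSystem W) (d : R.G.Dart) :
    (R.faceNext d).edge = R.rot d.snd d.edge := by
  have hmem : d.edge ∈ incidentSet R.G d.toProd.2 :=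
    ⟨d.edge_mem, by rcases d with ⟨⟨a, b⟩, h⟩; simp [SimpleGraph.Dart.edge]⟩
  have hmem' : R.rot d.toProd.2 d.edge ∈ incidentSet R.G d.toProd.2 :=
    (R.rot_cycleOn d.toProd.2).1.mapsTo hmem
  exact Sym2.other_spec hmem'.2

theorem dart_ext_snd {G : SimpleGraph W} {d d' : G.Dart} (h : d.snd = d'.snd)
    (he : d.edge = d'.edge) : d = d' := by
  rcases SimpleGraph.dart_edge_eq_iff d d' |>.1 he with h1 | h1
  · exact h1
  · subst h1
    exact absurd h (by simp [d'.adj.ne])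

theorem dart_ext_fst {G : SimpleGraph W} {d d' : G.Dart} (h : d.fst = d'.fst)
    (he : d.edge = d'.edge) : d = d' := by
  rcases SimpleGraph.dart_edge_eq_iff d d' |>.1 he with h1 | h1
  · exact h1
  · subst h1
    exact absurd h (by simp [d'.adj.ne'])

theorem faceNext_injective (R : RotationSystem W) : Function.Injective R.faceNext := by
  intro d d' h
  have h1 : d.snd = d'.snd := by rw [← faceNext_fst, ← faceNext_fst, h]
  apply dart_ext_snd h1
  have h2 := faceNext_edge R d
  rw [h, faceNext_edge, h1] at h2
  exact ((R.rot d'.snd).injective h2).symm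

/-- The face-tracing permutation. -/
noncomputable def nx [Finite W] (R : RotationSystem W) : Equiv.Perm R.G.Dart :=
  Equiv.ofBijective R.faceNext
    (haveI : Finite R.G.Dart := Finite.of_injective _ SimpleGraph.Dart.toProd_injective
     Finite.injective_iff_bijective.1 (faceNext_injective R))

theorem nx_apply [Finite W] (R : RotationSystem W) (d : R.G.Dart) : nx R d = R.faceNext d := rfl

theorem closed_rev {D : Type} [Finite D] {f : D → D} (hf : Function.Injective f) (Q : D → Prop)
    (hQ : ∀ d, Q d → Q (f d)) (d : D) (hd : Q (f d)) : Q d := by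
  let g : {d // Q d} → {d // Q d} := fun x => ⟨f x.1, hQ _ x.2⟩
  have hg : Function.Injective g := by
    intro a b h
    exact Subtype.ext (hf (congrArg Subtype.val h))
  obtain ⟨x, hx⟩ := (Finite.injective_iff_surjective.1 hg) ⟨f d, hd⟩
  have := hf (congrArg Subtype.val hx)
  exact this ▸ x.2

/-- Turning around the head of a dart reaches all darts with that head. -/
theorem rot_all [Finite W] (R : RotationSystem W) (Q : R.G.Dart → Prop)
    (hQ : ∀ d, Q d → Q (nx R d).symm) (d d' : R.G.Dart) (h : d.snd = d'.snd) (hd : Q d) : Q d' := by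
  have hmem : ∀ d : R.G.Dart, d.edge ∈ incidentSet R.G d.snd := fun d =>
    ⟨d.edge_mem, by rcases d with ⟨⟨a, b⟩, h⟩; simp [SimpleGraph.Dart.edge]⟩
  have hsc := (R.rot_cycleOn d.snd).2 (hmem d) (h ▸ hmem d')
  obtain ⟨k, hk⟩ := hsc.exists_nat_pow_eq
  have key : ∀ k : ℕ, ∃ d'', Q d'' ∧ d''.snd = d.snd ∧ d''.edge = (R.rot d.snd ^ k) d.edge := by
    intro k
    induction k with
    | zero => exact ⟨d, hd, rfl, rfl⟩
    | succ k ih =>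
      obtain ⟨d'', h1, h2, h3⟩ := ih
      refine ⟨_, hQ d'' h1, ?_, ?_⟩
      · exact (faceNext_fst R d'').trans h2
      · rw [SimpleGraph.Dart.edge_symm, nx_apply, faceNext_edge, h2, h3, pow_succ']
        rfl
  obtain ⟨d'', h1, h2, h3⟩ := key k
  have : d'' = d' := dart_ext_snd (h2.trans h) (h3.trans hk)
  exact this ▸ h1

end WBW

namespace WBW

/-- The twelve darts at a dart of a map: two triangles at its head, two at its tail. -/
inductive Kind
  | vc | ce | ev | ec | cf | fe | ue | eb | bu | ef | fb | be

instance : Fintype Kind :=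
  ⟨⟨([Kind.vc, Kind.ce, Kind.ev, Kind.ec, Kind.cf, Kind.fe, Kind.ue, Kind.eb, Kind.bu, Kind.ef,
    Kind.fb, Kind.be] : List Kind), by simp⟩, by intro x; cases x <;> simp⟩

/-- Combinatorial maps, with named vertices, edges and faces. -/
structure CMap (Dt V E F : Type) [Fintype Dt] [Fintype V] [Fintype E] [Fintype F] where
  r : Dt → Dt
  n : Equiv.Perm Dt
  hd : Dt → V
  ed : Dt → E
  fc : Dt → F
  rr : ∀ d, r (r d) = d
  edr : ∀ d, ed (r d) = ed d
  fcn : ∀ d, fc (n d) = fc d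
  hdn : ∀ d, hd (r (n d)) = hd d
  hds : Function.Surjective hd
  eds : Function.Surjective ed
  fcs : Function.Surjective fc
  tV : ∀ Q : Dt → Prop, (∀ d, Q d → Q (r (n d))) → ∀ d d', hd d = hd d' → Q d → Q d'
  tE : ∀ d d', ed d = ed d' → d' = d ∨ d' = r d
  tF : ∀ Q : Dt → Prop, (∀ d, Q d → Q (n d)) → ∀ d d', fc d = fc d' → Q d → Q d'
  B : Finset Dt
  B1 : ∀ b ∈ B, ∀ b' ∈ B, hd (r b) = hd (r b') → b = b'
  B2 : ∀ b ∈ B, ∀ b' ∈ B, ed b = ed b' → b = b'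
  cn : ∀ A : Set Dt, (∀ d ∈ A, r d ∈ A) → (∀ d ∈ A, n d ∈ A) → (∀ b ∈ B, b ∈ A) → ∀ d, d ∈ A
  eul : 6 * (Fintype.card V + (Fintype.card E + (Fintype.card Dt + Fintype.card F))) =
    12 * Fintype.card Dt + 12 * B.card

namespace CMap

variable {Dt V E F : Type} [Fintype Dt] [Fintype V] [Fintype E] [Fintype F]

/-- The other dart of the same edge. -/
def al (M : CMap Dt V E F) : Kind × Dt → Kind × Dt
  | (Kind.ce, d) => (Kind.ec, d)
  | (Kind.ec, d) => (Kind.ce, d)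
  | (Kind.eb, d) => (Kind.be, d)
  | (Kind.be, d) => (Kind.eb, d)
  | (Kind.fe, d) => (Kind.ef, d)
  | (Kind.ef, d) => (Kind.fe, d)
  | (Kind.ev, d) => (Kind.ue, M.r d)
  | (Kind.ue, d) => (Kind.ev, M.r d)
  | (Kind.vc, d) => (Kind.bu, M.n d)
  | (Kind.bu, d) => (Kind.vc, M.n.symm d)
  | (Kind.cf, d) => (Kind.fb, M.n d)
  | (Kind.fb, d) => (Kind.cf, M.n.symm d)

/-- The next dart of the same triangle. -/
def ph : Kind × Dt → Kind × Dt
  | (Kind.vc, d) => (Kind.ce, d)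
  | (Kind.ce, d) => (Kind.ev, d)
  | (Kind.ev, d) => (Kind.vc, d)
  | (Kind.ec, d) => (Kind.cf, d)
  | (Kind.cf, d) => (Kind.fe, d)
  | (Kind.fe, d) => (Kind.ec, d)
  | (Kind.ue, d) => (Kind.eb, d)
  | (Kind.eb, d) => (Kind.bu, d)
  | (Kind.bu, d) => (Kind.ue, d)
  | (Kind.ef, d) => (Kind.fb, d)
  | (Kind.fb, d) => (Kind.be, d)
  | (Kind.be, d) => (Kind.ef, d)

/-- The source of a dart. -/
def src (M : CMap Dt V E F) : Kind × Dt → V ⊕ (E ⊕ (Dt ⊕ F))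
  | (Kind.vc, d) => Sum.inl (M.hd d)
  | (Kind.ue, d) => Sum.inl (M.hd (M.r d))
  | (Kind.ev, d) => Sum.inr (Sum.inl (M.ed d))
  | (Kind.ec, d) => Sum.inr (Sum.inl (M.ed d))
  | (Kind.eb, d) => Sum.inr (Sum.inl (M.ed d))
  | (Kind.ef, d) => Sum.inr (Sum.inl (M.ed d))
  | (Kind.ce, d) => Sum.inr (Sum.inr (Sum.inl d))
  | (Kind.cf, d) => Sum.inr (Sum.inr (Sum.inl d))
  | (Kind.bu, d) => Sum.inr (Sum.inr (Sum.inl (M.n.symm d)))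
  | (Kind.be, d) => Sum.inr (Sum.inr (Sum.inl (M.n.symm d)))
  | (Kind.fe, d) => Sum.inr (Sum.inr (Sum.inr (M.fc d)))
  | (Kind.fb, d) => Sum.inr (Sum.inr (Sum.inr (M.fc d)))

theorem al_al (M : CMap Dt V E F) (d : Kind × Dt) : M.al (M.al d) = d := by
  obtain ⟨k, d⟩ := d
  cases k <;> simp [al, M.rr]

theorem ph3 (d : Kind × Dt) : ph (ph (ph d)) = d := by
  obtain ⟨k, d⟩ := d
  cases k <;> simp [ph]

theorem fcn_symm (M : CMap Dt V E F) (d : Dt) : M.fc (M.n.symm d) = M.fc d := by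
  rw [← M.fcn, Equiv.apply_symm_apply]

theorem hdn_symm (M : CMap Dt V E F) (d : Dt) : M.hd (M.n.symm d) = M.hd (M.r d) := by
  rw [← M.hdn, Equiv.apply_symm_apply]

theorem src_trans (M : CMap Dt V E F) (Q : Kind × Dt → Prop) (hQ : ∀ d, Q d → Q (ph (M.al d)))
    (d d' : Kind × Dt) (h : M.src d = M.src d') (hd : Q d) : Q d' := by
  have phinj : Function.Injective (ph : Kind × Dt → Kind × Dt) := by
    intro a b h; rw [← ph3 a, h, ph3]
  have alinj : Function.Injective M.al := by
    intro a b h; rw [← M.al_al a, h, M.al_al]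
  have hQ' : ∀ d, Q d ↔ Q (ph (M.al d)) := fun d =>
    ⟨hQ d, closed_rev (phinj.comp alinj) Q hQ d⟩
  -- turning around the vertices
  have v1 : ∀ d, Q (Kind.vc, d) ↔ Q (Kind.ue, M.n d) := fun d => hQ' (Kind.vc, d)
  have v2 : ∀ d, Q (Kind.ue, d) ↔ Q (Kind.vc, M.r d) := fun d => hQ' (Kind.ue, d)
  have e1 : ∀ d, Q (Kind.ev, d) ↔ Q (Kind.eb, M.r d) := fun d => hQ' (Kind.ev, d)
  have e2 : ∀ d, Q (Kind.eb, d) ↔ Q (Kind.ef, d) := fun d => hQ' (Kind.eb, d)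
  have e3 : ∀ d, Q (Kind.ef, d) ↔ Q (Kind.ec, d) := fun d => hQ' (Kind.ef, d)
  have e4 : ∀ d, Q (Kind.ec, d) ↔ Q (Kind.ev, d) := fun d => hQ' (Kind.ec, d)
  have c1 : ∀ d, Q (Kind.ce, d) ↔ Q (Kind.cf, d) := fun d => hQ' (Kind.ce, d)
  have c2 : ∀ d, Q (Kind.cf, d) ↔ Q (Kind.be, M.n d) := fun d => hQ' (Kind.cf, d)
  have c3 : ∀ d, Q (Kind.be, d) ↔ Q (Kind.bu, d) := fun d => hQ' (Kind.be, d)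
  have f1 : ∀ d, Q (Kind.fe, d) ↔ Q (Kind.fb, d) := fun d => hQ' (Kind.fe, d)
  have f2 : ∀ d, Q (Kind.fb, d) ↔ Q (Kind.fe, M.n.symm d) := fun d => hQ' (Kind.fb, d)
  have hV : ∀ d d', M.hd d = M.hd d' → Q (Kind.vc, d) → Q (Kind.vc, d') := by
    apply M.tV
    intro d h
    exact (v2 _).1 ((v1 _).1 h)
  have hE : ∀ d d', M.ed d = M.ed d' → Q (Kind.ev, d) → Q (Kind.ev, d') := by
    intro d d' h hq
    rcases M.tE d d' h with rfl | rfl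
    · exact hq
    · exact (e4 _).1 ((e3 _).1 ((e2 _).1 ((e1 _).1 hq)))
  have hF : ∀ d d', M.fc d = M.fc d' → Q (Kind.fe, d) → Q (Kind.fe, d') := by
    apply M.tF
    intro d h
    have := (f2 (M.n d)).2 (by simpa using h)
    exact (f1 _).2 this
  have c2' : ∀ d, Q (Kind.be, d) ↔ Q (Kind.ce, M.n.symm d) := by
    intro d; rw [c1, c2, Equiv.apply_symm_apply]
  -- the value of `Q` depends on the source only
  obtain ⟨k, d⟩ := d
  obtain ⟨k', d'⟩ := d'
  have e2' : ∀ d, Q (Kind.eb, d) ↔ Q (Kind.ev, d) := fun d => by rw [e2, e3, e4]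
  have e3' : ∀ d, Q (Kind.ef, d) ↔ Q (Kind.ev, d) := fun d => by rw [e3, e4]
  have c3' : ∀ d, Q (Kind.bu, d) ↔ Q (Kind.ce, M.n.symm d) := fun d => by rw [← c3, c2']
  have dV : ∀ k d v, M.src (k, d) = Sum.inl v → ∃ d0, M.hd d0 = v ∧ (Q (k, d) ↔ Q (Kind.vc, d0)) := by
    intro k d v h
    cases k <;> simp only [src, Sum.inl.injEq, reduceCtorEq] at h
    · exact ⟨d, h, Iff.rfl⟩
    · exact ⟨_, h, v2 d⟩
  have dE : ∀ k d e, M.src (k, d) = Sum.inr (Sum.inl e) →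
      ∃ d0, M.ed d0 = e ∧ (Q (k, d) ↔ Q (Kind.ev, d0)) := by
    intro k d v h
    cases k <;> simp only [src, Sum.inl.injEq, Sum.inr.injEq, reduceCtorEq] at h
    · exact ⟨d, h, Iff.rfl⟩
    · exact ⟨d, h, e4 d⟩
    · exact ⟨d, h, e2' d⟩
    · exact ⟨d, h, e3' d⟩
  have dC : ∀ k d c, M.src (k, d) = Sum.inr (Sum.inr (Sum.inl c)) → (Q (k, d) ↔ Q (Kind.ce, c)) := by
    intro k d v h
    cases k <;> simp only [src, Sum.inl.injEq, Sum.inr.injEq, reduceCtorEq] at h <;> subst h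
    · exact Iff.rfl
    · exact (c1 d).symm
    · exact c3' d
    · exact c2' d
  have dF : ∀ k d f, M.src (k, d) = Sum.inr (Sum.inr (Sum.inr f)) →
      ∃ d0, M.fc d0 = f ∧ (Q (k, d) ↔ Q (Kind.fe, d0)) := by
    intro k d v h
    cases k <;> simp only [src, Sum.inl.injEq, Sum.inr.injEq, reduceCtorEq] at h
    · exact ⟨d, h, Iff.rfl⟩
    · exact ⟨d, h, (f1 d).symm⟩
  rcases hs : M.src (k, d) with v | e | c | f
  · obtain ⟨d0, a1, a2⟩ := dV k d v hs
    obtain ⟨d1, b1, b2⟩ := dV k' d' v (h ▸ hs)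
    exact b2.2 (hV d0 d1 (a1.trans b1.symm) (a2.1 hd))
  · obtain ⟨d0, a1, a2⟩ := dE k d e hs
    obtain ⟨d1, b1, b2⟩ := dE k' d' e (h ▸ hs)
    exact b2.2 (hE d0 d1 (a1.trans b1.symm) (a2.1 hd))
  · exact (dC k' d' c (h ▸ hs)).2 ((dC k d c hs).1 hd)
  · obtain ⟨d0, a1, a2⟩ := dF k d f hs
    obtain ⟨d1, b1, b2⟩ := dF k' d' f (h ▸ hs)
    exact b2.2 (hF d0 d1 (a1.trans b1.symm) (a2.1 hd))

/-- The triangulation of a map. -/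
noncomputable def triang (M : CMap Dt V E F) : Triang (Kind × Dt) (V ⊕ (E ⊕ (Dt ⊕ F))) where
  α := M.al
  φ := ph
  vt := M.src
  B := M.B.map ⟨fun d => (Kind.ue, d), fun a b h => congrArg Prod.snd h⟩
  αα := M.al_al
  φ3 := ph3
  vφ := by
    rintro ⟨k, d⟩
    cases k <;> simp [ph, al, src, M.rr, M.edr, M.fcn, M.hdn, M.fcn_symm, M.hdn_symm]
  loopless := by
    rintro ⟨k, d⟩
    cases k <;> simp [al, src]
  surj := by
    rintro (v | e | c | f)
    · obtain ⟨d, rfl⟩ := M.hds v; exact ⟨(Kind.vc, d), rfl⟩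
    · obtain ⟨d, rfl⟩ := M.eds e; exact ⟨(Kind.ev, d), rfl⟩
    · exact ⟨(Kind.ce, c), rfl⟩
    · obtain ⟨d, rfl⟩ := M.fcs f; exact ⟨(Kind.fe, d), rfl⟩
  trans := M.src_trans
  conn := by
    intro A h1 h2 h3
    have p1 : ∀ d, (Kind.vc, d) ∈ A → (Kind.ce, d) ∈ A := fun d h => h1 (Kind.vc, d) h
    have p2 : ∀ d, (Kind.ce, d) ∈ A → (Kind.ev, d) ∈ A := fun d h => h1 (Kind.ce, d) h
    have p3 : ∀ d, (Kind.ev, d) ∈ A → (Kind.vc, d) ∈ A := fun d h => h1 (Kind.ev, d) h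
    have p4 : ∀ d, (Kind.ec, d) ∈ A → (Kind.cf, d) ∈ A := fun d h => h1 (Kind.ec, d) h
    have p5 : ∀ d, (Kind.cf, d) ∈ A → (Kind.fe, d) ∈ A := fun d h => h1 (Kind.cf, d) h
    have p7 : ∀ d, (Kind.ue, d) ∈ A → (Kind.eb, d) ∈ A := fun d h => h1 (Kind.ue, d) h
    have p8 : ∀ d, (Kind.eb, d) ∈ A → (Kind.bu, d) ∈ A := fun d h => h1 (Kind.eb, d) h
    have p9 : ∀ d, (Kind.bu, d) ∈ A → (Kind.ue, d) ∈ A := fun d h => h1 (Kind.bu, d) h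
    have p10 : ∀ d, (Kind.ef, d) ∈ A → (Kind.fb, d) ∈ A := fun d h => h1 (Kind.ef, d) h
    have p11 : ∀ d, (Kind.fb, d) ∈ A → (Kind.be, d) ∈ A := fun d h => h1 (Kind.fb, d) h
    have p12 : ∀ d, (Kind.be, d) ∈ A → (Kind.ef, d) ∈ A := fun d h => h1 (Kind.be, d) h
    have q1 : ∀ d, (Kind.ce, d) ∈ A → (Kind.ec, d) ∈ A := fun d h => h2 (Kind.ce, d) h
    have q1' : ∀ d, (Kind.ec, d) ∈ A → (Kind.ce, d) ∈ A := fun d h => h2 (Kind.ec, d) h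
    have q2 : ∀ d, (Kind.eb, d) ∈ A → (Kind.be, d) ∈ A := fun d h => h2 (Kind.eb, d) h
    have q2' : ∀ d, (Kind.be, d) ∈ A → (Kind.eb, d) ∈ A := fun d h => h2 (Kind.be, d) h
    have q3 : ∀ d, (Kind.fe, d) ∈ A → (Kind.ef, d) ∈ A := fun d h => h2 (Kind.fe, d) h
    have q3' : ∀ d, (Kind.ef, d) ∈ A → (Kind.fe, d) ∈ A := fun d h => h2 (Kind.ef, d) h
    have q4 : ∀ d, (Kind.ev, d) ∈ A → (Kind.ue, M.r d) ∈ A := fun d h => h2 (Kind.ev, d) h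
    have q5 : ∀ d, (Kind.vc, d) ∈ A → (Kind.bu, M.n d) ∈ A := fun d h => h2 (Kind.vc, d) h
    have p6 : ∀ d, (Kind.fe, d) ∈ A → (Kind.ec, d) ∈ A := fun d h => h1 (Kind.fe, d) h
    have toV : ∀ d, (Kind.ue, d) ∈ A → (Kind.vc, d) ∈ A := fun d h =>
      p3 _ (p2 _ (q1' _ (p6 _ (q3' _ (p12 _ (q2 _ (p7 _ h)))))))
    have all : ∀ d, (Kind.ue, d) ∈ A := by
      apply M.cn {d | (Kind.ue, d) ∈ A}
      · intro d hd
        exact q4 _ (p2 _ (p1 _ (toV _ hd)))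
      · intro d hd
        exact p9 _ (q5 _ (toV _ hd))
      · intro b hb
        exact h3 _ (Finset.mem_map_of_mem _ hb)
    rintro ⟨k, d⟩
    have a1 := all d
    have a2 := toV d a1
    have a3 := p7 d a1
    have a4 := q2 d a3
    have a5 := p12 d a4
    have a6 := p1 d a2
    have a7 := q1 d a6
    cases k
    · exact a2
    · exact a6
    · exact p2 d a6
    · exact a7
    · exact p4 d a7
    · exact q3' d a5
    · exact a1
    · exact a3
    · exact p8 d a3
    · exact a5
    · exact p10 d a5
    · exact a4
  Binj := by
    intro b hb b' hb' h
    obtain ⟨d, hd, rfl⟩ := Finset.mem_map.1 hb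
    obtain ⟨d', hd', rfl⟩ := Finset.mem_map.1 hb'
    have h : M.hd (M.r d) = M.hd (M.r d') := Sum.inl.inj h
    rw [M.B1 d hd d' hd' h]
  Binj' := by
    intro b hb b' hb' h
    obtain ⟨d, hd, rfl⟩ := Finset.mem_map.1 hb
    obtain ⟨d', hd', rfl⟩ := Finset.mem_map.1 hb'
    have h : M.ed (M.r d) = M.ed (M.r d') := Sum.inl.inj (Sum.inr.inj h)
    rw [M.edr, M.edr] at h
    rw [M.B2 d hd d' hd' h]
  Bne := by
    intro b hb b' hb' h
    obtain ⟨d, hd, rfl⟩ := Finset.mem_map.1 hb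
    obtain ⟨d', hd', rfl⟩ := Finset.mem_map.1 hb'
    simp [al, src] at h
  euler := by
    rw [Finset.card_map, Fintype.card_prod, Fintype.card_sum, Fintype.card_sum, Fintype.card_sum,
      M.eul]
    rfl

end CMap
end WBW

namespace WBW

variable {W : Type}

/-- The component of a dart. -/
def dcomp (R : RotationSystem W) (d : R.G.Dart) : R.G.ConnectedComponent :=
  R.G.connectedComponentMk d.fst

theorem dcomp_symm (R : RotationSystem W) (d : R.G.Dart) : dcomp R d.symm = dcomp R d := by
  apply SimpleGraph.ConnectedComponent.sound
  exact d.symm.adj.reachable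

theorem range_dcomp (R : RotationSystem W) [Finite W] :
    Nat.card R.G.ConnectedComponent =
      (Set.range (dcomp R)).ncard + Nat.card {v : W | ∀ w, ¬ R.G.Adj v w} := by
  have : Finite R.G.ConnectedComponent := Quot.finite _
  rw [← Set.ncard_add_ncard_compl (Set.range (dcomp R))]
  congr 1
  rw [Nat.card_coe_set_eq]
  symm
  have himg : (Set.range (dcomp R))ᶜ =
      R.G.connectedComponentMk '' {v : W | ∀ w, ¬ R.G.Adj v w} := by
    ext c
    induction c using SimpleGraph.ConnectedComponent.ind with
    | h v =>
      simp only [Set.mem_compl_iff, Set.mem_range, Set.mem_image, Set.mem_ofPred_eq]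
      constructor
      · intro h
        exact ⟨v, fun w hw => h ⟨⟨(v, w), hw⟩, rfl⟩, rfl⟩
      · rintro ⟨u, hu, huv⟩ ⟨d, hd⟩
        have h1 : R.G.connectedComponentMk u = R.G.connectedComponentMk d.fst := huv.trans hd.symm
        obtain ⟨p⟩ := SimpleGraph.ConnectedComponent.exact h1
        cases p with
        | nil => exact hu _ d.adj
        | cons h _ => exact hu _ h
  rw [himg]
  apply (Set.InjOn.ncard_image _).symm
  intro u hu v hv huv
  obtain ⟨p⟩ := SimpleGraph.ConnectedComponent.exact huv
  cases p with
  | nil => rfl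
  | cons h _ => exact absurd h (hu _)

/-- The map of a plane rotation system. -/
theorem exists_cmap [Finite W] (R : RotationSystem W) (hR : R.IsPlane) [Fintype R.G.Dart]
    [Fintype {w : W // ∃ w', R.G.Adj w w'}] [Fintype R.G.edgeSet] [Fintype R.Face] :
    ∃ M : CMap R.G.Dart {w : W // ∃ w', R.G.Adj w w'} R.G.edgeSet R.Face,
      (∀ d, M.r d = d.symm) ∧ M.n = nx R ∧ (∀ d, (M.hd d).1 = d.snd) ∧
      (∀ d, (M.ed d).1 = d.edge) := by
  classical
  let sec : Set.range (dcomp R) → R.G.Dart := fun c => c.2.choose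
  have hsec : ∀ c, dcomp R (sec c) = c.1 := fun c => c.2.choose_spec
  have : Fintype W := Fintype.ofFinite W
  have : Finite R.G.ConnectedComponent := Quot.finite _
  have : Fintype (Set.range (dcomp R)) := Fintype.ofFinite _
  have hB : ∀ b ∈ Finset.univ.image sec, ∀ b' ∈ Finset.univ.image sec,
      dcomp R b = dcomp R b' → b = b' := by
    intro b hb b' hb' h
    obtain ⟨c, -, rfl⟩ := Finset.mem_image.1 hb
    obtain ⟨c', -, rfl⟩ := Finset.mem_image.1 hb'
    rw [hsec, hsec] at h
    rw [Subtype.ext h]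
  have hBc : (Finset.univ.image sec).card = (Set.range (dcomp R)).ncard := by
    rw [Finset.card_image_of_injective]
    · rw [Finset.card_univ, ← Nat.card_eq_fintype_card, Nat.card_coe_set_eq]
    · intro c c' h
      apply Subtype.ext
      rw [← hsec, ← hsec, h]
  have hdart : Fintype.card R.G.Dart = 2 * Fintype.card R.G.edgeSet := by
    have := R.G.dart_card_eq_twice_card_edges
    unfold SimpleGraph.edgeFinset at this
    rw [Set.toFinset_card] at this
    simp only [← Nat.card_eq_fintype_card] at this ⊢
    exact this
  have hiso : Nat.card W = Fintype.card {w : W // ∃ w', R.G.Adj w w'} +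
      Nat.card {v : W | ∀ w, ¬ R.G.Adj v w} := by
    have h1 := Set.ncard_add_ncard_compl {v : W | ∀ w, ¬ R.G.Adj v w}
    have h2 : {v : W | ∀ w, ¬ R.G.Adj v w}ᶜ = {w : W | ∃ w', R.G.Adj w w'} := by
      ext v; simp
    rw [h2, ← Nat.card_coe_set_eq, ← Nat.card_coe_set_eq] at h1
    rw [← h1, add_comm]
    congr 1
    rw [← Nat.card_eq_fintype_card]
    rfl
  refine ⟨{
    r := fun d => d.symm
    n := nx R
    hd := fun d => ⟨d.snd, d.fst, d.symm.adj⟩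
    ed := fun d => ⟨d.edge, d.edge_mem⟩
    fc := fun d => Quot.mk _ d
    rr := fun d => d.symm_symm
    edr := fun d => Subtype.ext d.edge_symm
    fcn := fun d => (Quot.sound (r := fun a b : R.G.Dart => R.faceNext a = b) rfl).symm
    hdn := fun d => Subtype.ext (faceNext_fst R d)
    hds := ?_
    eds := ?_
    fcs := Quot.mk_surjective
    tV := ?_
    tE := ?_
    tF := ?_
    B := Finset.univ.image sec
    B1 := ?_
    B2 := ?_
    cn := ?_
    eul := ?_ }, fun d => rfl, rfl, fun d => rfl, fun d => rfl⟩
  · rintro ⟨w, w', h⟩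
    exact ⟨⟨(w', w), h.symm⟩, rfl⟩
  · rintro ⟨e, he⟩
    induction e using Sym2.ind with
    | h x y => exact ⟨⟨(x, y), he⟩, rfl⟩
  · intro Q hQ d d' h
    exact rot_all R Q hQ d d' (congrArg Subtype.val h)
  · intro d d' h
    have h' : d'.edge = d.edge := (congrArg Subtype.val h).symm
    exact (SimpleGraph.dart_edge_eq_iff d' d).1 h'
  · intro Q hQ d d' h
    have h2 := Quot.eqvGen_exact h
    have key : ∀ a b, Relation.EqvGen (fun a b : R.G.Dart => R.faceNext a = b) a b →
        (Q a ↔ Q b) := by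
      intro a b hab
      induction hab with
      | rel a b h =>
        subst h
        exact ⟨hQ a, closed_rev (nx R).injective Q hQ a⟩
      | refl => exact Iff.rfl
      | symm _ _ _ ih => exact ih.symm
      | trans _ _ _ _ _ ih1 ih2 => exact ih1.trans ih2
    exact (key d d' h2).1
  · intro b hb b' hb' h
    have h' : b.fst = b'.fst := congrArg Subtype.val h
    apply hB b hb b' hb'
    unfold dcomp
    rw [h']
  · intro b hb b' hb' h
    have h' : b.edge = b'.edge := congrArg Subtype.val h
    apply hB b hb b' hb'
    rcases (SimpleGraph.dart_edge_eq_iff b b').1 h' with h1 | h1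
    · rw [h1]
    · rw [h1, dcomp_symm]
  · intro A hr hn hb d
    have hturn : ∀ d d' : R.G.Dart, d.snd = d'.snd → d ∈ A → d' ∈ A :=
      rot_all R (fun d => d ∈ A) (fun d h => hr _ (hn _ h))
    have hturn' : ∀ d d' : R.G.Dart, d.fst = d'.fst → d ∈ A → d' ∈ A := by
      intro d d' h hd
      have := hturn d.symm d'.symm h (hr _ hd)
      simpa using hr _ this
    let b := sec ⟨dcomp R d, d, rfl⟩
    have hbA : b ∈ A := hb _ (Finset.mem_image_of_mem _ (Finset.mem_univ _))
    have hbd : dcomp R b = dcomp R d := hsec _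
    obtain ⟨p⟩ := SimpleGraph.ConnectedComponent.exact hbd
    have key : ∀ u v : W, R.G.Walk u v → ∀ d : R.G.Dart, d.fst = u → d ∈ A →
        ∀ d' : R.G.Dart, d'.fst = v → d' ∈ A := by
      intro u v p
      induction p with
      | nil =>
        intro d h hd d' h'
        exact hturn' d d' (h.trans h'.symm) hd
      | @cons u v w h p ih =>
        intro d h1 hd d' h'
        have h2 : (⟨(u, v), h⟩ : R.G.Dart) ∈ A := hturn' d _ h1 hd
        exact ih ⟨(v, u), h.symm⟩ rfl (hr _ h2) d' h'
    exact key _ _ p b rfl hbA d rfl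
  · have h1 := hR
    unfold RotationSystem.IsPlane at h1
    have h2 : R.numFaces = Fintype.card R.Face := by
      rw [← Nat.card_eq_fintype_card]; rfl
    rw [h2, range_dcomp, Nat.card_eq_fintype_card (α := R.G.edgeSet)] at h1
    rw [hBc]
    omega

theorem pieces_adj1 {D X Y : Type} [Fintype D] [Fintype X] (T : Triang D X) (f : X → Y) (d : D) :
    (T.pieces f).Adj (Sum.inl (f (T.vt d))) (Sum.inr d) := by
  unfold Triang.pieces
  rw [SimpleGraph.fromRel_adj]
  exact ⟨by simp, Or.inl (Or.inl ⟨d, rfl, rfl⟩)⟩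

theorem pieces_adj2 {D X Y : Type} [Fintype D] [Fintype X] (T : Triang D X) (f : X → Y) (d : D) :
    (T.pieces f).Adj (Sum.inr d) (Sum.inr (T.α d)) := by
  unfold Triang.pieces
  rw [SimpleGraph.fromRel_adj]
  refine ⟨?_, Or.inl (Or.inr ⟨d, rfl, rfl⟩)⟩
  intro h
  exact T.loopless d (congrArg T.vt (Sum.inr.inj h))

/-- The walk along a dart. -/
theorem pieces_walk {D X Y : Type} [Fintype D] [Fintype X] (T : Triang D X) (f : X → Y) (d d' : D)
    (y y' : Y) (h1 : f (T.vt d) = y) (h2 : T.α d = d') (h3 : f (T.vt (T.α d)) = y') :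
    ∃ p : (T.pieces f).Walk (Sum.inl y) (Sum.inl y'), p.length = 3 ∧
      p.support = [Sum.inl y, Sum.inr d, Sum.inr d', Sum.inl y'] := by
  subst h1 h2 h3
  exact ⟨.cons (pieces_adj1 T f d) (.cons (pieces_adj2 T f d)
    (.cons (pieces_adj1 T f (T.α d)).symm .nil)), rfl, rfl⟩

theorem to_net [Finite W] (R : RotationSystem W) (hR : R.IsPlane) :
    ∃ (N : Type) (_ : Finite N) (K : SimpleGraph N) (pos : N → ℝ × ℝ) (real : W → N)
      (m : Sym2 W → N) (ε : N → Sym2 W),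
      (∀ a b a' b', K.Adj a b → K.Adj a' b' → a ≠ a' → a ≠ b' → b ≠ a' → b ≠ b' →
        Disjoint (segment ℝ (pos a) (pos b)) (segment ℝ (pos a') (pos b'))) ∧
      Function.Injective real ∧ (∀ v w, ¬ K.Adj (real v) (real w)) ∧
      (∀ e, m e ∉ Set.range real ∧ ε (m e) = e) ∧
      (∀ x e, e ∈ R.G.edgeSet → x ∈ e → ∃ p : K.Walk (real x) (m e), p.length ≤ 3 ∧
        ∀ n ∈ p.support, n = real x ∨ (n ∉ Set.range real ∧ ε n = e)) ∧
      (∀ e e', Attached R e e' → ∃ p : K.Walk (m e) (m e'), p.length ≤ 6 ∧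
        ∀ n ∈ p.support, n ∉ Set.range real ∧ (ε n = e ∨ ε n = e')) := by
  classical
  have : Finite R.G.Dart := Finite.of_injective _ SimpleGraph.Dart.toProd_injective
  have : Finite R.Face := Quot.finite _
  let _ : Fintype R.G.Dart := Fintype.ofFinite _
  let _ : Fintype {w : W // ∃ w', R.G.Adj w w'} := Fintype.ofFinite _
  let _ : Fintype R.G.edgeSet := Fintype.ofFinite _
  let _ : Fintype R.Face := Fintype.ofFinite _
  obtain ⟨M, hr, hn, hhd, hed⟩ := exists_cmap R hR
  let f : {w : W // ∃ w', R.G.Adj w w'} ⊕ (R.G.edgeSet ⊕ (R.G.Dart ⊕ R.Face)) →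
      W ⊕ (Sym2 W ⊕ (R.G.Dart ⊕ R.Face)) := Sum.map Subtype.val (Sum.map Subtype.val id)
  have hf : Function.Injective f :=
    Sum.map_injective.2 ⟨Subtype.val_injective,
      Sum.map_injective.2 ⟨Subtype.val_injective, Function.injective_id⟩⟩
  obtain ⟨pos, hpos⟩ := M.triang.geom f hf
  let real : W → (W ⊕ (Sym2 W ⊕ (R.G.Dart ⊕ R.Face))) ⊕ (Kind × R.G.Dart) :=
    fun w => Sum.inl (Sum.inl w)
  let ε : (W ⊕ (Sym2 W ⊕ (R.G.Dart ⊕ R.Face))) ⊕ (Kind × R.G.Dart) → Sym2 W :=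
    Sum.elim (Sum.elim (fun w => s(w, w)) (Sum.elim id (Sum.elim (fun d => d.edge)
      (fun F => (Quot.out F).edge)))) (fun q => q.2.edge)
  -- adjacent walks
  have hatt : ∀ e e' v, e ∈ incidentSet R.G v → R.rot v e = e' →
      ∃ p : (M.triang.pieces f).Walk (Sum.inl (Sum.inr (Sum.inl e)))
        (Sum.inl (Sum.inr (Sum.inl e'))), p.length ≤ 6 ∧
        ∀ n ∈ p.support, n ∉ Set.range real ∧ (ε n = e ∨ ε n = e') := by
    intro e e' v he hrot
    obtain ⟨d, hd1, hd2⟩ : ∃ d : R.G.Dart, d.snd = v ∧ d.edge = e := by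
      obtain ⟨h1, h2⟩ := he
      obtain ⟨u, rfl⟩ := Sym2.mem_iff_exists.1 h2
      exact ⟨⟨(u, v), h1.symm⟩, rfl, Sym2.eq_swap⟩
    have hne : (nx R d).edge = e' := by
      rw [nx_apply, faceNext_edge, hd1, hd2, hrot]
    have a1 : f (M.triang.vt (Kind.ec, d)) = Sum.inr (Sum.inl e) := by
      change Sum.inr (Sum.inl (M.ed d).1) = _
      rw [hed, hd2]
    have a2 : f (M.triang.vt (M.triang.α (Kind.ec, d))) = Sum.inr (Sum.inr (Sum.inl d)) := rfl
    have b1 : f (M.triang.vt (Kind.be, nx R d)) = Sum.inr (Sum.inr (Sum.inl d)) := by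
      change Sum.inr (Sum.inr (Sum.inl (M.n.symm (nx R d)))) = _
      rw [hn, Equiv.symm_apply_apply]
    have b2 : f (M.triang.vt (M.triang.α (Kind.be, nx R d))) = Sum.inr (Sum.inl e') := by
      change Sum.inr (Sum.inl (M.ed (nx R d)).1) = _
      rw [hed, hne]
    have a3 : M.triang.α (Kind.ec, d) = (Kind.ce, d) := rfl
    have b3 : M.triang.α (Kind.be, nx R d) = (Kind.eb, nx R d) := rfl
    obtain ⟨p, p1, p2⟩ := pieces_walk M.triang f _ _ _ _ a1 a3 a2
    obtain ⟨q, q1, q2⟩ := pieces_walk M.triang f _ _ _ _ b1 b3 b2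
    refine ⟨p.append q, ?_, ?_⟩
    · rw [SimpleGraph.Walk.length_append, p1, q1]
    · intro n hn
      rw [SimpleGraph.Walk.mem_support_append_iff, p2, q2] at hn
      simp only [List.mem_cons, List.not_mem_nil, or_false] at hn
      rcases hn with (rfl | rfl | rfl | rfl) | (rfl | rfl | rfl | rfl) <;>
        simp [real, ε, hd2, hne]
  refine ⟨_, inferInstance, M.triang.pieces f, pos, real, fun e => Sum.inl (Sum.inr (Sum.inl e)), ε,
    hpos, ?_, ?_, fun e => ⟨by simp [real], rfl⟩, ?_, ?_⟩
  · intro a b h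
    exact Sum.inl.inj (Sum.inl.inj h)
  · intro v w h
    unfold Triang.pieces at h
    rw [SimpleGraph.fromRel_adj] at h
    simp [real] at h
  · intro x e he hx
    obtain ⟨y, rfl⟩ := Sym2.mem_iff_exists.1 hx
    let d : R.G.Dart := ⟨(x, y), he⟩
    have a1 : f (M.triang.vt (Kind.ue, d)) = Sum.inl x := by
      change Sum.inl (M.hd (M.r d)).1 = _
      rw [hhd, hr]
      rfl
    have a2 : f (M.triang.vt (M.triang.α (Kind.ue, d))) = Sum.inr (Sum.inl s(x, y)) := by
      change Sum.inr (Sum.inl (M.ed (M.r d)).1) = _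
      rw [hed, hr, SimpleGraph.Dart.edge_symm]
      rfl
    have a3 : M.triang.α (Kind.ue, d) = (Kind.ev, d.symm) := by
      change (Kind.ev, M.r d) = _
      rw [hr]
    obtain ⟨p, p1, p2⟩ := pieces_walk M.triang f _ _ _ _ a1 a3 a2
    refine ⟨p, p1.le, ?_⟩
    · intro n hn
      rw [p2] at hn
      simp only [List.mem_cons, List.not_mem_nil, or_false] at hn
      have hde : d.edge = s(x, y) := rfl
      rcases hn with rfl | rfl | rfl | rfl
      · exact Or.inl rfl
      all_goals
        right
        simp [real, ε, hde]
  · rintro e e' ⟨v, h1, h2, h3 | h3⟩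
    · exact hatt e e' v h1 h3
    · obtain ⟨p, p1, p2⟩ := hatt e' e v h2 h3
      refine ⟨p.reverse, by rw [SimpleGraph.Walk.length_reverse]; exact p1, ?_⟩
      intro n hn
      rw [SimpleGraph.Walk.support_reverse, List.mem_reverse] at hn
      exact ⟨(p2 n hn).1, (p2 n hn).2.symm⟩

end WBW

namespace WBW

variable {W : Type}

theorem attached_symm (R : RotationSystem W) {e e' : Sym2 W} (h : Attached R e e') :
    Attached R e' e := by
  obtain ⟨v, h1, h2, h3⟩ := h
  exact ⟨v, h2, h1, h3.symm⟩

/-- The walk in the net following a chain of attached edges. -/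
theorem net_chain {N : Type} (R : RotationSystem W) (K : SimpleGraph N) (real : W → N)
    (m : Sym2 W → N) (ε : N → Sym2 W)
    (hself : ∀ e, m e ∉ Set.range real ∧ ε (m e) = e)
    (hatt : ∀ e e', Attached R e e' → ∃ p : K.Walk (m e) (m e'), p.length ≤ 6 ∧
        ∀ n ∈ p.support, n ∉ Set.range real ∧ (ε n = e ∨ ε n = e')) :
    ∀ (L : List (Sym2 W)) (e : Sym2 W), (∀ g ∈ e :: L, g ∈ R.G.edgeSet) →
      (e :: L).IsChain (Attached R) → ∀ e', (e :: L).getLast? = some e' →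
      ∃ p : K.Walk (m e) (m e'), p.length ≤ 6 * L.length ∧
        ∀ n ∈ p.support, n ∉ Set.range real ∧ ε n ∈ e :: L := by
  intro L
  induction L with
  | nil =>
    intro e he _ e' h
    simp only [List.getLast?_singleton, Option.some.injEq] at h
    subst h
    refine ⟨.nil, by simp, ?_⟩
    intro n hn
    simp only [SimpleGraph.Walk.support_nil, List.mem_singleton] at hn
    subst hn
    have := hself e
    simp [this.2, this.1]
  | cons g L ih =>
    intro e he hc e' h
    rw [List.isChain_cons_cons] at hc
    obtain ⟨p, p1, p2⟩ := ih g (fun x hx => he x (List.mem_cons_of_mem _ hx)) hc.2 e'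
      (by rwa [List.getLast?_cons_cons] at h)
    obtain ⟨q, q1, q2⟩ := hatt e g hc.1
    refine ⟨q.append p, ?_, ?_⟩
    · rw [SimpleGraph.Walk.length_append, List.length_cons]; omega
    · intro n hn
      rw [SimpleGraph.Walk.mem_support_append_iff] at hn
      rcases hn with hn | hn
      · obtain ⟨a, b⟩ := q2 n hn
        refine ⟨a, ?_⟩
        rcases b with b | b <;> simp [b]
      · exact ⟨(p2 n hn).1, List.mem_cons_of_mem _ (p2 n hn).2⟩

theorem net_path {N : Type} (R : RotationSystem W) (K : SimpleGraph N) (real : W → N)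
    (m : Sym2 W → N) (ε : N → Sym2 W)
    (hinc : ∀ x e, e ∈ R.G.edgeSet → x ∈ e → ∃ p : K.Walk (real x) (m e), p.length ≤ 3 ∧
        ∀ n ∈ p.support, n = real x ∨ (n ∉ Set.range real ∧ ε n = e))
    (hself : ∀ e, m e ∉ Set.range real ∧ ε (m e) = e)
    (hatt : ∀ e e', Attached R e e' → ∃ p : K.Walk (m e) (m e'), p.length ≤ 6 ∧
        ∀ n ∈ p.support, n ∉ Set.range real ∧ (ε n = e ∨ ε n = e'))
    (x y : W) (L : List (Sym2 W)) (hL : IsWbwWalkFromTo R x y L) :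
    ∃ P : List N, P.Nodup ∧ P.IsChain K.Adj ∧ P.head? = some (real x) ∧
      P.getLast? = some (real y) ∧ P.length ≤ 7 * L.length ∧
      ∀ n ∈ P, n = real x ∨ n = real y ∨ (n ∉ Set.range real ∧ ε n ∈ L) := by
  classical
  obtain ⟨⟨h1, h2, h3, h4⟩, ⟨e, he, hxe⟩, ⟨e', he', hye⟩⟩ := hL
  cases L with
  | nil => exact absurd rfl h1
  | cons g L =>
    simp only [List.head?_cons, Option.some.injEq] at he
    subst he
    obtain ⟨p, p1, p2⟩ := net_chain R K real m ε hself hatt L g h3 h4 e' he'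
    have heL : e' ∈ g :: L := List.mem_of_getLast? he'
    obtain ⟨a, a1, a2⟩ := hinc x g (h3 g (by simp)) hxe
    obtain ⟨b, b1, b2⟩ := hinc y e' (h3 e' heL) hye
    let w := (a.append p).append b.reverse
    have hw : w.length ≤ 6 * (g :: L).length := by
      simp only [w, SimpleGraph.Walk.length_append, SimpleGraph.Walk.length_reverse,
        List.length_cons]
      omega
    refine ⟨w.bypass.support, w.bypass_isPath.support_nodup, w.bypass.isChain_adj_support,
      ?_, ?_, ?_, ?_⟩
    · rw [List.head?_eq_some_head (SimpleGraph.Walk.support_ne_nil _),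
        SimpleGraph.Walk.head_support]
    · rw [List.getLast?_eq_some_getLast (SimpleGraph.Walk.support_ne_nil _),
        SimpleGraph.Walk.getLast_support]
    · rw [SimpleGraph.Walk.length_support]
      have := w.length_bypass_le_length
      rw [List.length_cons] at *
      omega
    · intro n hn
      have hn := w.support_bypass_subset_support hn
      simp only [w, SimpleGraph.Walk.mem_support_append_iff, SimpleGraph.Walk.support_reverse,
        List.mem_reverse] at hn
      rcases hn with (hn | hn) | hn
      · rcases a2 n hn with h | ⟨h, h'⟩
        · exact Or.inl h
        · exact Or.inr (Or.inr ⟨h, by simp [h']⟩)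
      · exact Or.inr (Or.inr (p2 n hn))
      · rcases b2 n hn with h | ⟨h, h'⟩
        · exact Or.inr (Or.inl h)
        · exact Or.inr (Or.inr ⟨h, h' ▸ heL⟩)

/-- The number of edges in a ball. -/
theorem ball (R : RotationSystem W) (k : ℕ) : ∀ h : Sym2 W, ∃ S : Finset (Sym2 W),
    S.card ≤ 5 ^ k ∧ ∀ L : List (Sym2 W), (h :: L).IsChain (Attached R) → L.length ≤ k →
      ∀ e ∈ h :: L, e ∈ S := by
  classical
  induction k with
  | zero =>
    intro h
    refine ⟨{h}, by simp, ?_⟩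
    intro L _ hL e he
    have : L = [] := List.length_eq_zero_iff.1 (by omega)
    subst this
    simpa using he
  | succ k ih =>
    intro h
    choose S hS1 hS2 using ih
    obtain ⟨nb, hnb, hh, hn⟩ : ∃ nb : Finset (Sym2 W), nb.card ≤ 5 ∧ h ∈ nb ∧
        ∀ g, Attached R h g → g ∈ nb := by
      induction h using Sym2.ind with
      | h a b =>
        refine ⟨{s(a, b), R.rot a s(a, b), R.rot b s(a, b), (R.rot a).symm s(a, b),
          (R.rot b).symm s(a, b)}, Finset.card_le_five, by simp, ?_⟩
        rintro g ⟨v, h1, h2, h3⟩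
        have hv : v = a ∨ v = b := by simpa using h1.2
        rcases h3 with h3 | h3
        · rcases hv with rfl | rfl <;> simp [h3]
        · rw [← Equiv.eq_symm_apply] at h3
          rcases hv with rfl | rfl <;> simp [h3]
    refine ⟨nb.biUnion S, ?_, ?_⟩
    · calc (nb.biUnion S).card ≤ nb.card * 5 ^ k :=
            Finset.card_biUnion_le_card_mul _ _ _ (fun g _ => hS1 g)
        _ ≤ 5 * 5 ^ k := Nat.mul_le_mul_right _ hnb
        _ = 5 ^ (k + 1) := by rw [pow_succ']
    · intro L hc hL e he
      rw [Finset.mem_biUnion]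
      rw [List.mem_cons] at he
      rcases he with rfl | he
      · exact ⟨e, hh, hS2 e [] (by simp) (by simp) e (by simp)⟩
      · cases L with
        | nil => simp at he
        | cons g L =>
          rw [List.isChain_cons_cons] at hc
          rw [List.length_cons] at hL
          exact ⟨g, hn g hc.1, hS2 g L hc.2 (by omega) e he⟩

theorem ball' (R : RotationSystem W) (k : ℕ) (h : Sym2 W) : ∃ S : Finset (Sym2 W),
    S.card ≤ 5 ^ k ∧ ∀ L : List (Sym2 W), L.IsChain (Attached R) → L.length ≤ k + 1 →
      h ∈ L → ∀ e ∈ L, e ∈ S := by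
  obtain ⟨S, hS, hS2⟩ := ball R k h
  refine ⟨S, hS, ?_⟩
  intro L hc hl hL e he
  obtain ⟨A, B, rfl⟩ := List.append_of_mem hL
  rw [List.length_append, List.length_cons] at hl
  rw [List.mem_append] at he
  rcases he with he | he
  · refine hS2 A.reverse ?_ (by rw [List.length_reverse]; omega) e (by simp [he])
    have h1 : (A ++ [h]).IsChain (Attached R) := by
      rw [List.append_cons] at hc
      exact (List.isChain_append.1 hc).1
    have h2 : (A ++ [h]).reverse = h :: A.reverse := by simp
    rw [← h2, List.isChain_reverse]
    exact h1.imp (fun _ _ h => attached_symm R h)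
  · exact hS2 B (List.isChain_append.1 hc).2.1 (by omega) e he

end WBW

namespace WBW

theorem near_ends {V W : Type} [Finite V] (τ : V → W) (hτ : Function.Injective τ)
    (S : Finset (Sym2 W)) : ∃ T : Finset (Sym2 V), T.card ≤ 4 * S.card ^ 2 ∧
      ∀ x y g g', g ∈ S → g' ∈ S → τ x ∈ g → τ y ∈ g' → s(x, y) ∈ T := by
  classical
  have : Fintype V := Fintype.ofFinite V
  let Bv : Finset V := Finset.univ.filter (fun x => ∃ g ∈ S, τ x ∈ g)
  have hB : Bv.card ≤ S.card * 2 := by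
    rw [← Finset.card_image_of_injective Bv hτ]
    have h1 : Bv.image τ ⊆ S.biUnion (fun g => g.toFinset) := by
      intro w hw
      obtain ⟨x, hx, rfl⟩ := Finset.mem_image.1 hw
      obtain ⟨g, hg, hxg⟩ := (Finset.mem_filter.1 hx).2
      exact Finset.mem_biUnion.2 ⟨g, hg, by simpa using hxg⟩
    refine (Finset.card_le_card h1).trans (Finset.card_biUnion_le_card_mul _ _ _ ?_)
    intro g _
    rw [Sym2.card_toFinset]
    split_ifs <;> omega
  refine ⟨(Bv ×ˢ Bv).image (fun q => s(q.1, q.2)), ?_, ?_⟩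
  · refine Finset.card_image_le.trans ?_
    rw [Finset.card_product]
    calc Bv.card * Bv.card ≤ (S.card * 2) * (S.card * 2) := Nat.mul_le_mul hB hB
      _ = 4 * S.card ^ 2 := by ring
  · intro x y g g' hg hg' hx hy
    refine Finset.mem_image.2 ⟨(x, y), ?_, rfl⟩
    rw [Finset.mem_product]
    exact ⟨Finset.mem_filter.2 ⟨Finset.mem_univ _, g, hg, hx⟩,
      Finset.mem_filter.2 ⟨Finset.mem_univ _, g', hg', hy⟩⟩

theorem wbw_of_dist {W : Type} (R : RotationSystem W) (x y : W) (l : ℕ)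
    (h : wbwDist R x y ≤ (l : ℕ∞)) : ∃ L, IsWbwWalkFromTo R x y L ∧ L.length ≤ l := by
  unfold wbwDist at h
  rcases Set.eq_empty_or_nonempty
    {n : ℕ∞ | ∃ L, IsWbwWalkFromTo R x y L ∧ (L.length : ℕ∞) = n} with h0 | h0
  · rw [h0, sInf_empty] at h
    exact absurd h (by simp)
  · obtain ⟨L, hL, hl⟩ := csInf_mem h0
    rw [← hl] at h
    exact ⟨L, hL, by exact_mod_cast h⟩

theorem flat_walk {V W : Type} (G : SimpleGraph V) (R : RotationSystem W) (τ : V → W) (l : ℕ)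
    (h : SubgraphVia G (R.power l) τ) (e : Sym2 V) (he : e ∈ G.edgeSet) :
    ∃ x y L, e = s(x, y) ∧ IsWbwWalkFromTo R (τ x) (τ y) L ∧
      (L.length ≤ l ∨ L = [e.map τ]) := by
  induction e using Sym2.ind with
  | h x y =>
    have h1 := h.2 x y he
    unfold RotationSystem.power at h1
    rw [SimpleGraph.sup_adj, SimpleGraph.fromRel_adj] at h1
    rcases h1 with h1 | ⟨-, h1 | h1⟩
    · refine ⟨x, y, [s(τ x, τ y)], rfl, ?_, Or.inr rfl⟩
      refine ⟨⟨by simp, by simp, ?_, List.isChain_singleton _⟩, ⟨_, rfl, by simp⟩,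
        ⟨_, rfl, by simp⟩⟩
      intro g hg
      rw [List.mem_singleton] at hg
      subst hg
      exact h1
    · obtain ⟨L, hL, hl⟩ := wbw_of_dist R _ _ l h1
      exact ⟨x, y, L, rfl, hL, Or.inl hl⟩
    · obtain ⟨L, hL, hl⟩ := wbw_of_dist R _ _ l h1
      exact ⟨y, x, L, Sym2.eq_swap, hL, Or.inl hl⟩

theorem flat_near (V : Type) [Finite V] (G : SimpleGraph V) (l : ℕ) (hG : IsFlat l G) :
    IsNearlyPlanar (2 ^ (8 * l)) G := by
  classical
  obtain ⟨W, _, R, τ, hR, hτ⟩ := hG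
  obtain ⟨N, _, K, pos, real, m, ε, hK, hinj, hrr, hself, hinc, hatt⟩ := to_net R hR
  have hex : ∀ e, ∃ LP : List (Sym2 W) × List N, e ∈ G.edgeSet →
      ∃ x y, e = s(x, y) ∧ IsWbwWalkFromTo R (τ x) (τ y) LP.1 ∧
        (LP.1.length ≤ l ∨ LP.1 = [e.map τ]) ∧ LP.2.Nodup ∧ LP.2.IsChain K.Adj ∧
        LP.2.head? = some (real (τ x)) ∧
        LP.2.getLast? = some (real (τ y)) ∧ LP.2.length ≤ 7 * LP.1.length ∧
        ∀ n ∈ LP.2, n = real (τ x) ∨ n = real (τ y) ∨ (n ∉ Set.range real ∧ ε n ∈ LP.1) := by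
    intro e
    by_cases he : e ∈ G.edgeSet
    · obtain ⟨x, y, L, h1, h2, h3⟩ := flat_walk G R τ l hτ e he
      obtain ⟨P, hP⟩ := net_path R K real m ε hinc hself hatt _ _ L h2
      exact ⟨(L, P), fun _ => ⟨x, y, h1, h2, h3, hP⟩⟩
    · exact ⟨([], []), fun h => absurd h he⟩
  choose LP hLP using hex
  obtain ⟨Dr, hDr⟩ := exists_drawing K pos hK G (real ∘ τ) (hinj.comp hτ.1)
    (fun v w => hrr _ _) (fun e => (LP e).2) (by
      intro e he
      obtain ⟨x, y, h1, h2, h3, h4, h5, h6, h7, h8, h9⟩ := hLP e he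
      refine ⟨h4, h5, x, y, h1, h6, h7, ?_⟩
      intro v hv
      rcases h9 _ hv with h | h | h
      · exact Or.inl (hτ.1 (hinj h))
      · exact Or.inr (hτ.1 (hinj h))
      · exact absurd ⟨τ v, rfl⟩ h.1)
  refine ⟨Dr, fun e he => ⟨(hDr e he).1, (hDr e he).2.trans ?_⟩⟩
  have hε : ∀ e ∈ G.edgeSet, ∀ n ∈ (LP e).2, n ∉ Set.range (real ∘ τ) → ε n ∈ (LP e).1 := by
    intro e he n hn hr
    obtain ⟨x, y, h1, h2, h3, h4, h5, h6, h7, h8, h9⟩ := hLP e he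
    rcases h9 _ hn with h | h | h
    · exact absurd ⟨x, h.symm⟩ hr
    · exact absurd ⟨y, h.symm⟩ hr
    · exact h.2
  rcases Nat.eq_zero_or_pos l with rfl | hl
  · -- no crossings at all
    have hone : ∀ e ∈ G.edgeSet, (LP e).1 = [e.map τ] := by
      intro e he
      obtain ⟨x, y, h1, h2, h3, -⟩ := hLP e he
      rcases h3 with h3 | h3
      · exact absurd (List.length_eq_zero_iff.1 (Nat.le_zero.1 h3)) h2.1.1
      · exact h3
    have hempty : {q : N × Sym2 V | q.2 ∈ G.edgeSet ∧ q.2 ≠ e ∧ q.1 ∉ Set.range (real ∘ τ) ∧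
        q.1 ∈ (LP e).2 ∧ q.1 ∈ (LP q.2).2} = ∅ := by
      rw [Set.eq_empty_iff_forall_notMem]
      rintro ⟨n, e'⟩ ⟨h1, h2, h3, h4, h5⟩
      have a := hε e he n h4 h3
      have b := hε e' h1 n h5 h3
      rw [hone e he, List.mem_singleton] at a
      rw [hone e' h1, List.mem_singleton] at b
      exact h2 (Sym2.map.injective hτ.1 (b.symm.trans a))
    rw [hempty]
    simp
  · obtain ⟨k, rfl⟩ : ∃ k, l = k + 1 := ⟨l - 1, by omega⟩
    have hlen : ∀ e ∈ G.edgeSet, (LP e).1.length ≤ k + 1 := by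
      intro e he
      obtain ⟨x, y, h1, h2, h3, -⟩ := hLP e he
      rcases h3 with h3 | h3
      · exact h3
      · rw [h3]; simp
    have hT : ∀ h : Sym2 W, ∃ T : Finset (Sym2 V), T.card ≤ 4 * 25 ^ k ∧
        ∀ e' ∈ G.edgeSet, h ∈ (LP e').1 → e' ∈ T := by
      intro h
      obtain ⟨S, hS1, hS2⟩ := ball' R k h
      obtain ⟨T, hT1, hT2⟩ := near_ends τ hτ.1 S
      refine ⟨T, ?_, ?_⟩
      · calc T.card ≤ 4 * S.card ^ 2 := hT1
          _ ≤ 4 * (5 ^ k) ^ 2 := by gcongr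
          _ = 4 * 25 ^ k := by rw [← pow_mul, mul_comm k 2, pow_mul]; norm_num
      · intro e' he' hh
        obtain ⟨x, y, h1, ⟨h2, ⟨g, hg, hxg⟩, ⟨g', hg', hyg⟩⟩, -⟩ := hLP e' he'
        have hS := hS2 (LP e').1 h2.2.2.2 (hlen e' he') hh
        rw [h1]
        exact hT2 x y g g' (hS g (List.mem_of_head? hg)) (hS g' (List.mem_of_getLast? hg')) hxg hyg
    choose T hT1 hT2 using hT
    let Q : Finset (N × Sym2 V) :=
      (LP e).2.toFinset.biUnion (fun n => (T (ε n)).image (fun e' => (n, e')))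
    have hsub : {q : N × Sym2 V | q.2 ∈ G.edgeSet ∧ q.2 ≠ e ∧ q.1 ∉ Set.range (real ∘ τ) ∧
        q.1 ∈ (LP e).2 ∧ q.1 ∈ (LP q.2).2} ⊆ ↑Q := by
      rintro ⟨n, e'⟩ ⟨h1, h2, h3, h4, h5⟩
      refine Finset.mem_coe.2 (Finset.mem_biUnion.2 ⟨n, List.mem_toFinset.2 h4, ?_⟩)
      exact Finset.mem_image_of_mem _ (hT2 _ e' h1 (hε e' h1 n h5 h3))
    have hQ : Q.card ≤ (7 * (k + 1)) * (4 * 25 ^ k) := by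
      refine (Finset.card_biUnion_le_card_mul _ _ (4 * 25 ^ k) ?_).trans ?_
      · intro n _
        exact Finset.card_image_le.trans (hT1 _)
      · apply Nat.mul_le_mul_right
        obtain ⟨x, y, h1, h2, h3, h4, h5, h6, h7, h8, h9⟩ := hLP e he
        refine (List.toFinset_card_le _).trans (h8.trans ?_)
        exact Nat.mul_le_mul_left _ (hlen e he)
    have hc := Set.ncard_le_ncard hsub (Finset.finite_toSet Q)
    rw [Set.ncard_coe_finset] at hc
    have hk : k + 1 ≤ 2 ^ k := Nat.lt_two_pow_self
    calc 4 * _ ≤ 4 * ((7 * (k + 1)) * (4 * 25 ^ k)) := Nat.mul_le_mul_left _ (hc.trans hQ)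
      _ ≤ 4 * ((7 * 2 ^ k) * (4 * 25 ^ k)) := by gcongr
      _ = 112 * (50 ^ k) := by rw [show (50 : ℕ) = 2 * 25 by norm_num, mul_pow]; ring
      _ ≤ 256 * 256 ^ k := by gcongr <;> norm_num
      _ = 2 ^ (8 * (k + 1)) := by rw [pow_mul]; norm_num [pow_succ']

end WBW

namespace WBW

/-- The star. -/
def starG (V : Type) : SimpleGraph (Option V) where
  Adj a b := a ≠ b ∧ (a = none ∨ b = none)
  symm := ⟨fun _ _ h => ⟨h.1.symm, h.2.symm⟩⟩
  loopless := ⟨fun _ h => h.1 rfl⟩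

theorem star_adj (V : Type) (v : V) : (starG V).Adj none (some v) := ⟨by simp, Or.inl rfl⟩

theorem star_edge {V : Type} {e : Sym2 (Option V)} (he : e ∈ (starG V).edgeSet) :
    ∃ v, e = s(none, some v) := by
  induction e using Sym2.ind with
  | h a b =>
    obtain ⟨h1, rfl | rfl⟩ := (he : (starG V).Adj a b)
    · cases b with
      | none => exact absurd rfl h1
      | some v => exact ⟨v, rfl⟩
    · cases a with
      | none => exact absurd rfl h1
      | some v => exact ⟨v, Sym2.eq_swap⟩

theorem exists_star (V : Type) [Finite V] : ∃ R : RotationSystem (Option V), R.G = starG V ∧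
    ∀ v, R.rot (some v) = 1 := by
  classical
  have : Fintype V := Fintype.ofFinite V
  have hfin : (incidentSet (starG V) none).Finite := Set.toFinite _
  obtain ⟨σ, h1, h2⟩ := hfin.toFinset.exists_cycleOn
  rw [Set.Finite.coe_toFinset] at h1
  refine ⟨⟨starG V, fun a => a.casesOn σ (fun _ => 1), ?_, ?_⟩, rfl, fun v => rfl⟩
  · intro a
    cases a with
    | none => exact h1
    | some v =>
      refine Equiv.Perm.isCycleOn_one.2 ?_
      have : ∀ e ∈ incidentSet (starG V) (some v), e = s(none, some v) := by
        rintro e ⟨he, hv⟩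
        obtain ⟨w, rfl⟩ := star_edge he
        have : v = w := by simpa using hv
        rw [this]
      intro e he e' he'
      rw [this e he, this e' he']
  · intro a e he
    cases a with
    | none =>
      by_contra h
      exact he (by simpa using h2 (Equiv.Perm.mem_support.2 h))
    | some v => rfl

theorem star_plane (V : Type) [Finite V] [Nonempty V] (R : RotationSystem (Option V))
    (hG : R.G = starG V) (hr : ∀ v, R.rot (some v) = 1) : R.IsPlane := by
  have hadj : ∀ v, R.G.Adj none (some v) := by rw [hG]; exact star_adj V
  have hn : ∀ d : R.G.Dart, d.fst = none ∨ d.snd = none := by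
    intro d
    have h : ∀ a b, R.G.Adj a b → a = none ∨ b = none := by
      rw [hG]
      exact fun a b h => h.2
    exact h _ _ d.adj
  have hback : ∀ d : R.G.Dart, d.fst = none → nx R d = d.symm := by
    intro d hd
    obtain ⟨v, hv⟩ : ∃ v, d.snd = some v := by
      cases h : d.snd with
      | none => exact absurd (hd.trans h.symm) d.adj.ne
      | some v => exact ⟨v, rfl⟩
    apply dart_ext_fst
    · rfl
    · rw [nx_apply, faceNext_edge, hv, hr, SimpleGraph.Dart.edge_symm]
      rfl
  let mk : R.G.Dart → Quot (fun a b : R.G.Dart => R.faceNext a = b) := Quot.mk _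
  have hmk : ∀ d, mk (nx R d) = mk d := fun d =>
    (Quot.sound (r := fun a b : R.G.Dart => R.faceNext a = b) rfl).symm
  have hmk2 : ∀ d, mk (nx R d).symm = mk d := by
    intro d
    rcases hn d with h | h
    · rw [hback d h, SimpleGraph.Dart.symm_symm]
    · rw [← hback (nx R d) h, hmk, hmk]
  have hsub : ∀ d d' : R.G.Dart, mk d = mk d' := by
    have h1 : ∀ d d' : R.G.Dart, d.snd = none → d'.snd = none → mk d = mk d' := by
      intro d d' h h'
      exact rot_all R (fun a => mk d = mk a) (fun a ha => ha.trans (hmk2 a).symm) d d'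
        (h.trans h'.symm) rfl
    have h2 : ∀ d : R.G.Dart, ∃ d', d'.snd = none ∧ mk d' = mk d := by
      intro d
      rcases hn d with h | h
      · exact ⟨nx R d, by rw [hback d h]; exact h, hmk d⟩
      · exact ⟨d, h, rfl⟩
    intro d d'
    obtain ⟨a, a1, a2⟩ := h2 d
    obtain ⟨b, b1, b2⟩ := h2 d'
    rw [← a2, ← b2]
    exact h1 a b a1 b1
  have hface : R.numFaces = 1 := by
    unfold RotationSystem.numFaces
    rw [Nat.card_eq_one_iff_unique]
    refine ⟨⟨?_⟩, ?_⟩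
    · rintro ⟨a⟩ ⟨b⟩
      exact hsub a b
    · obtain ⟨v⟩ := ‹Nonempty V›
      exact ⟨mk ⟨(none, some v), hadj v⟩⟩
  have hiso : Nat.card {v : Option V | ∀ w, ¬ R.G.Adj v w} = 0 := by
    rw [Nat.card_eq_zero]
    left
    constructor
    rintro ⟨a, ha⟩
    cases a with
    | none =>
      obtain ⟨v⟩ := ‹Nonempty V›
      exact ha _ (hadj v)
    | some v => exact ha _ (hadj v).symm
  have hedge : Nat.card R.G.edgeSet = Nat.card V := by
    refine (Nat.card_congr (Equiv.ofBijective
      (fun v : V => (⟨s(none, some v), hadj v⟩ : R.G.edgeSet)) ⟨?_, ?_⟩)).symm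
    · intro v w h
      simpa using congrArg Subtype.val h
    · rintro ⟨e, he⟩
      have he' := he
      rw [hG] at he'
      obtain ⟨v, rfl⟩ := star_edge he'
      exact ⟨v, rfl⟩
  have hcc : Nat.card R.G.ConnectedComponent = 1 := by
    rw [Nat.card_eq_one_iff_unique]
    have hz : ∀ a, R.G.Reachable none a := by
      intro a
      cases a with
      | none => exact SimpleGraph.Reachable.refl _
      | some v => exact (hadj v).reachable
    refine ⟨⟨?_⟩, ⟨R.G.connectedComponentMk none⟩⟩
    intro a b
    induction a using SimpleGraph.ConnectedComponent.ind with
    | h a =>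
      induction b using SimpleGraph.ConnectedComponent.ind with
      | h b => exact SimpleGraph.ConnectedComponent.sound ((hz a).symm.trans (hz b))
  unfold RotationSystem.IsPlane
  rw [hface, hiso, hedge, hcc, Finite.card_option]

theorem star_walk (V : Type) [Finite V] (R : RotationSystem (Option V))
    (hG : R.G = starG V) (x y : V) :
    wbwDist R (some x) (some y) ≤ (Nat.card R.G.edgeSet : ℕ∞) := by
  classical
  have hadj : ∀ v, R.G.Adj none (some v) := by rw [hG]; exact star_adj V
  have hmem : ∀ v, s(none, some v) ∈ incidentSet R.G none := fun v => ⟨hadj v, by simp⟩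
  obtain ⟨k, hk⟩ := ((R.rot_cycleOn none).2 (hmem x) (hmem y)).exists_nat_pow_eq
  have key : ∀ k : ℕ, ∃ h : (R.rot none ^ k) s(none, some x) ∈ incidentSet R.G none,
      (medial R).Reachable ⟨s(none, some x), (hmem x).1⟩ ⟨_, h.1⟩ := by
    intro k
    induction k with
    | zero => exact ⟨hmem x, SimpleGraph.Reachable.refl _⟩
    | succ k ih =>
      obtain ⟨h, hr⟩ := ih
      have e1 : (R.rot none ^ (k + 1)) s(none, some x) =
          R.rot none ((R.rot none ^ k) s(none, some x)) := by rw [pow_succ']; rfl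
      have h' : (R.rot none ^ (k + 1)) s(none, some x) ∈ incidentSet R.G none := by
        rw [e1]
        exact (R.rot_cycleOn none).1.mapsTo h
      refine ⟨h', hr.trans ?_⟩
      by_cases heq : (R.rot none ^ k) s(none, some x) = (R.rot none ^ (k + 1)) s(none, some x)
      · have : (⟨_, h.1⟩ : {e : Sym2 (Option V) // e ∈ R.G.edgeSet}) = ⟨_, h'.1⟩ := Subtype.ext heq
        rw [this]
      · apply SimpleGraph.Adj.reachable
        unfold medial
        rw [SimpleGraph.fromRel_adj]
        exact ⟨fun hh => heq (congrArg Subtype.val hh), Or.inl ⟨none, h, h', Or.inl e1.symm⟩⟩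
  obtain ⟨h, hr⟩ := key k
  have hy : (⟨_, h.1⟩ : {e : Sym2 (Option V) // e ∈ R.G.edgeSet}) =
      ⟨s(none, some y), (hmem y).1⟩ := Subtype.ext hk
  rw [hy] at hr
  obtain ⟨p, hp⟩ := hr.exists_isPath
  have hlen : p.support.length ≤ Nat.card R.G.edgeSet := by
    have : Fintype {e : Sym2 (Option V) // e ∈ R.G.edgeSet} := Fintype.ofFinite _
    have := hp.support_nodup.length_le_card
    rw [← Nat.card_eq_fintype_card] at this
    exact this
  have hL : IsWbwWalkFromTo R (some x) (some y) (p.support.map Subtype.val) := by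
    refine ⟨⟨fun h => p.support_ne_nil (List.map_eq_nil_iff.1 h), hp.support_nodup.map Subtype.val_injective, ?_, ?_⟩, ?_, ?_⟩
    · intro e he
      obtain ⟨e', -, rfl⟩ := List.mem_map.1 he
      exact e'.2
    · refine (List.isChain_map _).2 (p.isChain_adj_support.imp ?_)
      intro a b hab
      unfold medial at hab
      rw [SimpleGraph.fromRel_adj] at hab
      rcases hab.2 with h | h
      · exact h
      · exact attached_symm R h
    · refine ⟨s(none, some x), ?_, by simp⟩
      rw [List.head?_map, List.head?_eq_some_head (SimpleGraph.Walk.support_ne_nil _),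
        SimpleGraph.Walk.head_support]
      rfl
    · refine ⟨s(none, some y), ?_, by simp⟩
      rw [List.getLast?_map, List.getLast?_eq_some_getLast (SimpleGraph.Walk.support_ne_nil _),
        SimpleGraph.Walk.getLast_support]
      rfl
  have hle : wbwDist R (some x) (some y) ≤ ((p.support.map Subtype.val).length : ℕ∞) :=
    sInf_le ⟨_, hL, rfl⟩
  refine hle.trans ?_
  rw [List.length_map]
  exact_mod_cast hlen

theorem exists_flat (V : Type) [Finite V] (G : SimpleGraph V) : ∃ l, IsFlat l G := by
  rcases isEmpty_or_nonempty V with hV | hV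
  · refine ⟨0, V, inferInstance, ⟨⊥, fun v => (hV.false v).elim, fun v => (hV.false v).elim,
      fun v => (hV.false v).elim⟩, id, ?_, Function.injective_id, fun v => (hV.false v).elim⟩
    unfold RotationSystem.IsPlane RotationSystem.numFaces
    have h1 : IsEmpty ((⊥ : SimpleGraph V).Dart) := ⟨fun d => hV.false d.fst⟩
    have h2 : IsEmpty ((⊥ : SimpleGraph V).ConnectedComponent) :=
      ⟨fun c => by induction c using SimpleGraph.ConnectedComponent.ind with
        | h v => exact hV.false v⟩
    have h3 : IsEmpty (Quot (fun a b : (⊥ : SimpleGraph V).Dart =>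
      RotationSystem.faceNext (⟨⊥, fun v => (hV.false v).elim, fun v => (hV.false v).elim,
      fun v => (hV.false v).elim⟩ : RotationSystem V) a = b)) :=
      ⟨fun q => by induction q using Quot.ind with
        | mk d => exact hV.false d.fst⟩
    simp [Nat.card_of_isEmpty]
  · obtain ⟨R, hG, hr⟩ := exists_star V
    refine ⟨Nat.card R.G.edgeSet, Option V, inferInstance, R, some, star_plane V R hG hr,
      Option.some_injective V, ?_⟩
    intro x y hxy
    unfold RotationSystem.power
    rw [SimpleGraph.sup_adj, SimpleGraph.fromRel_adj]
    exact Or.inr ⟨fun h => hxy.ne (Option.some_injective V h), Or.inl (star_walk V R hG x y)⟩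

end WBW

/-- `ξ(G) ≤ 2^{8·λ(G)}`; if `G` is `λ`-flat, then `G` has an embedding
in the sphere with at most `2^{8λ}` crossings per edge. -/
theorem nearNum_le_exp_flatNum (V : Type) [Finite V] (G : SimpleGraph V) :
    WBW.nearNum G ≤ 2 ^ (8 * WBW.flatNum G) ∧
    ∀ l : ℕ, WBW.IsFlat l G → WBW.IsNearlyPlanar (2 ^ (8 * l)) G := by
  refine ⟨?_, fun l hl => WBW.flat_near V G l hl⟩
  exact Nat.sInf_le (WBW.flat_near V G _ (Nat.sInf_mem (WBW.exists_flat V G)))
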